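/- arXiv:2307.09790 — 2 statements merged into one kernel-verified Lean document; each statement's English description precedes it below -/
import Mathlib

section
/- For any countable acylindrically hyperbolic group G, there exists a generating set S of G such that the Cayley graph Γ(G,S) is hyperbolic, the Gromov boundary ∂Γ(G,S) has more than 2 points, the natural action of G on Γ(G,S) is acylindrical, and the natural action of G on ∂Γ(G,S) is topologically amenable. -/
open scoped ENNReal

noncomputable section

namespace ArXiv

/-! ### Gromov products, hyperbolicity and the Gromov boundary,
for a general distance function -/

variable {α : Type*}

/-- The Gromov product of `x` and `y` at `o` with respect to the distance function `d`. -/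
def gprod (d : α → α → ℝ) (x y o : α) : ℝ := (d x o + d y o - d x y) / 2

/-- The four-point δ-hyperbolicity condition. -/
def HyperbolicWith (d : α → α → ℝ) (δ : ℝ) : Prop :=
  ∀ w x y z : α, min (gprod d x y w) (gprod d y z w) - δ ≤ gprod d x z w

/-- Gromov hyperbolicity of the distance function `d`. -/
def IsHyperbolic (d : α → α → ℝ) : Prop := ∃ δ : ℝ, 0 ≤ δ ∧ HyperbolicWith d δ

/-- A sequence converges to infinity: the Gromov products at some (equivalently, any)
basepoint tend to infinity. -/
def ConvInf (d : α → α → ℝ) (x : ℕ → α) : Prop :=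
  ∀ o : α, ∀ R : ℝ, ∃ N : ℕ, ∀ i, N ≤ i → ∀ j, N ≤ j → R ≤ gprod d (x i) (x j) o

/-- Sequences converging to infinity. -/
abbrev BSeq (d : α → α → ℝ) := {x : ℕ → α // ConvInf d x}

/-- The equivalence of sequences converging to infinity defining the Gromov boundary. -/
def BRel (d : α → α → ℝ) (x y : BSeq d) : Prop :=
  ∀ o : α, ∀ R : ℝ, ∃ N : ℕ, ∀ i, N ≤ i → ∀ j, N ≤ j → R ≤ gprod d (x.1 i) (y.1 j) o

/-- The (sequential) Gromov boundary of `(α, d)`. -/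
abbrev Bdry (d : α → α → ℝ) := Quot (BRel d)

/-- The extension of the Gromov product at `o` to boundary points. -/
def bgp (d : α → α → ℝ) (o : α) (ξ η : Bdry d) : EReal :=
  sSup {r : EReal | ∃ x y : BSeq d, Quot.mk (BRel d) x = ξ ∧ Quot.mk (BRel d) y = η ∧
    r = Filter.liminf
      (fun pq : ℕ × ℕ => ((gprod d (x.1 pq.1) (y.1 pq.2) o : ℝ) : EReal)) Filter.atTop}

/-- The canonical topology on the Gromov boundary, generated by the sets
`{η | (ξ,η)_o > n}`. -/
def bdryTop (d : α → α → ℝ) : TopologicalSpace (Bdry d) :=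
  TopologicalSpace.generateFrom
    {U : Set (Bdry d) | ∃ (ξ : Bdry d) (o : α) (n : ℝ), U = {η | (n : EReal) < bgp d o ξ η}}

/-! ### Cayley graphs, acylindrical actions, and topological amenability -/

variable {G : Type*} [Group G]

/-- The graph metric of the Cayley graph `Γ(G,S)`: the word metric with respect to
`S ∪ S⁻¹`. -/
def wdist (S : Set G) (g h : G) : ℝ :=
  sInf {r : ℝ | ∃ L : List G, (∀ x ∈ L, x ∈ S ∨ x⁻¹ ∈ S) ∧ g * L.prod = h ∧
    r = (L.length : ℝ)}

/-- The natural (left multiplication) action of `G` on `(G, d)` is acylindrical. -/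
def AcylDist (d : G → G → ℝ) : Prop :=
  ∀ ε : ℝ, 0 < ε → ∃ R : ℝ, 0 < R ∧ ∃ N : ℕ, 0 < N ∧ ∀ x y : G, R ≤ d x y →
    {g : G | d x (g * x) ≤ ε ∧ d y (g * y) ≤ ε}.Finite ∧
    {g : G | d x (g * x) ≤ ε ∧ d y (g * y) ≤ ε}.ncard ≤ N

/-- `η` is the image of `ξ` under the natural action of `g ∈ G` on the Gromov boundary
of `(G, d)` (the action extending left multiplication). -/
def bAct (d : G → G → ℝ) (g : G) (ξ η : Bdry d) : Prop :=
  ∃ (x : BSeq d) (h : ConvInf d fun n => g * x.1 n),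
    Quot.mk (BRel d) x = ξ ∧ Quot.mk (BRel d) (⟨fun n => g * x.1 n, h⟩ : BSeq d) = η

/-- The `ℓ¹`-distance between two functions `G → ℝ`. -/
def l1dist {G : Type*} (f h : G → ℝ) : ℝ := ∑' g : G, |f g - h g|

/-- The natural action of `G` on the Gromov boundary of `(G, d)` is topologically
amenable: for every finite `F ⊆ G`, compact `K`, and `ε > 0`, there is a
(`ℓ¹`-)continuous map `p` into probability measures on `G` with
`‖p(gξ) - g·p(ξ)‖₁ < ε` for all `g ∈ F` and `ξ ∈ K`. -/
def TopAmenable (d : G → G → ℝ) : Prop :=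
  ∀ (F : Finset G) (K : Set (Bdry d)), @IsCompact _ (bdryTop d) K →
    ∀ ε : ℝ, 0 < ε → ∃ p : Bdry d → G → ℝ,
      (∀ ξ, (∀ g : G, 0 ≤ p ξ g) ∧ (∑' g : G, p ξ g) = 1) ∧
      (∀ ξ : Bdry d, ∀ ε' : ℝ, 0 < ε' → ∃ U : Set (Bdry d),
        @IsOpen _ (bdryTop d) U ∧ ξ ∈ U ∧ ∀ η ∈ U, l1dist (p ξ) (p η) < ε') ∧
      ∀ g ∈ F, ∀ ξ ∈ K, ∀ η : Bdry d, bAct d g ξ η →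
        l1dist (p η) (fun h => p ξ (g⁻¹ * h)) < ε

section
variable {α : Type*} {G : Type*} [Group G]

/-! ### P1: word metrics -/

/-- Left-invariant, integer valued geodesic metrics on a group. -/
structure GeoMet (d : G → G → ℝ) : Prop where
  nat : ∀ g h, ∃ n : ℕ, d g h = n
  self : ∀ g, d g g = 0
  symm : ∀ g h, d g h = d h g
  tri : ∀ g h k, d g k ≤ d g h + d h k
  inv : ∀ k g h, d (k * g) (k * h) = d g h
  eq_of : ∀ g h, d g h = 0 → g = h
  geo : ∀ g h (k : ℕ), (k : ℝ) ≤ d g h → ∃ z, d g z = k ∧ d z h = d g h - k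

lemma wdist_le {S : Set G} {g h : G} (L : List G) (hL : ∀ x ∈ L, x ∈ S ∨ x⁻¹ ∈ S)
    (hp : g * L.prod = h) : wdist S g h ≤ L.length := by
  apply csInf_le
  · exact ⟨0, by rintro r ⟨L, _, _, rfl⟩; positivity⟩
  · exact ⟨L, hL, hp, rfl⟩

lemma exists_word {S : Set G} (hS : Subgroup.closure S = ⊤) (g : G) :
    ∃ L : List G, (∀ x ∈ L, x ∈ S ∨ x⁻¹ ∈ S) ∧ L.prod = g := by
  have : g ∈ Subgroup.closure S := by rw [hS]; trivial
  rw [← Subgroup.mem_toSubmonoid, Subgroup.closure_toSubmonoid] at this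
  obtain ⟨L, h1, h2⟩ := Submonoid.exists_list_of_mem_closure this
  exact ⟨L, fun x hx => by simpa using h1 x hx, h2⟩

lemma wdist_spec {S : Set G} (hS : Subgroup.closure S = ⊤) (g h : G) :
    ∃ L : List G, (∀ x ∈ L, x ∈ S ∨ x⁻¹ ∈ S) ∧ g * L.prod = h ∧ wdist S g h = L.length := by
  classical
  have hex : ∃ n : ℕ, ∃ L : List G, (∀ x ∈ L, x ∈ S ∨ x⁻¹ ∈ S) ∧ g * L.prod = h ∧ L.length = n := by
    obtain ⟨L, h1, h2⟩ := exists_word hS (g⁻¹ * h)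
    exact ⟨_, L, h1, by rw [h2]; group, rfl⟩
  obtain ⟨L, h1, h2, h3⟩ := Nat.find_spec hex
  refine ⟨L, h1, h2, le_antisymm (wdist_le L h1 h2) ?_⟩
  apply le_csInf
  · exact ⟨_, L, h1, h2, rfl⟩
  · rintro r ⟨L', h1', h2', rfl⟩
    rw [h3]
    exact_mod_cast Nat.find_min' hex ⟨L', h1', h2', rfl⟩

lemma wdist_tri {S : Set G} (hS : Subgroup.closure S = ⊤) (g h k : G) :
    wdist S g k ≤ wdist S g h + wdist S h k := by
  obtain ⟨L, h1, h2, h3⟩ := wdist_spec hS g h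
  obtain ⟨L', h1', h2', h3'⟩ := wdist_spec hS h k
  rw [h3, h3']
  have := wdist_le (S := S) (g := g) (h := k) (L ++ L') (by
    intro x hx
    rcases List.mem_append.1 hx with hx | hx
    · exact h1 x hx
    · exact h1' x hx) (by rw [List.prod_append, ← mul_assoc, h2, h2'])
  simpa using this

lemma wdist_symm_le {S : Set G} (hS : Subgroup.closure S = ⊤) (g h : G) :
    wdist S h g ≤ wdist S g h := by
  obtain ⟨L, h1, h2, h3⟩ := wdist_spec hS g h
  rw [h3]
  have := wdist_le (S := S) (g := h) (h := g) (L.map (·⁻¹)).reverse (by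
    intro x hx
    rw [List.mem_reverse, List.mem_map] at hx
    obtain ⟨y, hy, rfl⟩ := hx
    rcases h1 y hy with hy | hy
    · right; simpa using hy
    · left; exact hy) (by
      rw [← List.prod_inv_reverse, ← h2]; group)
  simpa using this

lemma wdist_geoMet {S : Set G} (hS : Subgroup.closure S = ⊤) : GeoMet (wdist S) where
  nat g h := by
    obtain ⟨L, _, _, h3⟩ := wdist_spec hS g h
    exact ⟨_, h3⟩
  self g := by
    apply le_antisymm
    · simpa using wdist_le (S := S) (g := g) (h := g) [] (by simp) (by simp)
    · obtain ⟨L, _, _, h3⟩ := wdist_spec hS g g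
      rw [h3]; positivity
  symm g h := le_antisymm (wdist_symm_le hS _ _) (wdist_symm_le hS _ _)
  tri := wdist_tri hS
  inv k g h := by
    unfold wdist
    simp only [mul_assoc, mul_right_inj]
  eq_of g h h0 := by
    obtain ⟨L, _, h2, h3⟩ := wdist_spec hS g h
    rw [h0] at h3
    have : L = [] := by
      rw [← List.length_eq_zero_iff]; exact_mod_cast h3.symm
    subst this; simpa using h2
  geo g h k hk := by
    obtain ⟨L, h1, h2, h3⟩ := wdist_spec hS g h
    have hk' : k ≤ L.length := by rw [h3] at hk; exact_mod_cast hk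
    have e1 := wdist_le (S := S) (g := g) (h := g * (L.take k).prod) (L.take k)
      (fun x hx => h1 x (List.mem_of_mem_take hx)) rfl
    have e2 := wdist_le (S := S) (g := g * (L.take k).prod) (h := h) (L.drop k)
      (fun x hx => h1 x (List.mem_of_mem_drop hx)) (by
        rw [mul_assoc, ← List.prod_append, List.take_append_drop, h2])
    have e3 := wdist_tri hS g (g * (L.take k).prod) h
    rw [List.length_take, min_eq_left hk'] at e1
    rw [List.length_drop, Nat.cast_sub hk'] at e2
    refine ⟨_, le_antisymm e1 ?_, le_antisymm (by linarith) ?_⟩ <;> linarith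

lemma wdist_le_one {S : Set G} {g h : G} (hs : g⁻¹ * h ∈ S) : wdist S g h ≤ 1 := by
  simpa using wdist_le (S := S) (g := g) (h := h) [g⁻¹ * h] (by simpa using Or.inl hs) (by simp)

lemma wdist_one {S : Set G} (hS : Subgroup.closure S = ⊤) {g h : G} (h1 : wdist S g h = 1) :
    g⁻¹ * h ∈ S ∨ (g⁻¹ * h)⁻¹ ∈ S := by
  obtain ⟨L, h2, h3, h4⟩ := wdist_spec hS g h
  rw [h1] at h4
  obtain ⟨a, rfl⟩ := List.length_eq_one_iff.1 (by exact_mod_cast h4.symm)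
  have := h2 a (by simp)
  simp only [List.prod_singleton] at h3
  rw [← h3]; simpa using this

lemma GeoMet.nonneg {d : G → G → ℝ} (hd : GeoMet d) (g h : G) : 0 ≤ d g h := by
  obtain ⟨n, hn⟩ := hd.nat g h
  rw [hn]; positivity

/-- four point condition -/
lemma fourpt {d : α → α → ℝ} {δ : ℝ} (h : HyperbolicWith d δ)
    (x y z w : α) :
    d x z + d y w ≤ d x y + d z w + 2 * δ ∨ d x z + d y w ≤ d y z + d x w + 2 * δ := by
  have := h w x y z
  unfold gprod at this
  rcases min_cases ((d x w + d y w - d x y) / 2) ((d y w + d z w - d y z) / 2) with ⟨h1, _⟩ | ⟨h1, _⟩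
  · rw [h1] at this; left; linarith
  · rw [h1] at this; right; linarith

end

section
variable {α : Type*} {G : Type*} [Group G]

/-! ### P2: projection axioms, from weak to strong -/

/-- Weak projection axioms; `D Y X Z` is `d_Y(X,Z)`. -/
structure WeakProj {𝒴 : Type*} (D : 𝒴 → 𝒴 → 𝒴 → ℝ) (θ : ℝ) : Prop where
  pos : 0 < θ
  symm : ∀ Y X Z, D Y X Z = D Y Z X
  tri : ∀ Y X W Z, X ≠ Y → W ≠ Y → Z ≠ Y → D Y X Z ≤ D Y X W + D Y W Z
  self : ∀ Y X, X ≠ Y → D Y X X ≤ θ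
  behr : ∀ X Y Z, X ≠ Y → Y ≠ Z → X ≠ Z → θ < D Y X Z → D Z X Y ≤ θ
  fin : ∀ X Z, {Y | Y ≠ X ∧ Y ≠ Z ∧ θ < D Y X Z}.Finite

/-- Strong projection axioms. -/
structure StrongProj {𝒴 : Type*} (D : 𝒴 → 𝒴 → 𝒴 → ℝ) (θ : ℝ) : Prop where
  pos : 0 < θ
  symm : ∀ Y X Z, D Y X Z = D Y Z X
  tri : ∀ Y X W Z, X ≠ Y → W ≠ Y → Z ≠ Y → D Y X Z ≤ D Y X W + D Y W Z
  self : ∀ Y X, X ≠ Y → D Y X X ≤ θ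
  sp3 : ∀ X Y Z, X ≠ Y → Y ≠ Z → θ < D Y X Z → ∀ W, W ≠ Z → D Z X W = D Z Y W
  fin : ∀ X Z, {Y | Y ≠ X ∧ Y ≠ Z ∧ θ < D Y X Z}.Finite

variable {𝒴 : Type*} {D : 𝒴 → 𝒴 → 𝒴 → ℝ} {θ : ℝ}

/-- the arrow relation -/
def Arr (D : 𝒴 → 𝒴 → 𝒴 → ℝ) (θ : ℝ) (Z X Y : 𝒴) : Prop :=
  X ≠ Z ∧ Y ≠ Z ∧ X ≠ Y ∧ 4 * θ < D Y X Z

/-- symmetrized arrow relation -/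
def SArr (D : 𝒴 → 𝒴 → 𝒴 → ℝ) (θ : ℝ) (Z X Y : 𝒴) : Prop := Arr D θ Z X Y ∨ Arr D θ Z Y X

/-- generated equivalence relation -/
def Apx (D : 𝒴 → 𝒴 → 𝒴 → ℝ) (θ : ℝ) (Z : 𝒴) : 𝒴 → 𝒴 → Prop := Relation.ReflTransGen (SArr D θ Z)

lemma WeakProj.zigzag (h : WeakProj D θ) (Z : 𝒴) (n : ℕ) : ∀ f : ℕ → 𝒴, (∀ i ≤ n, f i ≠ Z) →
    (∀ i < n, SArr D θ Z (f i) (f (i+1))) →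
    ∃ m ≤ n, ∀ j ≤ n, f j = f m ∨ 2 * θ < D (f m) (f j) Z := by
  have hθ := h.pos
  have hB : ∀ A B C, A ≠ B → B ≠ C → A ≠ C → θ < D A B C → D B A C ≤ θ := by
    intro A B C h1 h2 h3 h4
    rw [h.symm B]
    exact h.behr C A B (Ne.symm h3) h1 (Ne.symm h2) (by rw [h.symm A]; exact h4)
  induction n using Nat.strong_induction_on with
  | _ n ih =>
  intro f hZ hc
  rcases n with _ | n
  · exact ⟨0, le_rfl, fun j hj => by
      have : j = 0 := by omega
      left; rw [this]⟩
  obtain ⟨m0, hm0, hmax0⟩ := ih n (by omega) (fun i => f (i+1)) (fun i hi => hZ _ (by omega))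
    (fun i hi => hc _ (by omega))
  obtain ⟨m, hm1, hmn, hmax⟩ : ∃ m, 1 ≤ m ∧ m ≤ n + 1 ∧ ∀ j, 1 ≤ j → j ≤ n + 1 →
      f j = f m ∨ 2 * θ < D (f m) (f j) Z := by
    refine ⟨m0 + 1, by omega, by omega, fun j h1 h2 => ?_⟩
    obtain ⟨j, rfl⟩ : ∃ k, j = k + 1 := ⟨j - 1, by omega⟩
    exact hmax0 j (by omega)
  by_cases hX : f 0 = f m ∨ 2 * θ < D (f m) (f 0) Z
  · refine ⟨m, hmn, fun j hj => ?_⟩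
    rcases Nat.eq_zero_or_pos j with rfl | hj0
    · exact hX
    · exact hmax j hj0 hj
  push Not at hX
  obtain ⟨hX1, hX2⟩ := hX
  have z0 := hZ 0 (by omega)
  have z1 := hZ 1 (by omega)
  have zm := hZ m hmn
  have key : ∀ j, 1 ≤ j → j ≤ n+1 → f j ≠ f m → f j ≠ f 0 → D (f m) (f 0) Z ≤ θ →
      D (f 0) (f j) (f m) ≤ θ := by
    intro j h1 h2 h3 h4 h5
    have h6 : 2 * θ < D (f m) (f j) Z := by
      rcases hmax j h1 h2 with h | h
      · exact absurd h h3
      · exact h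
    have := h.tri (f m) (f j) (f 0) Z h3 hX1 (Ne.symm zm)
    exact h.behr _ _ _ h3 (Ne.symm hX1) h4 (by linarith)
  have hn01 : f 0 ≠ f 1 := by
    rcases hc 0 (by omega) with ⟨_, _, a, _⟩ | ⟨_, _, a, _⟩
    · exact a
    · exact Ne.symm a
  by_cases hM1 : f 1 = f m
  · rcases hc 0 (by omega) with ⟨_, _, a, b⟩ | ⟨_, _, a, b⟩
    · rw [zero_add, hM1] at b; linarith
    · rw [zero_add] at a b
      refine ⟨0, by omega, fun j hj => ?_⟩
      rcases Nat.eq_zero_or_pos j with rfl | hj0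
      · left; rfl
      by_cases e0 : f j = f 0
      · left; exact e0
      right
      rcases eq_or_ne (f j) (f m) with e | e
      · rw [e, ← hM1]; linarith
      rw [hM1] at b
      have h5 := hB _ _ _ hX1 zm z0 (by linarith)
      have h6 := key j hj0 hj e e0 h5
      have := h.tri (f 0) (f m) (f j) Z (Ne.symm hX1) e0 (Ne.symm z0)
      rw [h.symm _ (f m) (f j)] at this
      linarith
  have hm2 : 2 ≤ m := by
    by_contra hlt
    have : m = 1 := by omega
    subst this; exact hM1 rfl
  obtain ⟨q, rfl⟩ : ∃ q, m = q + 1 := ⟨m - 1, by omega⟩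
  have zq := hZ q (by omega)
  obtain ⟨j', hj', hmax'⟩ := ih q (by omega) f (fun i hi => hZ i (by omega)) (fun i hi => hc i (by omega))
  have hqM : f q ≠ f (q+1) := by
    rcases hc q (by omega) with ⟨_, _, a, _⟩ | ⟨_, _, a, _⟩
    · exact a
    · exact Ne.symm a
  have hqb : 4 * θ < D (f (q+1)) (f q) Z := by
    rcases hc q (by omega) with ⟨_, _, a, b⟩ | ⟨_, _, a, b⟩
    · exact b
    · have := hB _ _ _ hqM zm zq (by linarith)
      rcases hmax q (by omega) (by omega) with h | h
      · exact absurd h hqM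
      · linarith
  rcases Nat.eq_zero_or_pos j' with rfl | hj0
  · have h10 : 2 * θ < D (f 0) (f 1) Z := by
      rcases hmax' 1 (by omega) with h | h
      · exact absurd h (Ne.symm hn01)
      · exact h
    rcases hc 0 (by omega) with ⟨_, _, a, b⟩ | ⟨_, _, a, b⟩
    · rw [zero_add] at a b
      have := hB _ _ _ (Ne.symm hn01) z0 z1 (by linarith)
      linarith
    rw [zero_add] at a b
    rcases le_or_gt (D (f 0) (f (q+1)) Z) θ with hi | hi
    · exfalso
      rcases hmax' q le_rfl with e | e
      · rw [e] at hqb; linarith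
      · have hq0 : f q ≠ f 0 := by
          rintro e'; rw [e'] at hqb; linarith
        have t1 := h.tri (f 0) (f q) (f (q+1)) Z hq0 (Ne.symm hX1) (Ne.symm z0)
        have t2 := h.behr _ _ _ hq0 hX1 hqM (by linarith)
        have t3 := h.tri (f (q+1)) (f q) (f 0) Z hqM hX1 (Ne.symm zm)
        linarith
    · have h5 := hB _ _ _ hX1 zm z0 hi
      have t1 := key 1 le_rfl (by omega) hM1 (Ne.symm hn01) h5
      have t2 := h.tri (f 0) (f 1) (f (q+1)) Z (Ne.symm hn01) (Ne.symm hX1) (Ne.symm z0)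
      refine ⟨0, by omega, fun j hj => ?_⟩
      rcases Nat.eq_zero_or_pos j with rfl | hj0
      · left; rfl
      by_cases e0 : f j = f 0
      · left; exact e0
      right
      rcases eq_or_ne (f j) (f (q+1)) with e | e
      · rw [e]; linarith
      have h6 := key j hj0 hj e e0 h5
      have := h.tri (f 0) (f (q+1)) (f j) Z (Ne.symm hX1) e0 (Ne.symm z0)
      rw [h.symm _ (f (q+1)) (f j)] at this
      linarith
  · exfalso
    have zj := hZ j' (by omega)
    have hne : f j' ≠ f (q+1) := by
      intro e
      rcases hmax' 0 (by omega) with e1 | e1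
      · exact hX1 (e1.trans e)
      · rw [e] at e1; linarith
    have h1 : 2 * θ < D (f (q+1)) (f j') Z := by
      rcases hmax j' hj0 (by omega) with h | h
      · exact absurd h hne
      · exact h
    have h2 := hB _ _ _ (Ne.symm hne) zj zm (by linarith)
    have h0 : f 0 ≠ f j' := by
      intro e; rw [← e] at h1; linarith
    have cl : ∀ i, i ≤ q → f i ≠ f j' → f i ≠ f (q+1) → D (f (q+1)) (f i) (f j') ≤ θ := by
      intro i hi e1 e2
      rcases hmax' i hi with e | e
      · exact absurd e e1
      have := h.tri (f j') (f i) (f (q+1)) Z e1 (Ne.symm hne) (Ne.symm zj)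
      exact h.behr _ _ _ e1 hne e2 (by linarith)
    have t0 := cl 0 (by omega) h0 hX1
    have tq : D (f (q+1)) (f q) (f j') ≤ θ := by
      by_cases e : f q = f j'
      · rw [e]; exact h.self _ _ hne
      · exact cl q le_rfl e hqM
    have a1 := h.tri (f (q+1)) (f q) (f j') Z hqM hne (Ne.symm zm)
    have a2 := h.tri (f (q+1)) (f j') (f 0) Z hne hX1 (Ne.symm zm)
    rw [h.symm _ (f j') (f 0)] at a2
    linarith

lemma Apx.chain {Z X W : 𝒴} (h : Apx D θ Z X W) : ∃ n, ∃ f : ℕ → 𝒴, f 0 = X ∧ f n = W ∧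
    ∀ i < n, SArr D θ Z (f i) (f (i+1)) := by
  induction h with
  | refl => exact ⟨0, fun _ => X, rfl, rfl, by simp⟩
  | @tail b c h1 h2 ih =>
    obtain ⟨n, f, f0, fn, hf⟩ := ih
    refine ⟨n+1, fun i => if i ≤ n then f i else c, by simpa using f0, by simp, ?_⟩
    intro i hi
    rcases Nat.lt_succ_iff_lt_or_eq.1 hi with h3 | rfl
    · have : i + 1 ≤ n := h3
      simpa [this, h3.le] using hf i h3
    · simpa [fn] using h2

lemma Apx.symm {Z X W : 𝒴} (h : Apx D θ Z X W) : Apx D θ Z W X := by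
  induction h with
  | refl => exact Relation.ReflTransGen.refl
  | tail _ h2 ih => exact Relation.ReflTransGen.head (Or.symm h2) ih

lemma Apx.ne {Z X W : 𝒴} (h : Apx D θ Z X W) (hX : X ≠ Z) : W ≠ Z := by
  induction h with
  | refl => exact hX
  | tail _ h2 _ => 
    rcases h2 with h | h
    · exact h.2.1
    · exact h.1

lemma WeakProj.apx_le (h : WeakProj D θ) {Z X W : 𝒴} (hX : X ≠ Z) (ha : Apx D θ Z X W) :
    D Z X W ≤ 2 * θ := by
  have hθ := h.pos
  obtain ⟨n, f, f0, fn, hf⟩ := ha.chain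
  have hZ : ∀ i ≤ n, f i ≠ Z := by
    intro i hi
    rcases Nat.eq_zero_or_pos i with rfl | hi0
    · rw [f0]; exact hX
    · obtain ⟨i, rfl⟩ : ∃ k, i = k + 1 := ⟨i - 1, by omega⟩
      rcases hf i (by omega) with h | h
      · exact h.2.1
      · exact h.1
  obtain ⟨m, hm, hmax⟩ := h.zigzag Z n f hZ hf
  have cl : ∀ j ≤ n, D Z (f j) (f m) ≤ θ := by
    intro j hj
    by_cases e : f j = f m
    · rw [e]; exact h.self _ _ (hZ m hm)
    rcases hmax j hj with e' | e'
    · exact absurd e' e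
    · exact h.behr _ _ _ e (hZ m hm) (hZ j hj) (by linarith)
  have h1 := cl 0 (by omega)
  have h2 := cl n le_rfl
  have h3 := h.tri Z X (f m) W hX (hZ m hm) (ha.ne hX)
  rw [f0] at h1; rw [fn, h.symm] at h2
  linarith

/-- The improved projection distance. -/
def sD (D : 𝒴 → 𝒴 → 𝒴 → ℝ) (θ : ℝ) (Z X W : 𝒴) : ℝ :=
  sSup {r | ∃ X' W', Apx D θ Z X X' ∧ Apx D θ Z W W' ∧ r = D Z X' W'}

lemma WeakProj.sD_ub (h : WeakProj D θ) {Z X W X' W' : 𝒴} (hX : X ≠ Z) (hW : W ≠ Z)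
    (h1 : Apx D θ Z X X') (h2 : Apx D θ Z W W') : D Z X' W' ≤ D Z X W + 4 * θ := by
  have a1 := h.apx_le hX h1
  have a2 := h.apx_le hW h2
  have t1 := h.tri Z X' X W' (h1.ne hX) hX (h2.ne hW)
  have t2 := h.tri Z X W W' hX hW (h2.ne hW)
  rw [h.symm Z X' X] at t1
  linarith

lemma WeakProj.le_sD' (h : WeakProj D θ) {Z X W X' W' : 𝒴} (hX : X ≠ Z) (hW : W ≠ Z)
    (h1 : Apx D θ Z X X') (h2 : Apx D θ Z W W') : D Z X' W' ≤ sD D θ Z X W := by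
  apply le_csSup
  · refine ⟨D Z X W + 4 * θ, ?_⟩
    rintro r ⟨X', W', h1, h2, rfl⟩
    exact h.sD_ub hX hW h1 h2
  · exact ⟨X', W', h1, h2, rfl⟩

lemma WeakProj.le_sD (h : WeakProj D θ) {Z X W : 𝒴} (hX : X ≠ Z) (hW : W ≠ Z) :
    D Z X W ≤ sD D θ Z X W :=
  h.le_sD' hX hW Relation.ReflTransGen.refl Relation.ReflTransGen.refl

lemma WeakProj.sD_le (h : WeakProj D θ) {Z X W : 𝒴} (hX : X ≠ Z) (hW : W ≠ Z) :
    sD D θ Z X W ≤ D Z X W + 4 * θ := by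
  apply csSup_le
  · exact ⟨_, X, W, Relation.ReflTransGen.refl, Relation.ReflTransGen.refl, rfl⟩
  · rintro r ⟨X', W', h1, h2, rfl⟩
    exact h.sD_ub hX hW h1 h2

lemma sD_congr {Z X Y W : 𝒴} (h1 : Apx D θ Z X Y) : sD D θ Z X W = sD D θ Z Y W := by
  unfold sD
  congr 1
  ext r
  constructor
  · rintro ⟨X', W', a, b, c⟩
    exact ⟨X', W', h1.symm.trans a, b, c⟩
  · rintro ⟨X', W', a, b, c⟩
    exact ⟨X', W', h1.trans a, b, c⟩

lemma WeakProj.sD_lt (h : WeakProj D θ) {Z X W : 𝒴} (hX : X ≠ Z) (hW : W ≠ Z)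
    (h8 : 8 * θ < sD D θ Z X W) : 4 * θ < D Z X W := by
  have := h.sD_le hX hW
  linarith

lemma WeakProj.strong (h : WeakProj D θ) : StrongProj (sD D θ) (8 * θ) where
  pos := by linarith [h.pos]
  symm Y X Z := by
    unfold sD
    congr 1
    ext r
    constructor
    · rintro ⟨X', W', a, b, c⟩
      exact ⟨W', X', b, a, by rw [h.symm, c]⟩
    · rintro ⟨X', W', a, b, c⟩
      exact ⟨W', X', b, a, by rw [h.symm, c]⟩
  tri Y X W Z hX hW hZ := by
    apply csSup_le
    · exact ⟨_, X, Z, Relation.ReflTransGen.refl, Relation.ReflTransGen.refl, rfl⟩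
    · rintro r ⟨X', Z', h1, h2, rfl⟩
      have t := h.tri Y X' W Z' (h1.ne hX) hW (h2.ne hZ)
      have t1 := h.le_sD' hX hW h1 Relation.ReflTransGen.refl
      have t2 := h.le_sD' hW hZ Relation.ReflTransGen.refl h2
      linarith
  self Y X hX := by
    have := h.sD_le hX hX
    have := h.self Y X hX
    linarith [h.pos]
  sp3 X Y Z hXY hYZ h8 W hW := by
    have h4 := h.sD_lt hXY (Ne.symm hYZ) h8
    have hXZ : X ≠ Z := by
      rintro rfl
      have := h.self Y X hXY
      linarith [h.pos]
    exact sD_congr (Relation.ReflTransGen.single (Or.inl ⟨hXZ, hYZ, hXY, h4⟩))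
  fin X Z := by
    refine (h.fin X Z).subset ?_
    rintro Y ⟨h1, h2, h3⟩
    refine ⟨h1, h2, ?_⟩
    have := h.sD_lt (Ne.symm h1) (Ne.symm h2) h3
    linarith [h.pos]

lemma sD_inv [MulAction G 𝒴] (hinv : ∀ (g : G) Y X Z, D (g • Y) (g • X) (g • Z) = D Y X Z)
    (g : G) (Y X Z : 𝒴) : sD D θ (g • Y) (g • X) (g • Z) = sD D θ Y X Z := by
  have hA : ∀ (g : G) Y X Z, Apx D θ Y X Z → Apx D θ (g • Y) (g • X) (g • Z) := by
    intro g Y X Z ha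
    induction ha with
    | refl => exact Relation.ReflTransGen.refl
    | tail _ h2 ih =>
      refine Relation.ReflTransGen.tail ih ?_
      simpa [SArr, Arr, hinv] using h2
  unfold sD
  congr 1
  ext r
  constructor
  · rintro ⟨X', W', a, b, c⟩
    refine ⟨g⁻¹ • X', g⁻¹ • W', by simpa using hA g⁻¹ _ _ _ a, by simpa using hA g⁻¹ _ _ _ b, ?_⟩
    rw [c, ← hinv g Y, smul_inv_smul, smul_inv_smul]
  · rintro ⟨X', W', a, b, c⟩
    exact ⟨g • X', g • W', hA g _ _ _ a, hA g _ _ _ b, by rw [hinv, c]⟩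

end

section
variable {α : Type*} {G : Type*} [Group G]
variable {𝒴 : Type*} {D : 𝒴 → 𝒴 → 𝒴 → ℝ} {θ K : ℝ}

/-! ### P3: strong projections and the projection graph -/

/-- Elements between `X` and `Z`. -/
def Ys (D : 𝒴 → 𝒴 → 𝒴 → ℝ) (K : ℝ) (X Z : 𝒴) : Set 𝒴 := {Y | Y ≠ X ∧ Y ≠ Z ∧ K < D Y X Z}

/-- Strong projections with a threshold. -/
structure PSt (D : 𝒴 → 𝒴 → 𝒴 → ℝ) (θ K : ℝ) : Prop extends StrongProj D θ where
  hK : 2 * θ ≤ K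

namespace PSt

variable (h : PSt D θ K)

lemma hKθ (h : PSt D θ K) : θ < K := by linarith [h.hK, h.pos]

lemma Ys_fin (h : PSt D θ K) (X Z : 𝒴) : (Ys D K X Z).Finite := by
  refine (h.fin X Z).subset ?_
  rintro Y ⟨h1, h2, h3⟩
  exact ⟨h1, h2, by linarith [h.hKθ]⟩

lemma Ys_comm (h : PSt D θ K) (X Z : 𝒴) : Ys D K X Z = Ys D K Z X := by
  ext Y; simp only [Ys, Set.mem_ofPred_eq, h.symm Y X Z]; tauto

lemma Ys_self (h : PSt D θ K) (X : 𝒴) : Ys D K X X = ∅ := by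
  ext Y
  simp only [Ys, Set.mem_ofPred_eq, Set.mem_empty_iff_false, iff_false]
  rintro ⟨h1, _, h3⟩
  linarith [h.self Y X (Ne.symm h1), h.hKθ]

lemma sub2 (h : PSt D θ K) {W Y V V' : 𝒴} (hV : V ∈ Ys D K W Y) (hV' : V' ∈ Ys D K W V) : V ∈ Ys D K V' Y := by
  obtain ⟨a1, a2, a3⟩ := hV
  obtain ⟨b1, b2, b3⟩ := hV'
  have e := h.sp3 W V' V (Ne.symm b1) b2 (by linarith [h.hKθ]) Y (Ne.symm a2)
  rw [e] at a3
  exact ⟨Ne.symm b2, a2, a3⟩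

lemma sub1 (h : PSt D θ K) {W Y V V' : 𝒴} (hV : V ∈ Ys D K W Y) (hV' : V' ∈ Ys D K W V) : V' ∈ Ys D K W Y := by
  obtain ⟨c1, c2, c3⟩ := h.sub2 hV hV'
  obtain ⟨a1, a2, a3⟩ := hV
  obtain ⟨b1, b2, b3⟩ := hV'
  have hne : V' ≠ Y := by
    rintro rfl
    linarith [h.self V V' b2, h.hKθ]
  rw [h.symm] at c3
  have e := h.sp3 Y V V' (Ne.symm a2) (Ne.symm b2) (by linarith [h.hKθ]) W (Ne.symm b1)
  rw [h.symm, h.symm V' V] at e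
  exact ⟨b1, hne, by linarith⟩

/-- same with the other end -/
lemma sub1' (h : PSt D θ K) {W Y V V' : 𝒴} (hV : V ∈ Ys D K W Y) (hV' : V' ∈ Ys D K V Y) : V' ∈ Ys D K W Y := by
  rw [h.Ys_comm] at hV hV' ⊢
  exact h.sub1 hV hV'

lemma sub2' (h : PSt D θ K) {W Y V V' : 𝒴} (hV : V ∈ Ys D K W Y) (hV' : V' ∈ Ys D K V Y) : V ∈ Ys D K W V' := by
  rw [h.Ys_comm] at hV hV' ⊢
  exact h.sub2 hV hV'

lemma excl (h : PSt D θ K) {X U V : 𝒴} (h1 : U ∈ Ys D K X V) (h2 : V ∈ Ys D K X U) : False :=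
  (h.sub1 h1 h2).2.1 rfl

lemma order (h : PSt D θ K) {X Z U V : 𝒴} (hU : U ∈ Ys D K X Z) (hV : V ∈ Ys D K X Z) (hne : U ≠ V) :
    U ∈ Ys D K X V ∨ V ∈ Ys D K X U := by
  obtain ⟨a1, a2, a3⟩ := hU
  obtain ⟨b1, b2, b3⟩ := hV
  have hK := h.hK
  have hKθ := h.hKθ
  rcases lt_or_ge θ (D V X U) with hc | hc
  · right
    have e := h.sp3 X V U (Ne.symm b1) (Ne.symm hne) hc Z (Ne.symm a2)
    have e2 := h.sp3 Z U V (Ne.symm a2) hne (by rw [h.symm, ← e]; linarith) X (Ne.symm b1)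
    refine ⟨b1, Ne.symm hne, ?_⟩
    rw [h.symm, ← e2, h.symm]; exact b3
  · left
    have t := h.tri V X U Z (Ne.symm b1) hne (Ne.symm b2)
    have e := h.sp3 Z V U (Ne.symm b2) (Ne.symm hne) (by rw [h.symm]; linarith) X (Ne.symm a1)
    refine ⟨a1, hne, ?_⟩
    rw [h.symm, ← e, h.symm]; exact a3

lemma rank_lt (h : PSt D θ K) {X U V : 𝒴} (hU : U ∈ Ys D K X V) : (Ys D K X U).ncard < (Ys D K X V).ncard := by
  apply Set.ncard_lt_ncard _ (h.Ys_fin X V)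
  refine ⟨fun T hT => h.sub1 hU hT, fun hs => ?_⟩
  exact (hs hU).2.1 rfl

lemma rank_lt' (h : PSt D θ K) {X U V : 𝒴} (hU : U ∈ Ys D K X V) : (Ys D K U V).ncard < (Ys D K X V).ncard := by
  rw [h.Ys_comm U V, h.Ys_comm X V]
  exact h.rank_lt (by rwa [h.Ys_comm])

lemma rank_inj (h : PSt D θ K) {X Z U V : 𝒴} (hU : U ∈ Ys D K X Z) (hV : V ∈ Ys D K X Z)
    (he : (Ys D K X U).ncard = (Ys D K X V).ncard) : U = V := by
  by_contra hne
  rcases h.order hU hV hne with h1 | h1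
  · have := h.rank_lt h1; omega
  · have := h.rank_lt h1; omega

/-- there is an element of every rank -/
lemma rank_surj (h : PSt D θ K) {X Z : 𝒴} {i : ℕ} (hi : i < (Ys D K X Z).ncard) :
    ∃ V ∈ Ys D K X Z, (Ys D K X V).ncard = i := by
  classical
  set s := (h.Ys_fin X Z).toFinset with hs
  have hcard : s.card = (Ys D K X Z).ncard := by rw [Set.ncard_eq_toFinset_card _ (h.Ys_fin X Z)]
  have hsurj := Finset.surj_on_of_inj_on_of_card_le (s := s) (t := Finset.range s.card)
    (fun V _ => (Ys D K X V).ncard) (fun V hV => by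
      rw [Finset.mem_range, hcard]; exact h.rank_lt (by simpa [hs] using hV))
    (fun U V hU hV he => h.rank_inj (by simpa [hs] using hU) (by simpa [hs] using hV) he)
    (by simp) i (by rw [Finset.mem_range, hcard]; exact hi)
  obtain ⟨V, hV, e⟩ := hsurj
  exact ⟨V, by simpa [hs] using hV, e.symm⟩

lemma before_of_rank (h : PSt D θ K) {X Z U V : 𝒴} (hU : U ∈ Ys D K X Z) (hV : V ∈ Ys D K X Z)
    (he : (Ys D K X U).ncard < (Ys D K X V).ncard) : U ∈ Ys D K X V := by
  have hne : U ≠ V := by rintro rfl; omega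
  rcases h.order hU hV hne with h1 | h1
  · exact h1
  · have := h.rank_lt h1; omega

lemma S1 (h : PSt D θ K) {X X' U W : 𝒴} (hA : Ys D K X X' = ∅) (hU : U ∈ Ys D K X W) :
    W ≠ X' ∧ W ≠ X ∧ D W X X' ≤ θ := by
  have hKθ := h.hKθ
  have h1 : W ≠ X' := by rintro rfl; rw [hA] at hU; exact hU
  have h2 : W ≠ X := by rintro rfl; rw [h.Ys_self] at hU; exact hU
  refine ⟨h1, h2, ?_⟩
  by_contra hc
  push Not at hc
  obtain ⟨a1, a2, a3⟩ := hU
  have e := h.sp3 X U W (Ne.symm a1) a2 (by linarith) X' (Ne.symm h1)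
  rw [e] at hc
  have hUX : U ≠ X' := by
    rintro rfl
    linarith [h.self W U a2]
  rw [h.symm] at hc
  have e2 := h.sp3 X' W U (Ne.symm h1) (Ne.symm a2) hc X (Ne.symm a1)
  have : U ∈ Ys D K X X' := ⟨a1, hUX, by rw [h.symm, e2, h.symm]; exact a3⟩
  rw [hA] at this; exact this

lemma S2 (h : PSt D θ K) {X X' U W V : 𝒴} (hA : Ys D K X X' = ∅) (hU : U ∈ Ys D K X W) (hW : W ∈ Ys D K X V) :
    X' ≠ V ∧ ∀ T, T ≠ V → D V X' T = D V X T := by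
  have hK := h.hK
  have hKθ := h.hKθ
  have hV := h.S1 hA hW
  obtain ⟨w1, w2, w3⟩ := h.S1 hA hU
  refine ⟨Ne.symm hV.1, fun T hT => ?_⟩
  obtain ⟨a1, a2, a3⟩ := hW
  have t := h.tri W X X' V (Ne.symm a1) (Ne.symm w1) (Ne.symm a2)
  rw [h.sp3 X' W V (Ne.symm w1) a2 (by linarith) T hT,
    h.sp3 X W V (Ne.symm a1) a2 (by linarith) T hT]

lemma two_of_rank (h : PSt D θ K) {X T : 𝒴} (hr : 2 ≤ (Ys D K X T).ncard) :
    ∃ U W, U ∈ Ys D K X W ∧ W ∈ Ys D K X T := by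
  obtain ⟨U, hU, eU⟩ := h.rank_surj (i := 0) (by omega : 0 < (Ys D K X T).ncard)
  obtain ⟨W, hW, eW⟩ := h.rank_surj (i := 1) (by omega : 1 < (Ys D K X T).ncard)
  exact ⟨U, W, h.before_of_rank hU hW (by omega), hW⟩

lemma S3 (h : PSt D θ K) {X X' T V : 𝒴} (hA : Ys D K X X' = ∅) (hT : T ∈ Ys D K X V)
    (hr : 2 ≤ (Ys D K X T).ncard) : T ∈ Ys D K X' V := by
  obtain ⟨U, W, hU, hW⟩ := h.two_of_rank hr
  obtain ⟨a, b⟩ := h.S2 hA hU hW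
  exact ⟨Ne.symm a, hT.2.1, by rw [b V (Ne.symm hT.2.1)]; exact hT.2.2⟩

lemma card_step (h : PSt D θ K) {X X' : 𝒴} (V : 𝒴) (hA : Ys D K X X' = ∅) :
    (Ys D K X V).ncard ≤ (Ys D K X' V).ncard + 2 := by
  classical
  set A := {T ∈ Ys D K X V | (Ys D K X T).ncard < 2} with hAdef
  have hAfin : A.Finite := (h.Ys_fin X V).subset (Set.sep_subset _ _)
  have h1 : A.ncard ≤ 2 := by
    have : A.ncard ≤ (Set.Iio 2 : Set ℕ).ncard := by
      apply Set.ncard_le_ncard_of_injOn (fun T => (Ys D K X T).ncard)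
      · intro T hT; exact hT.2
      · intro U hU W hW he; exact h.rank_inj hU.1 hW.1 he
    simpa [Set.ncard_eq_toFinset_card'] using this
  have h2 : Ys D K X V ⊆ Ys D K X' V ∪ A := by
    intro T hT
    by_cases hr : 2 ≤ (Ys D K X T).ncard
    · left; exact h.S3 hA hT hr
    · right; exact ⟨hT, by omega⟩
  have h3 := Set.ncard_le_ncard h2 ((h.Ys_fin X' V).union hAfin)
  have h4 := Set.ncard_union_le (Ys D K X' V) A
  omega

end PSt

/-- Strong projections with an action. -/
structure PSG (G : Type*) [Group G] [MulAction G 𝒴] (D : 𝒴 → 𝒴 → 𝒴 → ℝ) (θ K : ℝ) (y0 : 𝒴) :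
    Prop extends PSt D θ K where
  inv : ∀ (g : G) Y X Z, D (g • Y) (g • X) (g • Z) = D Y X Z
  trans : ∀ V : 𝒴, ∃ v : G, v • y0 = V

/-- The generating set. -/
def gS (G : Type*) [Group G] [MulAction G 𝒴] (D : 𝒴 → 𝒴 → 𝒴 → ℝ) (K : ℝ) (y0 : 𝒴) : Set G :=
  {g | Ys D K y0 (g • y0) = ∅}

namespace PSG
variable [MulAction G 𝒴] {y0 : 𝒴} (h : PSG G D θ K y0)

lemma Ys_smul (h : PSG G D θ K y0) (g : G) (X Z : 𝒴) {Y : 𝒴} : g • Y ∈ Ys D K (g • X) (g • Z) ↔ Y ∈ Ys D K X Z := by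
  simp [Ys, h.inv]

lemma Ys_smul' (h : PSG G D θ K y0) (g : G) (X Z : 𝒴) : Ys D K (g • X) (g • Z) = (fun Y => g • Y) '' Ys D K X Z := by
  ext Y
  constructor
  · intro hY
    refine ⟨g⁻¹ • Y, ?_, by simp⟩
    rw [← h.Ys_smul g]; simpa using hY
  · rintro ⟨T, hT, rfl⟩
    exact (h.Ys_smul g X Z).2 hT

lemma ncard_smul (h : PSG G D θ K y0) (g : G) (X Z : 𝒴) : (Ys D K (g • X) (g • Z)).ncard = (Ys D K X Z).ncard := by
  rw [h.Ys_smul']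
  exact Set.ncard_image_of_injective _ (MulAction.injective g)

lemma mem_gS (h : PSG G D θ K y0) (g k : G) : g⁻¹ * k ∈ gS G D K y0 ↔ Ys D K (g • y0) (k • y0) = ∅ := by
  unfold gS
  rw [Set.mem_ofPred_eq]
  have := h.Ys_smul' g y0 ((g⁻¹ * k) • y0)
  rw [← mul_smul, mul_inv_cancel_left] at this
  rw [this, Set.image_eq_empty]

lemma gS_inv (h : PSG G D θ K y0) (g : G) : g⁻¹ ∈ gS G D K y0 ↔ g ∈ gS G D K y0 := by
  have h1 := h.mem_gS g 1
  have h2 := h.mem_gS 1 g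
  rw [mul_one] at h1
  rw [inv_one, one_mul] at h2
  rw [h1, h2, h.Ys_comm]

lemma closure_gS (h : PSG G D θ K y0) : Subgroup.closure (gS G D K y0) = ⊤ := by
  have key : ∀ n : ℕ, ∀ x z : G, (Ys D K (x • y0) (z • y0)).ncard = n →
      x⁻¹ * z ∈ Subgroup.closure (gS G D K y0) := by
    intro n
    induction n using Nat.strong_induction_on with
    | _ n ih =>
    intro x z hn
    rcases Set.eq_empty_or_nonempty (Ys D K (x • y0) (z • y0)) with he | ⟨V, hV⟩
    · exact Subgroup.subset_closure ((h.mem_gS x z).2 he)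
    · obtain ⟨v, rfl⟩ := h.trans V
      have h1 := ih _ (hn ▸ h.rank_lt hV) x v rfl
      have h2 := ih _ (hn ▸ h.rank_lt' hV) v z rfl
      have := mul_mem h1 h2
      rwa [mul_assoc, mul_inv_cancel_left] at this
  rw [eq_top_iff]
  intro g _
  simpa using key _ 1 g rfl

lemma geoMet (h : PSG G D θ K y0) : GeoMet (wdist (gS G D K y0)) := wdist_geoMet h.closure_gS

lemma adj_le (h : PSG G D θ K y0) {x z : G} (hA : Ys D K (x • y0) (z • y0) = ∅) : wdist (gS G D K y0) x z ≤ 1 :=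
  wdist_le_one ((h.mem_gS x z).2 hA)

lemma adj_of (h : PSG G D θ K y0) {x z : G} (h1 : wdist (gS G D K y0) x z = 1) : Ys D K (x • y0) (z • y0) = ∅ := by
  rcases wdist_one h.closure_gS h1 with h2 | h2
  · exact (h.mem_gS x z).1 h2
  · exact (h.mem_gS x z).1 ((h.gS_inv _).1 h2)

lemma last_adj (h : PSG G D θ K y0) {X Z V : 𝒴} (hV : V ∈ Ys D K X Z) (hr : (Ys D K X V).ncard + 1 = (Ys D K X Z).ncard) :
    Ys D K V Z = ∅ := by
  by_contra hne
  obtain ⟨U, hU⟩ := Set.nonempty_iff_ne_empty.2 hne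
  have h1 := h.rank_lt (h.sub1' hV hU)
  have h2 := h.rank_lt (h.sub2' hV hU)
  omega

lemma dist_le_card (h : PSG G D θ K y0) (n : ℕ) : ∀ x z : G, (Ys D K (x • y0) (z • y0)).ncard = n →
    wdist (gS G D K y0) x z ≤ n + 1 := by
  induction n with
  | zero =>
    intro x z hn
    rw [Set.ncard_eq_zero (h.Ys_fin _ _)] at hn
    simpa using h.adj_le hn
  | succ n ih =>
    intro x z hn
    obtain ⟨V, hV, e⟩ := h.rank_surj (i := n) (by omega : n < (Ys D K (x • y0) (z • y0)).ncard)
    obtain ⟨v, rfl⟩ := h.trans V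
    have h1 := ih x v e
    have h2 := h.adj_le (h.last_adj hV (by omega))
    have := h.geoMet.tri x v z
    push_cast
    linarith

lemma dist_le (h : PSG G D θ K y0) (x z : G) : wdist (gS G D K y0) x z ≤ (Ys D K (x • y0) (z • y0)).ncard + 1 :=
  h.dist_le_card _ x z rfl

lemma first_step (h : PSG G D θ K y0) {x z : G} (hne : wdist (gS G D K y0) x z ≠ 0) :
    ∃ x', wdist (gS G D K y0) x x' = 1 ∧
      wdist (gS G D K y0) x' z = wdist (gS G D K y0) x z - 1 := by
  obtain ⟨n, hn⟩ := h.geoMet.nat x z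
  have := h.geoMet.geo x z 1 (by
    rw [hn] at hne ⊢
    have : n ≠ 0 := by exact_mod_cast hne
    exact_mod_cast Nat.one_le_iff_ne_zero.2 this)
  simpa using this

lemma card_cl (h : PSG G D θ K y0) (V : 𝒴) (n : ℕ) : ∀ x z : G, wdist (gS G D K y0) x z ≤ n →
    (Ys D K (x • y0) V).ncard ≤ (Ys D K (z • y0) V).ncard + 2 * n := by
  induction n with
  | zero =>
    intro x z hn
    have : x = z := h.geoMet.eq_of _ _ (le_antisymm (by simpa using hn) (h.geoMet.nonneg _ _))
    subst this; simp
  | succ n ih =>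
    intro x z hn
    by_cases h0 : wdist (gS G D K y0) x z = 0
    · have := h.geoMet.eq_of _ _ h0
      subst this; omega
    obtain ⟨x', h1, h2⟩ := h.first_step h0
    have h3 := ih x' z (by push_cast at hn; linarith)
    have h4 := h.card_step V (h.adj_of h1)
    omega

/-- coarse Lipschitz lower bound on the distance -/
lemma card_le (h : PSG G D θ K y0) {x z : G} {n : ℕ} (hn : wdist (gS G D K y0) x z ≤ n) :
    (Ys D K (x • y0) (z • y0)).ncard ≤ 2 * n := by
  have := h.card_cl (z • y0) n x z hn
  rw [h.Ys_self] at this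
  simpa using this

lemma card_le' (h : PSG G D θ K y0) (x z : G) :
    ((Ys D K (x • y0) (z • y0)).ncard : ℝ) ≤ 2 * wdist (gS G D K y0) x z := by
  obtain ⟨n, hn⟩ := h.geoMet.nat x z
  rw [hn]
  exact_mod_cast h.card_le hn.le

lemma far_step (h : PSG G D θ K y0) {x x' v : G} (h1 : wdist (gS G D K y0) x x' = 1) (h3 : 3 ≤ wdist (gS G D K y0) x v) :
    x' • y0 ≠ v • y0 ∧ ∀ T, T ≠ v • y0 → D (v • y0) (x' • y0) T = D (v • y0) (x • y0) T := by
  have h2 : 2 ≤ (Ys D K (x • y0) (v • y0)).ncard := by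
    have := h.dist_le x v
    have : (2 : ℝ) ≤ (Ys D K (x • y0) (v • y0)).ncard := by linarith
    exact_mod_cast this
  obtain ⟨U, W, hU, hW⟩ := h.two_of_rank h2
  exact h.S2 (h.adj_of h1) hU hW

lemma bottleneck (h : PSG G D θ K y0) (v : G) (n : ℕ) : ∀ x z : G, wdist (gS G D K y0) x z = n →
    (∀ p, wdist (gS G D K y0) x p + wdist (gS G D K y0) p z = wdist (gS G D K y0) x z →
      3 ≤ wdist (gS G D K y0) p v) →
    ∀ T, T ≠ v • y0 → D (v • y0) (x • y0) T = D (v • y0) (z • y0) T := by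
  have hg := h.geoMet
  induction n with
  | zero =>
    intro x z hn _ T _
    have := hg.eq_of _ _ (by simpa using hn)
    rw [this]
  | succ n ih =>
    intro x z hn hp T hT
    obtain ⟨x', h1, h2⟩ := h.first_step (x := x) (z := z) (by rw [hn]; positivity)
    have h3 := hp x (by rw [hg.self]; simp)
    rw [← (h.far_step h1 h3).2 T hT]
    refine ih x' z (by rw [h2, hn]; simp) ?_ T hT
    intro p hpp
    apply hp
    have t1 := hg.tri x x' p
    have t2 := hg.tri x p z
    linarith

/-- a large projection forces geodesics to pass nearby -/
lemma RT (h : PSG G D θ K y0) {x z v : G} (hz : z • y0 ≠ v • y0)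
    (hb : θ < D (v • y0) (x • y0) (z • y0)) :
    wdist (gS G D K y0) x v + wdist (gS G D K y0) v z ≤ wdist (gS G D K y0) x z + 4 := by
  have hg := h.geoMet
  obtain ⟨n, hn⟩ := hg.nat x z
  by_contra hc
  push Not at hc
  have := h.bottleneck v n x z hn (by
    intro p hp
    by_contra hlt
    push Not at hlt
    obtain ⟨m, hm⟩ := hg.nat p v
    have hm2 : wdist (gS G D K y0) p v ≤ 2 := by
      rw [hm] at hlt ⊢
      have : m < 3 := by exact_mod_cast hlt
      exact_mod_cast Nat.lt_succ_iff.1 this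
    have t1 := hg.tri x p v
    have t2 := hg.tri v p z
    rw [hg.symm v p] at t2
    linarith) (z • y0) hz
  rw [this] at hb
  linarith [h.self _ _ hz]

lemma RT' (h : PSG G D θ K y0) {x z v : G} (hv : v • y0 ∈ Ys D K (x • y0) (z • y0)) :
    wdist (gS G D K y0) x v + wdist (gS G D K y0) v z ≤ wdist (gS G D K y0) x z + 4 :=
  h.RT (Ne.symm hv.2.1) (by linarith [hv.2.2, h.hKθ])

lemma dist_same (h : PSG G D θ K y0) {x v : G} (he : x • y0 = v • y0) : wdist (gS G D K y0) x v ≤ 1 := by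
  apply h.adj_le; rw [he, h.Ys_self]

lemma hyp (h : PSG G D θ K y0) : HyperbolicWith (wdist (gS G D K y0)) 8 := by
  have hg := h.geoMet
  set d := wdist (gS G D K y0) with hd
  intro w x y z
  set r := min (gprod d x y w) (gprod d y z w) with hr
  have r1 : r ≤ gprod d x y w := min_le_left _ _
  have r2 : r ≤ gprod d y z w := min_le_right _ _
  have nn : ∀ a b, 0 ≤ gprod d a b w := by
    intro a b
    have := hg.tri a w b
    rw [hg.symm w b] at this
    unfold gprod; linarith
  rcases le_or_gt r 4 with hr4 | hr4
  · linarith [nn x z]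
  have ry : r ≤ d w y := by
    refine r1.trans ?_
    unfold gprod
    have := hg.tri x y w
    rw [hg.symm w y]; linarith
  -- choose v
  set A := {V | V ∈ Ys D K (w • y0) (y • y0) ∧ ∃ v : G, v • y0 = V ∧ d w v < r - 2} with hA
  have hAfin : A.Finite := (h.Ys_fin (w • y0) (y • y0)).subset (fun V hV => hV.1)
  have hAne : A.Nonempty := by
    by_cases h0 : (Ys D K (w • y0) (y • y0)).ncard = 0
    · have := h.dist_le w y
      rw [h0] at this
      simp only [Nat.cast_zero] at this
      linarith
    · obtain ⟨V, hV, e⟩ := h.rank_surj (i := 0) (Nat.pos_of_ne_zero h0)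
      obtain ⟨v, rfl⟩ := h.trans V
      refine ⟨_, hV, v, rfl, ?_⟩
      have := h.dist_le w v
      rw [e] at this
      simp only [Nat.cast_zero] at this
      linarith
  obtain ⟨V, ⟨hV, v, rfl, hv⟩, hmax⟩ := Set.exists_max_image A
    (fun V => (Ys D K (w • y0) V).ncard) hAfin hAne
  have hvlow : r - 3 ≤ d w v := by
    rcases Set.eq_empty_or_nonempty (Ys D K (v • y0) (y • y0)) with he | hne
    · have := h.adj_le he
      have := hg.tri w v y
      linarith
    · obtain ⟨U, hU, e⟩ := h.rank_surj (i := 0)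
        (Nat.pos_of_ne_zero (fun e => hne.ne_empty ((Set.ncard_eq_zero (h.Ys_fin _ _)).1 e)))
      obtain ⟨u, rfl⟩ := h.trans U
      have hU1 := h.sub1' hV hU
      have hlt := h.rank_lt (h.sub2' hV hU)
      have hu : r - 2 ≤ d w u := by
        by_contra hc
        push Not at hc
        have := hmax _ ⟨hU1, u, rfl, hc⟩
        omega
      rw [Set.ncard_eq_zero (h.Ys_fin _ _)] at e
      have := h.adj_le e
      have := hg.tri w v u
      linarith
  -- projections
  have proj : ∀ t : G, r ≤ gprod d t y w → d w v + d v t ≤ d w t + 4 := by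
    intro t ht
    have htw : r ≤ d w t := by
      refine ht.trans ?_
      unfold gprod
      have := hg.tri y t w
      rw [hg.symm t y, hg.symm w t]; linarith
    have hne : t • y0 ≠ v • y0 := by
      intro e
      have := h.dist_same e
      have := hg.tri w v t
      rw [hg.symm v t] at this
      linarith
    have hYne : y • y0 ≠ v • y0 := Ne.symm hV.2.1
    have h1 : D (v • y0) (t • y0) (y • y0) ≤ θ := by
      by_contra hc
      push Not at hc
      have := h.RT hYne hc
      rw [← hd] at this
      have t1 := hg.tri w v t
      have t2 := hg.tri w v y
      unfold gprod at ht
      rw [hg.symm t w, hg.symm y w] at ht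
      rw [hg.symm t v] at this
      linarith
    apply h.RT hne
    have := h.tri (v • y0) (w • y0) (t • y0) (y • y0) (Ne.symm hV.1) hne hYne
    linarith [hV.2.2, h.hK]
  have p1 := proj x r1
  have p2 := proj z (by
    refine r2.trans (le_of_eq ?_)
    unfold gprod
    rw [hg.symm y z]; ring)
  have := hg.tri x v z
  rw [hg.symm x v] at this
  unfold gprod
  rw [hg.symm x w, hg.symm z w]
  linarith

end PSG

end

section
variable {α : Type*} {G : Type*} [Group G]
variable {𝒴 : Type*} {D : 𝒴 → 𝒴 → 𝒴 → ℝ} {θ K : ℝ}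

/-! ### boundary generalities -/

lemma gprod_comm' {d : G → G → ℝ} (hg : GeoMet d) (x y o : G) : gprod d x y o = gprod d y x o := by
  unfold gprod; rw [hg.symm x y]; ring

lemma gprod_base {d : G → G → ℝ} (hg : GeoMet d) (x y o o' : G) :
    gprod d x y o - d o o' ≤ gprod d x y o' := by
  unfold gprod
  have t1 := hg.tri x o' o
  have t2 := hg.tri y o' o
  rw [hg.symm o' o] at t1 t2
  linarith

lemma gprod_inv {d : G → G → ℝ} (hg : GeoMet d) (g x y o : G) :
    gprod d (g * x) (g * y) o = gprod d x y (g⁻¹ * o) := by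
  unfold gprod
  have h1 := hg.inv g x (g⁻¹ * o)
  have h2 := hg.inv g y (g⁻¹ * o)
  rw [mul_inv_cancel_left] at h1 h2
  rw [hg.inv, h1, h2]

lemma gprod_le {d : G → G → ℝ} (hg : GeoMet d) (x y o : G) : gprod d x y o ≤ d x o := by
  unfold gprod
  have := hg.tri y x o
  rw [hg.symm y x] at this
  linarith

lemma brel_equiv {d : G → G → ℝ} {δ : ℝ} (hg : GeoMet d) (hh : HyperbolicWith d δ) :
    Equivalence (BRel d) where
  refl x := x.2
  symm := by
    intro x y h o R
    obtain ⟨N, hN⟩ := h o R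
    exact ⟨N, fun i hi j hj => by rw [gprod_comm' hg]; exact hN j hj i hi⟩
  trans := by
    intro x y z h1 h2 o R
    obtain ⟨N, hN⟩ := h1 o (R + δ)
    obtain ⟨M, hM⟩ := h2 o (R + δ)
    refine ⟨max N M, fun i hi j hj => ?_⟩
    have a1 := hN i (le_of_max_le_left hi) (max N M) (le_max_left _ _)
    have a2 := hM (max N M) (le_max_right _ _) j (le_of_max_le_right hj)
    have := hh o (x.1 i) (y.1 (max N M)) (z.1 j)
    have := le_min a1 a2
    linarith

lemma brel_of_eq {d : G → G → ℝ} {δ : ℝ} (hg : GeoMet d) (hh : HyperbolicWith d δ) {x y : BSeq d}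
    (h : Quot.mk (BRel d) x = Quot.mk (BRel d) y) : BRel d x y := by
  have := Quot.eqvGen_exact h
  rwa [(brel_equiv hg hh).eqvGen_iff] at this

lemma convInf_smul {d : G → G → ℝ} (hg : GeoMet d) {x : ℕ → G} (hx : ConvInf d x) (g : G) :
    ConvInf d (fun n => g * x n) := by
  intro o R
  obtain ⟨N, hN⟩ := hx (g⁻¹ * o) R
  exact ⟨N, fun i hi j hj => by rw [gprod_inv hg]; exact hN i hi j hj⟩

lemma convInf_of_base {d : G → G → ℝ} (hg : GeoMet d) {x : ℕ → G} (o : G)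
    (hx : ∀ R : ℝ, ∃ N : ℕ, ∀ i, N ≤ i → ∀ j, N ≤ j → R ≤ gprod d (x i) (x j) o) : ConvInf d x := by
  intro o' R
  obtain ⟨N, hN⟩ := hx (R + d o o')
  refine ⟨N, fun i hi j hj => ?_⟩
  have := gprod_base hg (x i) (x j) o o'
  linarith [hN i hi j hj]

/-- the zigzag sequence of vertices -/
def zz [MulAction G 𝒴] (c : G) (y0 Y1 : 𝒴) : ℕ → 𝒴
  | 0 => y0
  | 1 => Y1
  | (n+2) => c • zz c y0 Y1 n

namespace PSG
variable [MulAction G 𝒴] {y0 : 𝒴} (h : PSG G D θ K y0)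

lemma three_points (h : PSG G D θ K y0) {Y1 : 𝒴} {a b : G} (hY : Y1 ≠ y0) (ha : a • y0 = y0) (hb : b • Y1 = Y1)
    (h1 : K < D y0 Y1 (a • Y1)) (h2 : K < D y0 Y1 (a • a • Y1)) (h3 : K < D Y1 y0 (b • y0)) :
    ∃ p q r : Bdry (wdist (gS G D K y0)), p ≠ q ∧ p ≠ r ∧ q ≠ r := by
  have hg := h.geoMet
  have hKθ := h.hKθ
  set d := wdist (gS G D K y0) with hd
  set c := b * a with hc
  set Z := zz c y0 Y1 with hZ
  have Zs : ∀ n, Z (n+2) = c • Z n := fun n => rfl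
  have Z0 : Z 0 = y0 := rfl
  have Z1 : Z 1 = Y1 := rfl
  have cy0 : c • y0 = b • y0 := by rw [hc, mul_smul, ha]
  have tri : ∀ n, (K < D (Z (n+1)) (Z n) (Z (n+2)) ∧ Z (n+1) ≠ Z n) := by
    intro n
    induction n using Nat.strong_induction_on with
    | _ n ih =>
    match n with
    | 0 => rw [Zs, zero_add, Z0, Z1, cy0]; exact ⟨h3, hY⟩
    | 1 =>
      have e2 : Z (1 + 1) = b • y0 := by rw [show 1 + 1 = 0 + 2 by rfl, Zs, Z0, cy0]
      have e3 : Z (1 + 2) = c • Y1 := by rw [Zs, Z1]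
      rw [e3, e2, Z1]
      constructor
      · have := h.inv b y0 Y1 (a • Y1)
        rw [hb, ← mul_smul] at this
        rw [this]; exact h1
      · intro e
        apply hY
        rw [← hb] at e
        exact ((MulAction.injective b) e).symm
    | (m+2) =>
      have := ih m (by omega)
      rw [show m + 2 + 1 = (m+1) + 2 by ring, Zs, Zs, Zs, h.inv]
      exact ⟨this.1, fun e => this.2 (MulAction.injective c e)⟩
  have mem : ∀ n, Z (n+1) ∈ Ys D K (Z 0) (Z (n+2)) := by
    intro n
    induction n with
    | zero => exact ⟨(tri 0).2, (tri 1).2.symm, (tri 0).1⟩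
    | succ n ih =>
      have hne : Z (n+2) ≠ Z 0 := by
        intro e; rw [e, h.Ys_self] at ih; exact ih
      obtain ⟨i1, i2, i3⟩ := ih
      have := h.sp3 _ _ _ i1.symm i2 (by linarith) (Z (n+3)) (tri (n+2)).2
      exact ⟨hne, (tri (n+2)).2.symm, by rw [this]; exact (tri (n+1)).1⟩
  have mem2 : ∀ m k, Z (m+1) ∈ Ys D K (Z 0) (Z (m+2+k)) := by
    intro m k
    induction k with
    | zero => exact mem m
    | succ k ih =>
      have e : m + 1 + k + 1 = m + 2 + k := by ring
      have e' : m + 1 + k + 2 = m + 2 + (k + 1) := by ring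
      have := mem (m+1+k)
      rw [e, e'] at this
      exact h.sub1 this ih
  have card : ∀ n, n ≤ (Ys D K (Z 0) (Z (n+1))).ncard := by
    intro n
    induction n with
    | zero => simp
    | succ n ih => have := h.rank_lt (mem n); change _ ≤ (Ys D K (Z 0) (Z (n+2))).ncard; omega
  have Zc : ∀ j, Z (2 * j) = c^j • y0 := by
    intro j
    induction j with
    | zero => simp [Z0]
    | succ j ih => rw [show 2 * (j+1) = 2 * j + 2 by ring, Zs, ih, ← mul_smul, pow_succ']
  have dl : ∀ j : ℕ, (j : ℝ) - 1 ≤ d 1 (c^j) := by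
    intro j
    rcases j with _ | j
    · have := hg.nonneg 1 (c^0); push_cast; linarith
    · have e1 := card (2*j+1)
      rw [show 2*j+1+1 = 2*(j+1) by ring, Zc, Z0] at e1
      have e2 := h.card_le' 1 (c^(j+1))
      rw [one_smul] at e2
      have e3 : ((2*j+1 : ℕ) : ℝ) ≤ (Ys D K y0 (c^(j+1) • y0)).ncard := by exact_mod_cast e1
      push_cast at e3 ⊢
      linarith
  have gp : ∀ i j : ℕ, i ≤ j → (i:ℝ) - 3 ≤ gprod d (c^i) (c^j) 1 := by
    intro i j hij
    have hsub : d 1 (c^i) + d (c^i) (c^j) ≤ d 1 (c^j) + 4 := by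
      rcases hij.eq_or_lt with rfl | hlt
      · rw [hg.self]; linarith
      rcases Nat.eq_zero_or_pos i with rfl | hi
      · simp only [pow_zero, hg.self]; linarith
      · apply h.RT'
        rw [one_smul, ← Zc, ← Zc, ← Z0]
        have := mem2 (2*i-1) (2*j-2*i-1)
        rwa [show 2*i-1+1 = 2*i by omega, show 2*i-1+2+(2*j-2*i-1) = 2*j by omega] at this
    unfold gprod
    rw [hg.symm _ 1, hg.symm _ 1]
    linarith [dl i]
  have cv : ConvInf d (fun j => c^j) := by
    apply convInf_of_base hg 1
    intro R
    obtain ⟨N, hN⟩ := exists_nat_ge (R + 3)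
    refine ⟨N, fun i hi j hj => ?_⟩
    have ci : (N : ℝ) ≤ i := by exact_mod_cast hi
    have cj : (N : ℝ) ≤ j := by exact_mod_cast hj
    rcases le_total i j with hij | hij
    · linarith [gp i j hij]
    · rw [gprod_comm' hg]; linarith [gp j i hij]
  have prj : ∀ i, 1 ≤ i → ∀ k : ℕ, a^k • c^i • y0 ≠ y0 ∧
      ∀ T, T ≠ y0 → D y0 (a^k • c^i • y0) T = D y0 (a^k • Y1) T := by
    intro i hi k
    have ak : a^k • y0 = y0 := by
      induction k with
      | zero => simp
      | succ k ih => rw [pow_succ, mul_smul, ha, ih]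
    have hm := mem2 0 (2*i-2)
    rw [show 0+2+(2*i-2) = 2*i by omega, zero_add, Z0, Z1, Zc] at hm
    rw [← h.Ys_smul (a^k), ak] at hm
    constructor
    · intro e
      rw [e, h.Ys_self] at hm; exact hm
    · intro T hT
      rw [h.Ys_comm] at hm
      exact h.sp3 _ _ _ hm.1.symm hm.2.1 (by linarith [hm.2.2]) T hT
  let sq : ℕ → BSeq d := fun k => ⟨fun n => a^k * c^n, convInf_smul hg cv (a^k)⟩
  have nr : ∀ k k' : ℕ, K < D y0 (a^k • Y1) (a^k' • Y1) →
      Quot.mk (BRel d) (sq k) ≠ Quot.mk (BRel d) (sq k') := by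
    intro k k' hkk e
    have hB := brel_of_eq hg h.hyp e
    obtain ⟨N, hN⟩ := hB 1 3
    have := hN (N+1) (by omega) (N+1) (by omega)
    obtain ⟨n1, p1⟩ := prj (N+1) (by omega) k
    obtain ⟨n2, p2⟩ := prj (N+1) (by omega) k'
    have hY1 : a^k • Y1 ≠ y0 := by
      intro e
      have : a^k • y0 = y0 := by
        clear * - ha
        induction k with
        | zero => simp
        | succ k ih => rw [pow_succ, mul_smul, ha, ih]
      rw [← this] at e
      exact hY (MulAction.injective _ e)
    have r := h.RT (x := a^k * c^(N+1)) (z := a^k' * c^(N+1)) (v := 1)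
      (by rw [one_smul, mul_smul]; exact n2) (by
        rw [one_smul, mul_smul, mul_smul, p1 _ n2, h.symm, p2 _ hY1, h.symm]; linarith)
    unfold gprod at this
    simp only [sq] at this
    rw [hg.symm (a^k' * c^(N+1)) 1] at this
    linarith
  have e12 : D y0 (a • Y1) (a • a • Y1) = D y0 Y1 (a • Y1) := by
    have := h.inv a y0 Y1 (a • Y1)
    rwa [ha] at this
  refine ⟨_, _, _, nr 0 1 ?_, nr 0 2 ?_, nr 1 2 ?_⟩
  · simpa using h1
  · simpa [pow_two, mul_smul] using h2
  · simp only [pow_one, pow_two, mul_smul]; rw [e12]; exact h1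

end PSG

end

section
variable {α : Type*} {G : Type*} [Group G]
variable {𝒴 : Type*} {D : 𝒴 → 𝒴 → 𝒴 → ℝ} {θ K : ℝ}

/-! ### acylindricity -/

lemma ncard_fiber {A B : Type*} (T : Set A) (f : A → B) (s : Finset B) (N : ℕ)
    (hf : ∀ a ∈ T, f a ∈ s) (hfib : ∀ b ∈ s, {a ∈ T | f a = b}.Finite ∧ {a ∈ T | f a = b}.ncard ≤ N) :
    T.Finite ∧ T.ncard ≤ s.card * N := by
  classical
  have hT : T ⊆ ⋃ b ∈ s, {a ∈ T | f a = b} := by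
    intro a ha
    simp only [Set.mem_iUnion]
    exact ⟨f a, hf a ha, ha, rfl⟩
  have hfin : T.Finite := (Set.Finite.biUnion s.finite_toSet (fun b hb => (hfib b hb).1)).subset hT
  refine ⟨hfin, ?_⟩
  have h1 := Finset.card_le_mul_card_image_of_maps_to (s := hfin.toFinset) (t := s) (f := f)
    (fun a ha => hf a (by simpa using ha)) N (fun b hb => by
      rw [← Set.ncard_coe_finset]
      refine le_trans (le_of_eq ?_) (hfib b hb).2
      congr 1
      ext a; simp)
  rw [Set.ncard_eq_toFinset_card T hfin]
  rw [mul_comm]; exact h1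

namespace PSG
variable [MulAction G 𝒴] {y0 : 𝒴} (h : PSG G D θ K y0)

lemma S3_iter (h : PSG G D θ K y0) (V T : 𝒴) (n : ℕ) : ∀ x z : G, wdist (gS G D K y0) x z ≤ n →
    2 * n ≤ (Ys D K (x • y0) T).ncard → T ∈ Ys D K (x • y0) V → T ∈ Ys D K (z • y0) V := by
  induction n with
  | zero =>
    intro x z hn _ hT
    have : x = z := h.geoMet.eq_of _ _ (le_antisymm (by simpa using hn) (h.geoMet.nonneg _ _))
    rwa [← this]
  | succ n ih =>
    intro x z hn hr hT
    by_cases h0 : wdist (gS G D K y0) x z = 0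
    · have := h.geoMet.eq_of _ _ h0
      rwa [← this]
    obtain ⟨x', h1, h2⟩ := h.first_step h0
    have h4 := h.card_step T (h.adj_of h1)
    exact ih x' z (by push_cast at hn; linarith) (by omega) (h.S3 (h.adj_of h1) hT (by omega))

lemma card_split (h : PSG G D θ K y0) {X Z U : 𝒴} (hU : U ∈ Ys D K X Z) :
    (Ys D K X Z).ncard ≤ (Ys D K X U).ncard + 1 + (Ys D K Z U).ncard := by
  have h2 : Ys D K X Z ⊆ (Ys D K X U ∪ {U}) ∪ Ys D K Z U := by
    intro T hT
    by_cases e : T = U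
    · left; right; exact e
    rcases h.order hT hU e with h1 | h1
    · left; left; exact h1
    · right; rw [h.Ys_comm]; exact h.sub2 hT h1
  have h3 := Set.ncard_le_ncard h2 (((h.Ys_fin _ _).union (Set.finite_singleton _)).union (h.Ys_fin _ _))
  have h4 := Set.ncard_union_le (Ys D K X U ∪ {U}) (Ys D K Z U)
  have h5 := Set.ncard_union_le (Ys D K X U) {U}
  rw [Set.ncard_singleton] at h5
  omega

lemma acyl (h : PSG G D θ K y0) {N : ℕ} (hN : 0 < N) (hFT : ∀ A B A' B' V, V ∈ Ys D K A B →
    {g : G | g • A = A' ∧ g • B = B'}.Finite ∧ {g : G | g • A = A' ∧ g • B = B'}.ncard ≤ N) :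
    AcylDist (wdist (gS G D K y0)) := by
  have hg := h.geoMet
  intro ε hε
  obtain ⟨r, hr⟩ := exists_nat_ge ε
  refine ⟨4 * r + 10, by positivity, (2 * r + 2 * r + 3) * (2 * r + 2 * r + 3) * N, by positivity, ?_⟩
  intro x z hR
  set d := wdist (gS G D K y0) with hd
  have hn : 4 * r + 9 ≤ (Ys D K (x • y0) (z • y0)).ncard := by
    have := h.dist_le x z
    have : (4 * r + 9 : ℝ) ≤ (Ys D K (x • y0) (z • y0)).ncard := by linarith
    exact_mod_cast this
  obtain ⟨U, hU, eU⟩ := h.rank_surj (i := 2 * r) (by omega : 2 * r < (Ys D K (x • y0) (z • y0)).ncard)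
  obtain ⟨M, hM, eM⟩ := h.rank_surj (i := 2 * r + 1)
    (by omega : 2 * r + 1 < (Ys D K (x • y0) (z • y0)).ncard)
  obtain ⟨U', hU', eU'⟩ := h.rank_surj (i := 2 * r + 2)
    (by omega : 2 * r + 2 < (Ys D K (x • y0) (z • y0)).ncard)
  have hMU : M ∈ Ys D K U U' :=
    h.sub2 (h.before_of_rank hM hU' (by omega)) (h.before_of_rank hU hM (by omega))
  set T := {g : G | d x (g * x) ≤ ε ∧ d z (g * z) ≤ ε} with hT
  have key : ∀ W, W ∈ Ys D K (x • y0) (z • y0) → 2 * r ≤ (Ys D K (x • y0) W).ncard →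
      (Ys D K (x • y0) W).ncard ≤ 2 * r + 2 → ∀ g ∈ T, g⁻¹ • W ∈ Ys D K (x • y0) (z • y0) ∧
      (Ys D K (x • y0) (g⁻¹ • W)).ncard < 2 * r + 2 * r + 3 := by
    intro W hW h1 h2 g hgT
    have c := h.card_split hW
    have s1 := h.S3_iter (z • y0) W r x (g * x) (hgT.1.trans hr) h1 hW
    rw [h.Ys_comm] at s1
    have s2 := h.S3_iter ((g * x) • y0) W r z (g * z) (hgT.2.trans hr) (by omega) s1
    rw [h.Ys_comm] at s2
    constructor
    · rw [← h.Ys_smul g, smul_inv_smul, ← mul_smul, ← mul_smul]; exact s2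
    · have e1 := h.card_cl W r (g * x) x ((hg.symm _ _).le.trans (hgT.1.trans hr))
      have e2 := h.ncard_smul g (x • y0) (g⁻¹ • W)
      rw [smul_inv_smul, ← mul_smul] at e2
      omega
  have kU := key U hU (by omega) (by omega)
  have kU' := key U' hU' (by omega) (by omega)
  have := ncard_fiber T (fun g => ((Ys D K (x • y0) (g⁻¹ • U)).ncard, (Ys D K (x • y0) (g⁻¹ • U')).ncard))
    (Finset.range (2 * r + 2 * r + 3) ×ˢ Finset.range (2 * r + 2 * r + 3)) N
    (fun g hgT => by
      simp only [Finset.mem_product, Finset.mem_range]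
      exact ⟨(kU g hgT).2, (kU' g hgT).2⟩)
    (fun b hb => by
      rcases Set.eq_empty_or_nonempty {a ∈ T | ((Ys D K (x • y0) (a⁻¹ • U)).ncard,
        (Ys D K (x • y0) (a⁻¹ • U')).ncard) = b} with he | ⟨g0, hg0, hb0⟩
      · rw [he]; simp
      have hsub : {a ∈ T | ((Ys D K (x • y0) (a⁻¹ • U)).ncard,
        (Ys D K (x • y0) (a⁻¹ • U')).ncard) = b} ⊆
        (fun g => g⁻¹) '' {g : G | g • U = g0⁻¹ • U ∧ g • U' = g0⁻¹ • U'} := by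
        rintro g ⟨hgT, hgb⟩
        rw [← hb0] at hgb
        simp only [Prod.mk.injEq] at hgb
        refine ⟨g⁻¹, ⟨?_, ?_⟩, by simp⟩
        · exact h.rank_inj (kU g hgT).1 (kU g0 hg0).1 hgb.1
        · exact h.rank_inj (kU' g hgT).1 (kU' g0 hg0).1 hgb.2
      obtain ⟨f1, f2⟩ := hFT U U' (g0⁻¹ • U) (g0⁻¹ • U') M hMU
      exact ⟨(f1.image _).subset hsub, (Set.ncard_le_ncard hsub (f1.image _)).trans
        ((Set.ncard_image_le f1).trans f2)⟩)
  simpa using this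

end PSG

end

section
variable {α : Type*} {G : Type*} [Group G]
variable {𝒴 : Type*} {D : 𝒴 → 𝒴 → 𝒴 → ℝ} {θ K : ℝ}

/-! ### topological amenability: the rays -/

/-- Elements between `O` and a boundary point. -/
def Yb [MulAction G 𝒴] (D : 𝒴 → 𝒴 → 𝒴 → ℝ) (K : ℝ) (y0 : 𝒴) (O : 𝒴)
    (ξ : Bdry (wdist (gS G D K y0))) : Set 𝒴 :=
  {V | ∃ x : BSeq (wdist (gS G D K y0)), Quot.mk (BRel (wdist (gS G D K y0))) x = ξ ∧
    ∃ N, ∀ n, N ≤ n → V ∈ Ys D K O (x.1 n • y0)}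

namespace PSG
variable [MulAction G 𝒴] {y0 : 𝒴} (h : PSG G D θ K y0)

lemma near (h : PSG G D θ K y0) {v a b : G} (O : 𝒴) (hab : 3 ≤ gprod (wdist (gS G D K y0)) a b v) :
    v • y0 ∈ Ys D K O (a • y0) → v • y0 ∈ Ys D K O (b • y0) := by
  have hg := h.geoMet
  rintro ⟨h1, h2, h3⟩
  have hb : v • y0 ≠ b • y0 := by
    intro e
    have := h.dist_same e
    rw [gprod_comm' hg] at hab
    have h5 := gprod_le hg b a v
    rw [hg.symm] at h5
    linarith
  refine ⟨h1, hb, ?_⟩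
  obtain ⟨n, hn⟩ := hg.nat a b
  have := h.bottleneck v n a b hn (by
    intro p hp
    have t1 := hg.tri a p v
    have t2 := hg.tri b p v
    rw [hg.symm b p] at t2
    unfold gprod at hab
    linarith) O (Ne.symm h1)
  rw [h.symm, ← this, h.symm]; exact h3

lemma Yb_any (h : PSG G D θ K y0) {O V : 𝒴} (x : BSeq (wdist (gS G D K y0)))
    (hV : V ∈ Yb D K y0 O (Quot.mk (BRel (wdist (gS G D K y0))) x)) :
    ∃ N, ∀ n, N ≤ n → V ∈ Ys D K O (x.1 n • y0) := by
  obtain ⟨x', e, N, hN⟩ := hV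
  obtain ⟨v, rfl⟩ := h.trans V
  obtain ⟨M, hM⟩ := brel_of_eq h.geoMet h.hyp e v 3
  exact ⟨max N M, fun n hn => h.near O (hM (max N M) (le_max_right _ _) n (le_of_max_le_right hn))
    (hN _ (le_max_left _ _))⟩

lemma Yb_inj (h : PSG G D θ K y0) {O U V : 𝒴} {ξ : Bdry (wdist (gS G D K y0))} (hU : U ∈ Yb D K y0 O ξ)
    (hV : V ∈ Yb D K y0 O ξ) (e : (Ys D K O U).ncard = (Ys D K O V).ncard) : U = V := by
  obtain ⟨x, rfl⟩ := Quot.exists_rep ξ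
  obtain ⟨N, hN⟩ := h.Yb_any x hU
  obtain ⟨M, hM⟩ := h.Yb_any x hV
  exact h.rank_inj (hN (max N M) (le_max_left _ _)) (hM (max N M) (le_max_right _ _)) e

lemma Yb_before (h : PSG G D θ K y0) {O U V : 𝒴} {ξ : Bdry (wdist (gS G D K y0))} (hU : U ∈ Yb D K y0 O ξ)
    (hV : V ∈ Yb D K y0 O ξ) (e : (Ys D K O U).ncard < (Ys D K O V).ncard) : U ∈ Ys D K O V := by
  obtain ⟨x, rfl⟩ := Quot.exists_rep ξ
  obtain ⟨N, hN⟩ := h.Yb_any x hU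
  obtain ⟨M, hM⟩ := h.Yb_any x hV
  exact h.before_of_rank (hN (max N M) (le_max_left _ _)) (hM (max N M) (le_max_right _ _)) e

lemma Yb_surj (h : PSG G D θ K y0) (o : G) (ξ : Bdry (wdist (gS G D K y0))) (i : ℕ) :
    ∃ V ∈ Yb D K y0 (o • y0) ξ, (Ys D K (o • y0) V).ncard = i := by
  have hg := h.geoMet
  obtain ⟨x, rfl⟩ := Quot.exists_rep ξ
  obtain ⟨N, hN⟩ := x.2 o (i + 5)
  have h1 := (hN N le_rfl N le_rfl).trans (gprod_le hg _ _ _)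
  rw [hg.symm] at h1
  have h2 := h.dist_le o (x.1 N)
  have h3 : i < (Ys D K (o • y0) (x.1 N • y0)).ncard := by
    have : (i : ℝ) < (Ys D K (o • y0) (x.1 N • y0)).ncard := by linarith
    exact_mod_cast this
  obtain ⟨V, hV, e⟩ := h.rank_surj h3
  obtain ⟨v, rfl⟩ := h.trans V
  refine ⟨_, ⟨x, rfl, N, fun n hn => ?_⟩, e⟩
  apply h.near _ _ hV
  have := gprod_base hg (x.1 N) (x.1 n) o v
  have h4 := h.dist_le o v
  rw [e] at h4
  linarith [hN N le_rfl n hn]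

end PSG

/-- the `i`-th vertex on the ray from `o` to `ξ` -/
def vi [MulAction G 𝒴] {y0 : 𝒴} (h : PSG G D θ K y0) (o : G) (ξ : Bdry (wdist (gS G D K y0)))
    (i : ℕ) : 𝒴 := (h.Yb_surj o ξ i).choose

namespace PSG
variable [MulAction G 𝒴] {y0 : 𝒴} (h : PSG G D θ K y0)

lemma vi_mem (o : G) (ξ : Bdry (wdist (gS G D K y0))) (i : ℕ) :
    vi h o ξ i ∈ Yb D K y0 (o • y0) ξ := (h.Yb_surj o ξ i).choose_spec.1

lemma vi_rank (o : G) (ξ : Bdry (wdist (gS G D K y0))) (i : ℕ) :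
    (Ys D K (o • y0) (vi h o ξ i)).ncard = i := (h.Yb_surj o ξ i).choose_spec.2

lemma vi_uniq {o : G} {ξ : Bdry (wdist (gS G D K y0))} {V : 𝒴} (hV : V ∈ Yb D K y0 (o • y0) ξ) :
    vi h o ξ (Ys D K (o • y0) V).ncard = V :=
  h.Yb_inj (h.vi_mem o ξ _) hV (h.vi_rank o ξ _)

lemma vi_before (o : G) (ξ : Bdry (wdist (gS G D K y0))) {i j : ℕ} (hij : i < j) :
    vi h o ξ i ∈ Ys D K (o • y0) (vi h o ξ j) :=
  h.Yb_before (h.vi_mem _ _ _) (h.vi_mem _ _ _) (by rw [h.vi_rank, h.vi_rank]; exact hij)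

lemma vi_between (o : G) (ξ : Bdry (wdist (gS G D K y0))) (i : ℕ) :
    vi h o ξ (i+1) ∈ Ys D K (vi h o ξ i) (vi h o ξ (i+2)) :=
  h.sub2 (h.vi_before o ξ (by omega)) (h.vi_before o ξ (by omega))

lemma vi_tail (o o' : G) (ξ : Bdry (wdist (gS G D K y0))) (n : ℕ)
    (hn : wdist (gS G D K y0) o o' ≤ n) :
    ∃ j0 ≤ 4 * n, ∀ k, vi h o ξ (2 * n + k) = vi h o' ξ (j0 + k) := by
  set ρ : ℕ → ℕ := fun k => (Ys D K (o' • y0) (vi h o ξ (2 * n + k))).ncard with hρ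
  have hmem : ∀ k, vi h o ξ (2 * n + k) ∈ Yb D K y0 (o' • y0) ξ := by
    intro k
    obtain ⟨x, e, N, hN⟩ := h.vi_mem o ξ (2 * n + k)
    refine ⟨x, e, N, fun m hm => ?_⟩
    exact h.S3_iter _ _ n o o' hn (by rw [h.vi_rank]; omega) (hN m hm)
  have hbef : ∀ k, vi h o ξ (2 * n + k) ∈ Ys D K (o' • y0) (vi h o ξ (2 * n + (k+1))) := by
    intro k
    exact h.S3_iter _ _ n o o' hn (by rw [h.vi_rank]; omega) (h.vi_before o ξ (by omega))
  have hstep : ∀ k, ρ (k+1) = ρ k + 1 := by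
    intro k
    have h1 : ρ k < ρ (k+1) := h.rank_lt (hbef k)
    by_contra hne
    have h2 : ρ k + 1 < ρ (k+1) := by omega
    set w := vi h o' ξ (ρ k + 1) with hw
    have hwr : (Ys D K (o' • y0) w).ncard = ρ k + 1 := h.vi_rank _ _ _
    have a1 : vi h o ξ (2 * n + k) ∈ Ys D K (o' • y0) w :=
      h.Yb_before (hmem k) (h.vi_mem _ _ _) (by
        change ρ k < _
        rw [h.vi_rank]; omega)
    have a2 : w ∈ Ys D K (o' • y0) (vi h o ξ (2 * n + (k+1))) :=
      h.Yb_before (h.vi_mem _ _ _) (hmem (k+1)) (by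
        change _ < ρ (k+1)
        rw [h.vi_rank]; omega)
    have a3 := h.sub2 a2 a1
    have a4 := h.vi_before o ξ (show 2 * n + k < 2 * n + (k+1) by omega)
    have b1 := h.rank_lt (h.sub1' a4 a3)
    have b2 := h.rank_lt (h.sub2' a4 a3)
    rw [h.vi_rank] at b1 b2
    omega
  have hlin : ∀ k, ρ k = ρ 0 + k := by
    intro k
    induction k with
    | zero => rfl
    | succ k ih => rw [hstep, ih]; omega
  refine ⟨ρ 0, ?_, fun k => ?_⟩
  · have := h.card_cl (vi h o ξ (2 * n + 0)) n o' o (by rw [h.geoMet.symm]; exact hn)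
    rw [h.vi_rank] at this
    change ρ 0 ≤ _ at this
    omega
  · rw [← hlin]
    exact (h.vi_uniq (hmem k)).symm

lemma vi_equiv (g o : G) (ξ η : Bdry (wdist (gS G D K y0)))
    (hb : bAct (wdist (gS G D K y0)) g ξ η) (i : ℕ) :
    vi h o η i = g • vi h (g⁻¹ * o) ξ i := by
  obtain ⟨x, hx, rfl, rfl⟩ := hb
  obtain ⟨N, hN⟩ := h.Yb_any x (h.vi_mem (g⁻¹ * o) (Quot.mk _ x) i)
  have e : o • y0 = g • (g⁻¹ * o) • y0 := by rw [← mul_smul]; simp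
  have hm : g • vi h (g⁻¹ * o) (Quot.mk _ x) i ∈ Yb D K y0 (o • y0)
      (Quot.mk (BRel (wdist (gS G D K y0))) (⟨fun n => g * x.1 n, hx⟩)) := by
    refine ⟨_, rfl, N, fun n hn => ?_⟩
    rw [e]
    change _ ∈ Ys D K _ ((g * x.1 n) • y0)
    rw [mul_smul g (x.1 n), h.Ys_smul]
    exact hN n hn
  have := h.vi_uniq hm
  rw [← this]
  congr 1
  conv_rhs => rw [e]
  rw [h.ncard_smul, h.vi_rank]

lemma bgp_self (o : G) (ξ : Bdry (wdist (gS G D K y0))) (R : ℝ) :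
    (R : EReal) < bgp (wdist (gS G D K y0)) o ξ ξ := by
  obtain ⟨x, rfl⟩ := Quot.exists_rep ξ
  obtain ⟨N, hN⟩ := x.2 o (R + 1)
  have h1 : ((R + 1 : ℝ) : EReal) ≤ Filter.liminf
      (fun pq : ℕ × ℕ => ((gprod (wdist (gS G D K y0)) (x.1 pq.1) (x.1 pq.2) o : ℝ) : EReal))
      Filter.atTop := by
    apply Filter.le_liminf_of_le
    · isBoundedDefault
    · filter_upwards [Filter.eventually_ge_atTop (N, N)] with pq hpq
      exact_mod_cast hN _ hpq.1 _ hpq.2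
  have h2 : (R : EReal) < ((R + 1 : ℝ) : EReal) := by exact_mod_cast lt_add_one R
  refine h2.trans_le (h1.trans ?_)
  exact le_sSup ⟨x, x, rfl, rfl, rfl⟩

lemma vi_local (o : G) (ξ η : Bdry (wdist (gS G D K y0))) (n : ℕ)
    (hlt : ((n + 5 : ℝ) : EReal) < bgp (wdist (gS G D K y0)) o ξ η) (i : ℕ) (hi : i ≤ n) :
    vi h o η i = vi h o ξ i := by
  obtain ⟨_, ⟨x, y, rfl, rfl, rfl⟩, hr⟩ := lt_sSup_iff.1 hlt
  have hev := Filter.eventually_lt_of_lt_liminf hr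
  rw [Filter.eventually_atTop] at hev
  obtain ⟨⟨N, M⟩, hNM⟩ := hev
  obtain ⟨N', hN'⟩ := h.Yb_any x (h.vi_mem o (Quot.mk _ x) i)
  have hm : vi h o (Quot.mk _ x) i ∈ Yb D K y0 (o • y0)
      (Quot.mk (BRel (wdist (gS G D K y0))) y) := by
    refine ⟨y, rfl, M, fun m hm => ?_⟩
    have h1 := hN' (max N N') (le_max_right _ _)
    have h2 := hNM (max N N', m) ⟨le_max_left _ _, hm⟩
    have h2' : (n + 5 : ℝ) < gprod (wdist (gS G D K y0)) (x.1 (max N N')) (y.1 m) o := by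
      exact_mod_cast h2
    have hrk := h.vi_rank o (Quot.mk _ x) i
    obtain ⟨v, hv⟩ := h.trans (vi h o (Quot.mk _ x) i)
    rw [← hv] at h1 hrk ⊢
    refine h.near _ ?_ h1
    have h3 := gprod_base h.geoMet (x.1 (max N N')) (y.1 m) o v
    have h4 := h.dist_le o v
    rw [hrk] at h4
    have : (i : ℝ) ≤ n := by exact_mod_cast hi
    linarith
  have := h.vi_uniq hm
  rwa [h.vi_rank] at this

end PSG

end

section
variable {α : Type*} {G : Type*} [Group G]
variable {𝒴 : Type*} {D : 𝒴 → 𝒴 → 𝒴 → ℝ} {θ K : ℝ}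

/-! ### topological amenability: the measures -/

/-- chosen representative of the orbit of a pair -/
def orep (G : Type*) [Group G] [MulAction G 𝒴] (P : 𝒴 × 𝒴) : 𝒴 × 𝒴 :=
  Quotient.out (Quotient.mk (MulAction.orbitRel G (𝒴 × 𝒴)) P)

/-- group elements moving the representative to the pair -/
def Fst (G : Type*) [Group G] [MulAction G 𝒴] (P : 𝒴 × 𝒴) : Set G := {g | g • orep G P = P}

open Classical in
/-- uniform measure on `Fst` -/
def un (G : Type*) [Group G] [MulAction G 𝒴] (P : 𝒴 × 𝒴) (g : G) : ℝ :=
  if g ∈ Fst G P then ((Fst G P).ncard : ℝ)⁻¹ else 0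

section
variable [MulAction G 𝒴]

lemma orep_smul (g : G) (P : 𝒴 × 𝒴) : orep G (g • P) = orep G P := by
  unfold orep
  congr 1
  apply Quotient.sound
  exact ⟨g, rfl⟩

lemma Fst_nonempty (P : 𝒴 × 𝒴) : (Fst G P).Nonempty := by
  have h : (MulAction.orbitRel G (𝒴 × 𝒴)) (orep G P) P := Quotient.mk_out P
  obtain ⟨g, hg⟩ := MulAction.orbitRel_apply.1 ((MulAction.orbitRel G (𝒴 × 𝒴)).symm h)
  exact ⟨g, hg⟩

lemma mem_Fst_smul (g k : G) (P : 𝒴 × 𝒴) : k ∈ Fst G (g • P) ↔ g⁻¹ * k ∈ Fst G P := by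
  unfold Fst
  rw [Set.mem_ofPred_eq, Set.mem_ofPred_eq, orep_smul, mul_smul, inv_smul_eq_iff]

lemma un_smul (g k : G) (P : 𝒴 × 𝒴) : un G (g • P) k = un G P (g⁻¹ * k) := by
  have h1 : (Fst G (g • P)).ncard = (Fst G P).ncard := by
    have : Fst G (g • P) = (fun k => g * k) '' Fst G P := by
      ext k
      rw [mem_Fst_smul]
      constructor
      · intro hk; exact ⟨_, hk, by simp⟩
      · rintro ⟨k', hk', rfl⟩; simpa using hk'
    rw [this, Set.ncard_image_of_injective _ (mul_right_injective g)]
  unfold un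
  rw [h1]
  by_cases hk : g⁻¹ * k ∈ Fst G P
  · rw [if_pos hk, if_pos ((mem_Fst_smul g k P).2 hk)]
  · rw [if_neg hk, if_neg (fun hh => hk ((mem_Fst_smul g k P).1 hh))]

lemma un_nonneg (P : 𝒴 × 𝒴) (g : G) : 0 ≤ un G P g := by
  unfold un; split_ifs <;> positivity

lemma un_hasSum (P : 𝒴 × 𝒴) (hf : (Fst G P).Finite) : HasSum (un G P) 1 := by
  classical
  have h1 : HasSum (un G P) (∑ b ∈ hf.toFinset, un G P b) := hasSum_sum_of_ne_finset_zero (by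
    intro b hb
    unfold un
    rw [if_neg]; simpa using hb)
  convert h1
  rw [Finset.sum_congr rfl (g := fun _ => ((Fst G P).ncard : ℝ)⁻¹)]
  · rw [Finset.sum_const, ← Set.ncard_eq_toFinset_card _ hf, nsmul_eq_mul, mul_inv_cancel₀]
    have := (Set.ncard_pos hf).2 (Fst_nonempty (G := G) P)
    positivity
  · intro x hx
    unfold un
    rw [if_pos]; simpa using hx

end

lemma l1dist_le {f g c : G → ℝ} {a b : ℝ} (hf : HasSum f a) (hg : HasSum g a) (hc : HasSum c b)
    (h1 : ∀ x, c x ≤ f x) (h2 : ∀ x, c x ≤ g x) : l1dist f g ≤ 2 * (a - b) := by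
  unfold l1dist
  have hs := (hf.sub hc).add (hg.sub hc)
  have hle : ∀ x, |f x - g x| ≤ (f x - c x) + (g x - c x) := by
    intro x
    rw [abs_le]
    constructor <;> linarith [h1 x, h2 x]
  have hsum : Summable (fun x => |f x - g x|) :=
    Summable.of_nonneg_of_le (fun x => abs_nonneg _) hle hs.summable
  calc ∑' x, |f x - g x| ≤ ∑' x, ((f x - c x) + (g x - c x)) := hsum.tsum_le_tsum hle hs.summable
    _ = _ := by rw [hs.tsum_eq]; ring

lemma sum_tail_le (u : ℕ → ℝ) (hu : ∀ i, 0 ≤ u i) (i0 m n : ℕ) (hn : i0 + m ≤ n) :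
    ∑ k ∈ Finset.range m, u (i0 + k) ≤ ∑ i ∈ Finset.range n, u i := by
  calc ∑ k ∈ Finset.range m, u (i0 + k) ≤ ∑ i ∈ Finset.range (i0 + m), u i := by
        rw [Finset.sum_range_add]
        have := Finset.sum_nonneg (s := Finset.range i0) (fun i _ => hu i)
        linarith
    _ ≤ _ := Finset.sum_le_sum_of_subset_of_nonneg (by
        intro i hi; simp only [Finset.mem_range] at *; omega) (fun i _ _ => hu i)

/-- the averaged measures -/
def pn [MulAction G 𝒴] {y0 : 𝒴} (h : PSG G D θ K y0) (n : ℕ) (o : G)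
    (ξ : Bdry (wdist (gS G D K y0))) (g : G) : ℝ :=
  (n : ℝ)⁻¹ * ∑ i ∈ Finset.range n, un G (vi h o ξ i, vi h o ξ (i+2)) g

namespace PSG
variable [MulAction G 𝒴] {y0 : 𝒴} (h : PSG G D θ K y0)

lemma fst_fin {N : ℕ} (hFT : ∀ A B A' B' V, V ∈ Ys D K A B →
    {g : G | g • A = A' ∧ g • B = B'}.Finite ∧ {g : G | g • A = A' ∧ g • B = B'}.ncard ≤ N)
    (o : G) (ξ : Bdry (wdist (gS G D K y0))) (i : ℕ) :
    (Fst G (vi h o ξ i, vi h o ξ (i+2))).Finite := by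
  set P := (vi h o ξ i, vi h o ξ (i+2)) with hP
  obtain ⟨k, hk⟩ := Fst_nonempty (G := G) P
  have hk' : k • orep G P = P := hk
  have hV := h.vi_between o ξ i
  have e1 : k • (orep G P).1 = vi h o ξ i := by
    have := congrArg Prod.fst hk'; simpa using this
  have e2 : k • (orep G P).2 = vi h o ξ (i+2) := by
    have := congrArg Prod.snd hk'; simpa using this
  rw [← e1, ← e2, ← smul_inv_smul k (vi h o ξ (i+1)), h.Ys_smul] at hV
  refine ((hFT _ _ (vi h o ξ i) (vi h o ξ (i+2)) _ hV).1).subset ?_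
  intro g hg
  have hg' : g • orep G P = P := hg
  exact ⟨by have := congrArg Prod.fst hg'; simpa using this,
    by have := congrArg Prod.snd hg'; simpa using this⟩

lemma topAmenable (h : PSG G D θ K y0) {N : ℕ} (hFT : ∀ A B A' B' V, V ∈ Ys D K A B →
    {g : G | g • A = A' ∧ g • B = B'}.Finite ∧ {g : G | g • A = A' ∧ g • B = B'}.ncard ≤ N) :
    TopAmenable (wdist (gS G D K y0)) := by
  classical
  have hg := h.geoMet
  intro F _ _ ε hε
  obtain ⟨c, hc⟩ : ∃ c : ℕ, ∀ g ∈ F, wdist (gS G D K y0) (g⁻¹) 1 ≤ c := by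
    obtain ⟨c, hc⟩ := exists_nat_ge (∑ g ∈ F, wdist (gS G D K y0) (g⁻¹) 1)
    refine ⟨c, fun g hgF => le_trans ?_ hc⟩
    exact Finset.single_le_sum (f := fun g => wdist (gS G D K y0) (g⁻¹) 1)
      (fun i _ => hg.nonneg _ _) hgF
  obtain ⟨n, hn⟩ := exists_nat_gt (max (4 * c + 1) (8 * c / ε) : ℝ)
  have hn1 : 4 * c + 1 ≤ n := by
    have := (le_max_left _ _).trans hn.le
    exact_mod_cast this
  have hn0 : (0 : ℝ) < n := by
    have : 0 < n := by omega
    exact_mod_cast this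
  have hn2 : 8 * c < ε * n := by
    have := (le_max_right _ _).trans_lt hn
    rw [div_lt_iff₀ hε] at this
    linarith
  have hsum : ∀ o ξ, HasSum (pn h n o ξ) 1 := by
    intro o ξ
    have h1 := (hasSum_sum (s := Finset.range n) (fun i _ =>
      un_hasSum (G := G) (vi h o ξ i, vi h o ξ (i+2)) (h.fst_fin hFT o ξ i))).mul_left (n : ℝ)⁻¹
    simp only [Finset.sum_const, Finset.card_range, nsmul_eq_mul, mul_one] at h1
    rw [inv_mul_cancel₀ hn0.ne'] at h1
    exact h1
  refine ⟨pn h n 1, fun ξ => ⟨fun g => ?_, (hsum 1 ξ).tsum_eq⟩, ?_, ?_⟩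
  · unfold pn
    exact mul_nonneg (by positivity) (Finset.sum_nonneg (fun i _ => un_nonneg _ _))
  · intro ξ ε' hε'
    refine ⟨{η | (((n + 2 : ℕ) + 5 : ℝ) : EReal) < bgp (wdist (gS G D K y0)) 1 ξ η}, ?_,
      bgp_self 1 ξ _, ?_⟩
    · exact TopologicalSpace.isOpen_generateFrom_of_mem ⟨ξ, 1, _, rfl⟩
    · intro η hη
      have hl := h.vi_local 1 ξ η (n+2) hη
      have : pn h n 1 η = pn h n 1 ξ := by
        funext g
        unfold pn
        congr 1
        apply Finset.sum_congr rfl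
        intro i hi
        rw [Finset.mem_range] at hi
        rw [hl i (by omega), hl (i+2) (by omega)]
      rw [this]
      simpa [l1dist] using hε'
  · intro g hgF ξ _ η hb
    have e1 : pn h n 1 η = fun k => pn h n g⁻¹ ξ (g⁻¹ * k) := by
      funext k
      unfold pn
      congr 1
      apply Finset.sum_congr rfl
      intro i _
      rw [h.vi_equiv g 1 ξ η hb, h.vi_equiv g 1 ξ η hb, mul_one, ← un_smul]
      rfl
    have e2 : l1dist (pn h n 1 η) (fun k => pn h n 1 ξ (g⁻¹ * k)) =
        l1dist (pn h n g⁻¹ ξ) (pn h n 1 ξ) := by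
      rw [e1]
      unfold l1dist
      exact (Equiv.mulLeft g⁻¹).tsum_eq (fun k => |pn h n g⁻¹ ξ k - pn h n 1 ξ k|)
    rw [e2]
    obtain ⟨j0, hj0, htail⟩ := h.vi_tail g⁻¹ 1 ξ c (hc g hgF)
    set m := n - 4 * c with hm
    set com : G → ℝ := fun k => (n : ℝ)⁻¹ * ∑ i ∈ Finset.range m,
      un G (vi h g⁻¹ ξ (2 * c + i), vi h g⁻¹ ξ (2 * c + i + 2)) k with hcom
    have hcs : HasSum com ((n : ℝ)⁻¹ * m) := by
      have h1 := (hasSum_sum (s := Finset.range m) (fun i _ =>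
        un_hasSum (G := G) (vi h g⁻¹ ξ (2 * c + i), vi h g⁻¹ ξ (2 * c + i+2))
          (h.fst_fin hFT g⁻¹ ξ (2 * c + i)))).mul_left (n : ℝ)⁻¹
      simp only [Finset.sum_const, Finset.card_range, nsmul_eq_mul, mul_one] at h1
      exact h1
    have hle := l1dist_le (hsum g⁻¹ ξ) (hsum 1 ξ) hcs (by
      intro k
      simp only [hcom, pn]
      apply mul_le_mul_of_nonneg_left _ (by positivity)
      exact sum_tail_le (fun i => un G (vi h g⁻¹ ξ i, vi h g⁻¹ ξ (i+2)) k) (fun i => un_nonneg _ _)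
        (2 * c) m n (by omega)) (by
      intro k
      simp only [hcom, pn]
      apply mul_le_mul_of_nonneg_left _ (by positivity)
      refine le_trans (le_of_eq ?_) (sum_tail_le (fun i => un G (vi h 1 ξ i, vi h 1 ξ (i+2)) k)
        (fun i => un_nonneg _ _) j0 m n (by omega))
      apply Finset.sum_congr rfl
      intro i _
      rw [htail i, add_assoc (2 * c) i 2, htail (i+2)]
      rfl)
    refine hle.trans_lt ?_
    have hmr : (m : ℝ) = n - 4 * c := by
      rw [hm, Nat.cast_sub (by omega)]; push_cast; ring
    rw [hmr]
    have : 2 * (1 - (n : ℝ)⁻¹ * (n - 4 * c)) = 8 * c / n := by field_simp; ring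
    rw [this, div_lt_iff₀ hn0]
    exact hn2

end PSG

/-- Interface theorem: weak projections with enough structure give the conclusion. -/
theorem main_of_weak [MulAction G 𝒴] {y0 : 𝒴} (hw : WeakProj D θ)
    (hinv : ∀ (g : G) Y X Z, D (g • Y) (g • X) (g • Z) = D Y X Z)
    (htr : ∀ V : 𝒴, ∃ v : G, v • y0 = V)
    (hFT : ∃ (K0 : ℝ) (N : ℕ), 0 < N ∧ ∀ A B A' B' V, V ≠ A → V ≠ B → K0 < D V A B →
      {g : G | g • A = A' ∧ g • B = B'}.Finite ∧ {g : G | g • A = A' ∧ g • B = B'}.ncard ≤ N)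
    (hNE : ∀ K : ℝ, ∃ (Y1 : 𝒴) (a b : G), Y1 ≠ y0 ∧ a • y0 = y0 ∧ b • Y1 = Y1 ∧
      K < D y0 Y1 (a • Y1) ∧ K < D y0 Y1 (a • a • Y1) ∧ K < D Y1 y0 (b • y0)) :
    ∃ S : Set G, Subgroup.closure S = ⊤ ∧ IsHyperbolic (wdist S) ∧
      (∃ a b c : Bdry (wdist S), a ≠ b ∧ a ≠ c ∧ b ≠ c) ∧ AcylDist (wdist S) ∧
      TopAmenable (wdist S) := by
  obtain ⟨K0, N, hN, hFT⟩ := hFT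
  set K := max (2 * (8 * θ)) (K0 + 4 * θ) with hK
  have h : PSG G (sD D θ) (8 * θ) K y0 :=
    { hw.strong with
      hK := le_max_left _ _
      inv := fun g Y X Z => sD_inv hinv g Y X Z
      trans := htr }
  have hFT' : ∀ A B A' B' V, V ∈ Ys (sD D θ) K A B →
    {g : G | g • A = A' ∧ g • B = B'}.Finite ∧ {g : G | g • A = A' ∧ g • B = B'}.ncard ≤ N := by
    rintro A B A' B' V ⟨h1, h2, h3⟩
    apply hFT A B A' B' V h1 h2
    have := hw.sD_le (Ne.symm h1) (Ne.symm h2)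
    linarith [le_max_right (2 * (8 * θ)) (K0 + 4 * θ)]
  obtain ⟨Y1, a, b, n1, n2, n3, n4, n5, n6⟩ := hNE K
  have hne : ∀ k : G, k • y0 = y0 → k • Y1 ≠ y0 := by
    intro k hk e
    rw [← hk] at e
    exact n1 (MulAction.injective k e)
  refine ⟨gS G (sD D θ) K y0, h.closure_gS, ⟨8, by norm_num, h.hyp⟩,
    h.three_points n1 n2 n3 ?_ ?_ ?_, h.acyl hN hFT', h.topAmenable hFT'⟩
  · exact n4.trans_le (hw.le_sD n1 (hne a n2))
  · refine n5.trans_le (hw.le_sD n1 ?_)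
    rw [← mul_smul]; apply hne; rw [mul_smul, n2, n2]
  · refine n6.trans_le (hw.le_sD (Ne.symm n1) ?_)
    intro e
    rw [← n3] at e
    exact n1 (MulAction.injective b e).symm

end

section
variable {α : Type*} {G : Type*} [Group G]

/-! ### P4: loxodromic elements -/

/-- hyperbolic geodesic left-invariant metric -/
structure HG (d : G → G → ℝ) (δ : ℝ) : Prop extends GeoMet d where
  hyp : HyperbolicWith d δ
  pos : 0 ≤ δ

namespace HG
variable {d : G → G → ℝ} {δ : ℝ}

lemma nn (h : HG d δ) (x y : G) : 0 ≤ d x y := h.toGeoMet.nonneg x y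

lemma four (h : HG d δ) (x y z w : G) :
    d x z + d y w ≤ d x y + d z w + 2 * δ ∨ d x z + d y w ≤ d y z + d x w + 2 * δ :=
  fourpt h.hyp x y z w

lemma to_one (h : HG d δ) (x y : G) : d x y = d 1 (x⁻¹ * y) := by
  rw [← h.inv x⁻¹ x y, inv_mul_cancel]

lemma one_inv (h : HG d δ) (x : G) : d 1 x⁻¹ = d 1 x := by
  rw [← h.inv x 1 x⁻¹, mul_inv_cancel, mul_one, h.symm]

lemma lox_aux (h : HG d δ) {D0 : ℝ} (hf : ∀ f, d 1 (f * f) < d 1 f + D0) (g x z : G)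
    (hz : d 1 z + d z x = d 1 x) (h1 : 2 * d 1 g + 4 * δ < d 1 z)
    (h2 : 2 * d 1 z + 5 * d 1 g + D0 + 4 * δ < d 1 x) :
    d z (g * z) ≤ 14 * δ + D0 := by
  have p := h.pos
  have n1 := h.nn 1 g
  have n2 := h.nn 1 z
  -- step 1
  have a1 : d (g * x) x⁻¹ ≤ d 1 (g * x) + D0 + d 1 g := by
    have e1 := h.tri (g * x) (g * x)⁻¹ x⁻¹
    have e2 : d (g * x) (g * x)⁻¹ = d 1 ((g * x) * (g * x)) := by
      rw [h.symm, h.to_one, inv_inv]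
    have e3 : d (g * x)⁻¹ x⁻¹ = d 1 g := by
      rw [h.to_one, ← h.inv 1 1]; simp
    have := hf (g * x)
    linarith
  have a2 : d x⁻¹ x < d 1 x + D0 := by
    rw [h.to_one, inv_inv]; exact hf x
  have a3 : d 1 (g * x) ≤ d 1 g + d 1 x := by
    have := h.tri 1 g (g * x)
    have e := h.inv g 1 x
    rw [mul_one] at e; linarith
  have a3' : d 1 x ≤ d 1 (g * x) + d 1 g := by
    have := h.tri g 1 (g * x)
    have e := h.inv g 1 x
    rw [mul_one] at e; rw [h.symm g 1] at this; linarith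
  have a4 : d (g * x) x ≤ d 1 x + 2 * d 1 g + D0 + 2 * δ := by
    have := h.four (g * x) x⁻¹ x 1
    rw [h.symm x⁻¹ 1, h.one_inv, h.symm x 1, h.symm (g * x) 1] at this
    rcases this with this | this <;> linarith
  -- step 2
  have b0 : d g (g * z) = d 1 z := by have e := h.inv g 1 z; rwa [mul_one] at e
  have b0' : d g (g * x) = d 1 x := by have e := h.inv g 1 x; rwa [mul_one] at e
  have b1 : d 1 (g * z) ≤ d 1 g + d 1 z := by have := h.tri 1 g (g * z); linarith
  have b1' : d 1 z ≤ d 1 (g * z) + d 1 g := by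
    have := h.tri g 1 (g * z); rw [h.symm g 1] at this; linarith
  have b2 : d (g * z) (g * x) = d z x := h.inv _ _ _
  have c1 : d 1 (g * z) + d z x ≤ d 1 (g * x) + 2 * δ := by
    have := h.four g 1 (g * x) (g * z)
    rw [b0, b0', h.symm g 1, h.symm (g * x) (g * z), b2] at this
    rcases this with this | this <;> linarith
  have c2 : d 1 (g * z) + d (g * z) x ≤ d 1 x + 4 * δ := by
    have := h.four 1 x (g * x) (g * z)
    rw [h.symm (g * x) (g * z), b2, h.symm x (g * z), h.symm x (g * x)] at this
    have t := h.tri 1 (g * z) x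
    rcases this with this | this <;> linarith
  have c3 : d z (g * z) ≤ |d 1 (g * z) - d 1 z| + 6 * δ := by
    have := h.four 1 z x (g * z)
    rw [h.symm x (g * z)] at this
    rcases this with this | this
    · have := neg_abs_le (d 1 (g * z) - d 1 z); linarith
    · have := le_abs_self (d 1 (g * z) - d 1 z); linarith
  have d1 : |d 1 (g * z) - d 1 z| ≤ d 1 g := abs_le.2 ⟨by linarith, by linarith⟩
  have d2 : d (g * z) g⁻¹ = d 1 (g * (g * z)) := by
    rw [h.symm, h.to_one, inv_inv]
  have d3 : d z g⁻¹ = d 1 (g * z) := by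
    rw [h.symm, h.to_one, inv_inv]
  have d4 : d 1 (g * z) ≤ d 1 (g * (g * z)) + d 1 g := by
    have := h.tri g 1 (g * (g * z)); rw [h.symm g 1] at this
    have e := h.inv g 1 (g * z); rw [mul_one] at e; linarith
  have d5 : d 1 (g * (g * z)) + d 1 z ≤ 2 * d 1 (g * z) + 2 * δ := by
    have := h.four (g * z) z g⁻¹ 1
    rw [d2, d3, h.symm z 1, h.symm (g * z) z, h.symm g⁻¹ 1, h.one_inv, h.symm (g * z) 1] at this
    rcases this with this | this <;> linarith
  have d6 : 2 * d 1 (g * z) ≤ d 1 (g * (g * z)) + d 1 z + 2 * δ := by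
    have := h.four (g * z) z 1 g⁻¹
    rw [d2, d3, h.symm z 1, h.symm (g * z) z, h.one_inv, h.symm (g * z) 1] at this
    rcases this with this | this <;> linarith
  have e1 : d 1 (z⁻¹ * (g * z)) = d z (g * z) := by rw [h.to_one z]
  have e2 : d 1 ((z⁻¹ * (g * z)) * (z⁻¹ * (g * z))) = d z (g * (g * z)) := by
    rw [h.to_one z]; congr 1; group
  have e3 := hf (z⁻¹ * (g * z))
  rw [e1, e2] at e3
  have e4 := h.tri 1 z (g * (g * z))
  have e5 := h.tri 1 (g * (g * z)) z
  rw [h.symm (g * (g * z)) z] at e5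
  rcases abs_cases (d 1 (g * z) - d 1 z) with ⟨q, _⟩ | ⟨q, _⟩ <;> rw [q] at c3 <;> linarith

lemma exists_lox (h : HG d δ) (hac : AcylDist d) (hub : ∀ M : ℝ, ∃ x, M ≤ d 1 x) :
    ∃ f, d 1 f + (4 * δ + 1) ≤ d 1 (f * f) := by
  by_contra hcon
  push Not at hcon
  have p := h.pos
  obtain ⟨R, hR, N, hN, hac⟩ := hac (14 * δ + (4 * δ + 1)) (by linarith)
  have hinf : Infinite G := by
    by_contra hfin
    rw [not_infinite_iff_finite] at hfin
    obtain ⟨M, hM⟩ := (Set.toFinite (Set.range (fun x => d 1 x))).bddAbove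
    obtain ⟨x, hx⟩ := hub (M + 1)
    have := hM ⟨x, rfl⟩
    simp only at this
    linarith
  obtain ⟨F, hF⟩ := Infinite.exists_subset_card_eq G (N + 1)
  obtain ⟨M, hM⟩ := exists_nat_ge (∑ g ∈ F, d 1 g)
  have hM' : ∀ g ∈ F, d 1 g ≤ M := fun g hg =>
    (Finset.single_le_sum (f := fun g => d 1 g) (fun i _ => h.nn 1 i) hg).trans hM
  obtain ⟨s1, hs1⟩ := exists_nat_gt (2 * (M : ℝ) + 4 * δ)
  obtain ⟨r, hr⟩ := exists_nat_gt R
  obtain ⟨x, hx⟩ := hub (2 * ((s1 + r : ℕ) : ℝ) + 5 * M + (4 * δ + 1) + 4 * δ + 1)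
  have M0 : (0 : ℝ) ≤ M := by positivity
  have s0 : (0 : ℝ) ≤ s1 := by positivity
  push_cast at hx
  obtain ⟨z1, hz1, hz1'⟩ := h.geo 1 x s1 (by linarith)
  obtain ⟨z2, hz2, hz2'⟩ := h.geo 1 x (s1 + r : ℕ) (by push_cast; linarith)
  push_cast at hz2 hz2'
  have ht := h.tri 1 z1 z2
  obtain ⟨q1, q2⟩ := hac z1 z2 (by linarith)
  have hsub : (F : Set G) ⊆ {g : G | d z1 (g * z1) ≤ 14 * δ + (4 * δ + 1) ∧
      d z2 (g * z2) ≤ 14 * δ + (4 * δ + 1)} := by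
    intro g hg
    have hg' := hM' g hg
    exact ⟨h.lox_aux hcon g x z1 (by linarith) (by linarith) (by linarith),
      h.lox_aux hcon g x z2 (by linarith) (by linarith) (by linarith)⟩
  have := Set.ncard_le_ncard hsub q1
  rw [Set.ncard_coe_finset, hF] at this
  omega

end HG

end

section
variable {α : Type*} {G : Type*} [Group G]

/-! ### P4b: the axis of a loxodromic element -/

/-- `f` is loxodromic, with explicit constants -/
structure Ax (d : G → G → ℝ) (δ : ℝ) (f : G) (κ : ℝ) : Prop extends HG d δ where
  grow : ∀ n : ℕ, d 1 (f ^ n) + 1 ≤ d 1 (f ^ (n + 1))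
  qg : ∀ i j : ℕ, d 1 (f ^ i) + d 1 (f ^ j) ≤ d 1 (f ^ (i + j)) + κ
  κpos : 0 ≤ κ

lemma HG.pow_dist {d : G → G → ℝ} {δ : ℝ} (h : HG d δ) (f : G) (i n : ℕ) :
    d (f ^ i) (f ^ (i + n)) = d 1 (f ^ n) := by
  rw [pow_add]; nth_rewrite 1 [← mul_one (f ^ i)]; exact h.inv _ _ _

lemma HG.exists_ax {d : G → G → ℝ} {δ : ℝ} (h : HG d δ) {f : G}
    (hf : d 1 f + (4 * δ + 1) ≤ d 1 (f * f)) : ∃ κ, Ax d δ f κ := by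
  have p := h.pos
  have hb : d 1 (f * f) ≤ 2 * d 1 f := by
    have := h.tri 1 f (f * f)
    have e := h.inv f 1 f
    rw [mul_one] at e; linarith
  have e2 : f ^ 2 = f * f := pow_two f
  have key : ∀ n : ℕ, d 1 (f ^ n) + (d 1 (f * f) - d 1 f - 2 * δ) ≤ d 1 (f ^ (n + 1)) := by
    intro n
    induction n with
    | zero => simp only [pow_zero, zero_add, pow_one, h.self]; linarith
    | succ n ih =>
      have := h.four 1 (f ^ 1) (f ^ 2) (f ^ (n + 2))
      rw [show n + 2 = 1 + (n + 1) by ring, h.pow_dist f 1 (n+1), show 1 + (n + 1) = 2 + n by ring,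
        h.pow_dist f 2 n, show 2 = 1 + 1 by rfl, h.pow_dist f 1 1] at this
      simp only [pow_one] at this
      rw [show 1 + 1 = 2 by rfl, e2, show 2 + n = n + 1 + 1 by ring] at this
      rcases this with this | this <;> linarith
  have key2 : ∀ i j : ℕ, d 1 (f ^ i) + d 1 (f ^ (j+1)) ≤ d 1 (f ^ (i + (j+1))) +
      (2 * d 1 f - d 1 (f * f) + 4 * δ) := by
    intro i j
    have := h.four 1 (f ^ i) (f ^ (i + 1)) (f ^ (i + (j + 1)))
    have k1 := key i
    have k2 := key j
    rw [h.pow_dist f i (j + 1), h.pow_dist f i 1, show i + (j + 1) = (i + 1) + j by ring,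
      h.pow_dist f (i+1) j, pow_one] at this
    rw [show i + (j + 1) = (i + 1) + j by ring]
    rcases this with this | this <;> linarith
  refine ⟨2 * d 1 f - d 1 (f * f) + 4 * δ, ⟨h, fun n => ?_, fun i j => ?_, by linarith⟩⟩
  · have := key n; linarith
  · rcases j with _ | j
    · simp only [pow_zero, h.self, add_zero]; linarith
    · exact key2 i j

namespace Ax
variable {d : G → G → ℝ} {δ κ : ℝ} {f : G}

lemma mono (h : Ax d δ f κ) {i j : ℕ} (hij : i ≤ j) : d 1 (f ^ i) ≤ d 1 (f ^ j) := by
  induction hij with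
  | refl => exact le_rfl
  | step _ ih => have := h.grow ‹_›; simp only [Nat.succ_eq_add_one]; linarith

lemma lin (h : Ax d δ f κ) (n : ℕ) : (n : ℝ) ≤ d 1 (f ^ n) := by
  induction n with
  | zero => simpa using h.nn _ _
  | succ n ih => have := h.grow n; push_cast; linarith

lemma near0 (h : Ax d δ f κ) (n : ℕ) (z : G) (c : ℝ) (hz : d z 1 + d z (f ^ n) ≤ d 1 (f ^ n) + c) :
    ∃ k ≤ n, d z (f ^ k) ≤ max (κ + d 1 f) c + 2 * δ := by
  classical
  have p := h.pos
  have m1 := le_max_left (κ + d 1 f) c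
  have m2 := le_max_right (κ + d 1 f) c
  let k := Nat.findGreatest (fun k => d 1 (f ^ k) ≤ d z 1) n
  have hk : k ≤ n := Nat.findGreatest_le n
  have hk1 : d 1 (f ^ k) ≤ d z 1 := Nat.findGreatest_spec (P := fun k => d 1 (f ^ k) ≤ d z 1)
    (Nat.zero_le n) (by simp only [pow_zero, h.self]; exact h.nn _ _)
  rcases hk.eq_or_lt with e | hlt
  · refine ⟨n, le_rfl, ?_⟩
    rw [e] at hk1; linarith
  · refine ⟨k, hk, ?_⟩
    have hk2 : ¬ d 1 (f ^ (k + 1)) ≤ d z 1 :=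
      Nat.findGreatest_is_greatest (Nat.lt_succ_self k) hlt
    push Not at hk2
    have t := h.tri 1 (f ^ k) (f ^ (k + 1))
    rw [h.pow_dist f k 1, pow_one] at t
    obtain ⟨j, hj⟩ := Nat.exists_eq_add_of_le hk
    have q := h.qg k j
    have := h.four 1 z (f ^ n) (f ^ k)
    rw [h.symm (f ^ n) (f ^ k), h.symm 1 z] at this
    rw [hj] at this hz
    rw [h.pow_dist f k j] at this
    rcases this with this | this <;> linarith

lemma zdist (h : Ax d δ f κ) (i : ℤ) (n : ℕ) : d (f ^ i) (f ^ (i + n)) = d 1 (f ^ n) := by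
  rw [zpow_add, zpow_natCast]; nth_rewrite 1 [← mul_one (f ^ i)]; exact h.inv _ _ _

lemma near' (h : Ax d δ f κ) {i j : ℤ} (hij : i ≤ j) (z : G) (c : ℝ)
    (hz : d z (f ^ i) + d z (f ^ j) ≤ d (f ^ i) (f ^ j) + c) :
    ∃ k : ℤ, d z (f ^ k) ≤ max (κ + d 1 f) c + 2 * δ := by
  obtain ⟨n, rfl⟩ := Int.le.dest hij
  rw [h.zdist, ← h.inv (f ^ (-i)) z, ← h.inv (f ^ (-i)) z, ← zpow_add, ← zpow_add] at hz
  simp only [neg_add_cancel, zpow_zero, neg_add_cancel_left, zpow_natCast] at hz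
  obtain ⟨k, _, hk⟩ := h.near0 n _ c hz
  refine ⟨i + k, ?_⟩
  rw [← h.inv (f ^ (-i)), ← zpow_add]
  simpa using hk

lemma near (h : Ax d δ f κ) (i j : ℤ) (z : G) (c : ℝ)
    (hz : d z (f ^ i) + d z (f ^ j) ≤ d (f ^ i) (f ^ j) + c) :
    ∃ k : ℤ, d z (f ^ k) ≤ max (κ + d 1 f) c + 2 * δ := by
  rcases le_total i j with hij | hij
  · exact h.near' hij z c hz
  · refine h.near' hij z c ?_
    rw [h.symm (f ^ j) (f ^ i)]; linarith

end Ax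

/-- the elementary closure of `f` -/
def Ef (f : G) : Subgroup G where
  carrier := {g | ∃ m : ℕ, 0 < m ∧ ∃ ε : ℤ, (ε = 1 ∨ ε = -1) ∧ g * f ^ (m : ℤ) * g⁻¹ = f ^ (ε * m)}
  one_mem' := ⟨1, one_pos, 1, Or.inl rfl, by simp⟩
  mul_mem' := by
    rintro g h ⟨m, hm, ε, hε, e⟩ ⟨m', hm', ε', hε', e'⟩
    refine ⟨m * m', Nat.mul_pos hm hm', ε * ε', ?_, ?_⟩
    · rcases hε with rfl | rfl <;> rcases hε' with rfl | rfl <;> simp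
    · have h1 : h * f ^ ((m' : ℤ) * m) * h⁻¹ = f ^ (ε' * m' * m) := by
        rw [zpow_mul, zpow_mul, ← e', conj_zpow]
      have h2 : g * f ^ ((m : ℤ) * (ε' * m')) * g⁻¹ = f ^ (ε * m * (ε' * m')) := by
        rw [zpow_mul, zpow_mul f (ε * m), ← e, conj_zpow]
      calc g * h * f ^ ((m * m' : ℕ) : ℤ) * (g * h)⁻¹
          = g * (h * f ^ ((m' : ℤ) * m) * h⁻¹) * g⁻¹ := by
            push_cast; rw [mul_comm (m : ℤ)]; group
        _ = f ^ (ε * ε' * ((m * m' : ℕ) : ℤ)) := by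
            rw [h1, show ε' * m' * m = (m : ℤ) * (ε' * m') by ring, h2]
            congr 1; push_cast; ring
  inv_mem' := by
    rintro g ⟨m, hm, ε, hε, e⟩
    refine ⟨m, hm, ε, hε, ?_⟩
    have e1 : g * f ^ ((m : ℤ) * ε) * g⁻¹ = f ^ (m : ℤ) := by
      rw [zpow_mul, ← conj_zpow, e, ← zpow_mul]
      congr 1
      rcases hε with rfl | rfl <;> ring
    rw [← e1, mul_comm ε]; group

lemma f_mem_Ef (f : G) : f ∈ Ef f := ⟨1, one_pos, 1, Or.inl rfl, by simp⟩

namespace Ax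
variable {d : G → G → ℝ} {δ κ : ℝ} {f : G}

lemma inv_dist (h : Ax d δ f κ) (M : ℕ) : d (f ^ (-(M : ℤ))) (f ^ (M : ℤ)) = d 1 (f ^ (M + M)) := by
  have := h.zdist (-(M:ℤ)) (M + M)
  rw [← this]; congr 2; push_cast; ring

lemma norm_z (h : Ax d δ f κ) (ε : ℤ) (hε : ε = 1 ∨ ε = -1) (M : ℕ) :
    d 1 (f ^ (ε * M)) = d 1 (f ^ M) := by
  rcases hε with rfl | rfl
  · simp
  · rw [neg_one_mul, zpow_neg, h.one_inv, zpow_natCast]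

/-- elements of the elementary closure are close to the axis -/
lemma E_near (h : Ax d δ f κ) {g : G} (hg : g ∈ Ef f) :
    ∃ k : ℤ, d g (f ^ k) ≤ κ + d 1 f + 6 * δ := by
  obtain ⟨m, hm, ε, hε, e⟩ := hg
  have p := h.pos
  have κp := h.κpos
  obtain ⟨n, hn⟩ := exists_nat_gt (4 * d 1 g + 2 * δ)
  set M := m * n with hM
  have hMn : n ≤ M := Nat.le_mul_of_pos_left n hm
  have hL : 4 * d 1 g + 2 * δ < d 1 (f ^ (M + M)) := by
    refine hn.trans_le ((h.lin n).trans (h.mono (by omega)))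
  have n1 := h.nn 1 g
  have n2 := h.nn 1 (f ^ M)
  set P := f ^ (M : ℤ) with hP
  set Q := f ^ (ε * M) with hQ
  have e1 : g * P = Q * g := by
    have : g * f ^ ((m : ℤ) * n) * g⁻¹ = f ^ (ε * m * n) := by
      rw [zpow_mul, zpow_mul, ← e, conj_zpow]
    rw [hP, hQ, hM]; push_cast; rw [← mul_assoc ε, ← this]; group
  have e2 : g * P⁻¹ = Q⁻¹ * g := by
    have : P⁻¹ = g⁻¹ * Q⁻¹ * g := by
      rw [inv_eq_iff_eq_inv]; simp only [mul_inv_rev, inv_inv]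
      rw [← e1]; group
    rw [this]; group
  have hd0 : ∀ x, d (x * g) x = d 1 g := fun x => by
    have := h.inv x g 1; rw [mul_one] at this; rw [this, h.symm]
  have a1 : d (g * P) Q = d 1 g := by rw [e1]; exact hd0 _
  have a2 : d (g * P⁻¹) Q⁻¹ = d 1 g := by rw [e2]; exact hd0 _
  have hd1 : ∀ x, d g (g * x) = d 1 x := fun x => by
    have := h.inv g 1 x; rwa [mul_one] at this
  have a3 : d g (g * P) = d 1 (f ^ M) := by rw [hd1, hP, zpow_natCast]
  have a4 : d g (g * P⁻¹) = d 1 (f ^ M) := by rw [hd1, h.one_inv, hP, zpow_natCast]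
  have a5 : d (g * P⁻¹) (g * P) = d 1 (f ^ (M + M)) := by
    rw [h.inv, hP, ← zpow_neg, h.inv_dist]
  have q1 : d 1 Q = d 1 (f ^ M) := h.norm_z ε hε M
  have q2 : d 1 Q⁻¹ = d 1 (f ^ M) := by rw [h.one_inv, q1]
  have q3 : d Q Q⁻¹ = d 1 (f ^ (M + M)) := by
    rw [hQ]
    rcases hε with rfl | rfl
    · rw [one_mul, ← zpow_neg, h.symm, h.inv_dist]
    · rw [neg_one_mul, ← zpow_neg, neg_neg, h.inv_dist]
  have qg := h.qg M M
  have r1 : d Q⁻¹ g + d g (g * P) ≤ d Q⁻¹ (g * P) + κ + 2 * δ := by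
    have := h.four (g * P⁻¹) Q⁻¹ (g * P) g
    rw [a5, a2, h.symm (g * P) g, a3, h.symm (g * P⁻¹) g, a4] at this
    have t := h.tri 1 g Q⁻¹
    rw [h.symm g Q⁻¹] at t
    rcases this with this | this <;> linarith
  have r2 : d Q g + d Q⁻¹ g ≤ d Q Q⁻¹ + κ + 4 * δ := by
    have := h.four (g * P) Q Q⁻¹ g
    rw [a1, h.symm (g * P) g, h.symm (g * P) Q⁻¹] at this
    have t := h.tri 1 g Q
    rw [h.symm g Q] at t
    have t2 := h.tri Q (g * P) Q⁻¹
    rw [h.symm Q (g * P), a1, h.symm (g * P) Q⁻¹] at t2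
    have t3 := h.tri Q⁻¹ 1 g
    rw [h.symm Q⁻¹ 1] at t3
    rcases this with this | this <;> linarith
  obtain ⟨k, hk⟩ := h.near (ε * M) (-(ε * M)) g (κ + 4 * δ) (by
    rw [zpow_neg, h.symm g, h.symm g]; linarith)
  refine ⟨k, hk.trans ?_⟩
  have := h.nn 1 f
  have : max (κ + d 1 f) (κ + 4 * δ) ≤ κ + d 1 f + 4 * δ := max_le (by linarith) (by linarith)
  linarith

/-- quasiconvexity -/
lemma E_qc (h : Ax d δ f κ) {y1 y2 z : G} (h1 : y1 ∈ Ef f) (h2 : y2 ∈ Ef f)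
    (hz : d y1 z + d z y2 = d y1 y2) :
    ∃ y ∈ Ef f, d z y ≤ 4 * (κ + d 1 f + 6 * δ) + 2 * δ := by
  obtain ⟨i, hi⟩ := h.E_near h1
  obtain ⟨j, hj⟩ := h.E_near h2
  have p := h.pos
  have κp := h.κpos
  have n1 := h.nn 1 f
  obtain ⟨k, hk⟩ := h.near i j z (4 * (κ + d 1 f + 6 * δ)) (by
    have t1 := h.tri z y1 (f ^ i)
    have t2 := h.tri z y2 (f ^ j)
    have t3 := h.tri y1 (f ^ i) y2
    have t4 := h.tri (f ^ i) (f ^ j) y2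
    rw [h.symm z y1] at t1
    rw [h.symm (f ^ j) y2] at t4
    linarith)
  refine ⟨f ^ k, Subgroup.zpow_mem _ (f_mem_Ef f) k, hk.trans ?_⟩
  rw [max_eq_right (by linarith)]

end Ax

end

section
variable {α : Type*} {G : Type*} [Group G]

/-! ### P4c: overlap of axes -/

lemma mem_Ef_of {f g φ ψ : G} (hφ : φ = f ∨ φ = f⁻¹) (hψ : ψ = f ∨ ψ = f⁻¹) {m m' : ℕ}
    (hm : m < m') (he : g * ψ ^ m * g⁻¹ * (φ ^ m)⁻¹ = g * ψ ^ m' * g⁻¹ * (φ ^ m')⁻¹) :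
    g ∈ Ef f := by
  obtain ⟨n, rfl⟩ := Nat.exists_eq_add_of_lt hm
  have e1 : g * ψ ^ (n + 1) * g⁻¹ = φ ^ (n + 1) := by
    rw [show m + n + 1 = m + (n + 1) by ring, pow_add _ m, pow_add _ m] at he
    have h2 : φ ^ (n + 1) = (g * ψ ^ m * g⁻¹)⁻¹ * (g * (ψ ^ m * ψ ^ (n + 1)) * g⁻¹ *
      (φ ^ m * φ ^ (n + 1))⁻¹) * (φ ^ m * φ ^ (n + 1)) := by
      rw [← he]; group
    rw [h2]; group
  refine ⟨n + 1, Nat.succ_pos n, ?_⟩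
  rw [zpow_natCast]
  rcases hφ with rfl | rfl <;> rcases hψ with rfl | rfl
  · exact ⟨1, Or.inl rfl, by rw [e1, one_mul, zpow_natCast]⟩
  · refine ⟨-1, Or.inr rfl, ?_⟩
    rw [neg_one_mul, zpow_neg, zpow_natCast]
    have := congrArg (·⁻¹) e1
    simp only [inv_pow, mul_inv_rev, inv_inv] at this
    rw [mul_assoc]; exact this
  · refine ⟨-1, Or.inr rfl, ?_⟩
    rw [neg_one_mul, zpow_neg, zpow_natCast, e1, inv_pow]
  · refine ⟨1, Or.inl rfl, ?_⟩
    rw [one_mul, zpow_natCast]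
    have := congrArg (·⁻¹) e1
    simp only [inv_pow, mul_inv_rev, inv_inv] at this
    rw [mul_assoc]; exact this

lemma zpow_sgn (f : G) (J : ℤ) : ∃ (φ : G) (n : ℕ), (φ = f ∨ φ = f⁻¹) ∧ f ^ J = φ ^ n := by
  rcases Int.eq_nat_or_neg J with ⟨n, rfl | rfl⟩
  · exact ⟨f, n, Or.inl rfl, zpow_natCast _ _⟩
  · exact ⟨f⁻¹, n, Or.inr rfl, by rw [zpow_neg, zpow_natCast, inv_pow]⟩

namespace Ax
variable {d : G → G → ℝ} {δ κ : ℝ} {f : G}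

lemma sgn_norm (h : Ax d δ f κ) {φ : G} (hφ : φ = f ∨ φ = f⁻¹) (m : ℕ) :
    d 1 (φ ^ m) = d 1 (f ^ m) := by
  rcases hφ with rfl | rfl
  · rfl
  · rw [inv_pow, h.one_inv]

lemma fellow (h : Ax d δ f κ) {g φ ψ : G} (hφ : φ = f ∨ φ = f⁻¹) (hψ : ψ = f ∨ ψ = f⁻¹)
    {n n' m : ℕ} (hn : m ≤ n) (hn' : m ≤ n') {c1 c2 : ℝ} (h1 : d 1 g ≤ c1)
    (h2 : d (φ ^ n) (g * ψ ^ n') ≤ c2) :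
    d (φ ^ m) (g * ψ ^ m) ≤ κ + 2 * c2 + c1 + 2 * δ := by
  have p := h.pos
  have n1 := h.nn 1 g
  have n2 := h.nn (φ ^ n) (g * ψ ^ n')
  have κp := h.κpos
  obtain ⟨k, rfl⟩ := Nat.exists_eq_add_of_le hn
  obtain ⟨k', rfl⟩ := Nat.exists_eq_add_of_le hn'
  have hg : ∀ x, d g (g * x) = d 1 x := fun x => by
    have := h.inv g 1 x; rwa [mul_one] at this
  have a1 := h.pow_dist φ m k
  have a2 := h.pow_dist ψ m k'
  rw [← h.inv g] at a2
  have b1 := h.sgn_norm hφ m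
  have b2 := h.sgn_norm hφ k
  have b3 := h.sgn_norm hφ (m + k)
  have b4 := h.sgn_norm hψ m
  have b5 := h.sgn_norm hψ k'
  have b6 := h.sgn_norm hψ (m + k')
  have q1 := h.qg m k
  have q2 := h.qg m k'
  have t1 := h.tri 1 g (g * ψ ^ m)
  have t2 := h.tri (φ ^ (m + k)) (g * ψ ^ (m + k')) (g * ψ ^ m)
  have t3 := h.tri g 1 (g * ψ ^ (m + k'))
  have t4 := h.tri 1 (φ ^ (m + k)) (g * ψ ^ (m + k'))
  rw [hg] at t1 t3
  rw [h.symm (g * ψ ^ (m + k')) (g * ψ ^ m)] at t2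
  rw [h.symm g 1] at t3
  rcases h.four 1 (φ ^ m) (φ ^ (m + k)) (g * ψ ^ m) with this | this <;> linarith

/-- long overlap of two translates of the elementary closure forces equality -/
lemma overlap (h : Ax d δ f κ) (hac : AcylDist d) (c1 : ℝ) (hc1 : 0 ≤ c1) :
    ∃ B : ℝ, ∀ p q p' q' : G, p⁻¹ * q ∈ Ef f → p'⁻¹ * q' ∈ Ef f → d p p' ≤ c1 → d q q' ≤ c1 →
      B ≤ d p q → p⁻¹ * p' ∈ Ef f := by
  have p0 := h.pos
  have κp := h.κpos
  have n1 := h.nn 1 f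
  set B0 := κ + d 1 f + 6 * δ with hB0
  set c2 := c1 + 2 * B0 with hc2
  set c3 := κ + 2 * c2 + c1 + 2 * δ with hc3
  have hc30 : 0 ≤ c3 := by rw [hc3, hc2, hB0]; linarith
  obtain ⟨R, hR, N, hN, hac⟩ := hac (2 * c3 + 1) (by linarith)
  obtain ⟨r, hr⟩ := exists_nat_gt R
  set T := N + r with hT
  refine ⟨d 1 (f ^ T) + B0 + c1 + c2 + 1, ?_⟩
  intro p q p' q' hq hq' hpp hqq hB
  obtain ⟨J, hJ⟩ := h.E_near hq
  obtain ⟨J', hJ'⟩ := h.E_near hq'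
  obtain ⟨φ, n, hφ, e⟩ := zpow_sgn f J
  obtain ⟨ψ, n', hψ, e'⟩ := zpow_sgn f J'
  rw [e] at hJ
  rw [e'] at hJ'
  set g := p⁻¹ * p' with hg
  have g1 : d 1 g ≤ c1 := by rw [hg, ← h.to_one]; exact hpp
  have g2 : d (φ ^ n) (g * ψ ^ n') ≤ c2 := by
    have t1 := h.tri (φ ^ n) (p⁻¹ * q) (g * ψ ^ n')
    have t2 := h.tri (p⁻¹ * q) (p⁻¹ * q') (g * ψ ^ n')
    rw [h.inv] at t2
    have e3 : d (p⁻¹ * q') (g * ψ ^ n') = d (p'⁻¹ * q') (ψ ^ n') := by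
      rw [← h.inv g (p'⁻¹ * q'), hg]; congr 1; group
    rw [h.symm (φ ^ n) (p⁻¹ * q)] at t1
    linarith
  have L1 : d 1 (f ^ T) < d 1 (f ^ n) := by
    rw [← h.sgn_norm hφ n]
    have t := h.tri 1 (φ ^ n) (p⁻¹ * q)
    rw [← h.to_one, h.symm (φ ^ n)] at t
    have : 0 ≤ c2 := by linarith [h.nn (φ ^ n) (g * ψ ^ n')]
    linarith
  have L2 : d 1 (f ^ T) < d 1 (f ^ n') := by
    rw [← h.sgn_norm hψ n']
    have t := h.tri 1 (φ ^ n) (p⁻¹ * q)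
    rw [← h.to_one, h.symm (φ ^ n)] at t
    have t2 := h.tri 1 (g * ψ ^ n') (φ ^ n)
    rw [h.symm (g * ψ ^ n')] at t2
    have t3 := h.tri 1 g (g * ψ ^ n')
    have t4 := h.inv g 1 (ψ ^ n')
    rw [mul_one] at t4
    linarith
  have hn : T ≤ n := by
    by_contra hc; push Not at hc
    have := h.mono hc.le; linarith
  have hn' : T ≤ n' := by
    by_contra hc; push Not at hc
    have := h.mono hc.le; linarith
  have fel : ∀ m ≤ T, d (φ ^ m) (g * ψ ^ m) ≤ c3 := fun m hm =>
    h.fellow hφ hψ (hm.trans hn) (hm.trans hn') g1 g2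
  let k : ℕ → G := fun m => g * ψ ^ m * g⁻¹ * (φ ^ m)⁻¹
  have hk : ∀ m ≤ N, ∀ M ≤ T, m ≤ M → d (φ ^ M) (k m * φ ^ M) ≤ 2 * c3 + 1 := by
    intro m hm M hM hmM
    obtain ⟨j, rfl⟩ := Nat.exists_eq_add_of_le hmM
    have t := h.tri (φ ^ (m + j)) (g * ψ ^ (m + j)) (k m * φ ^ (m + j))
    have e1 : k m * φ ^ (m + j) = g * ψ ^ m * g⁻¹ * φ ^ j := by
      simp only [k]; rw [pow_add]; group
    have e2 : d (g * ψ ^ (m + j)) (g * ψ ^ m * g⁻¹ * φ ^ j) = d (φ ^ j) (g * ψ ^ j) := by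
      rw [← h.inv (g * ψ ^ m * g⁻¹) (φ ^ j), h.symm]
      congr 1
      rw [pow_add]; group
    rw [e1, e2] at t
    rw [e1]
    have f1 := fel (m + j) hM
    have f2 := fel j (by omega)
    linarith
  obtain ⟨q1, q2⟩ := hac (φ ^ N) (φ ^ T) (by
    rw [hT, h.pow_dist, h.sgn_norm hφ]; exact hr.le.trans (h.lin r))
  by_contra hcon
  have hinj : Set.InjOn k (Finset.range (N + 1) : Set ℕ) := by
    intro m _ m' _ he
    by_contra hne
    rcases lt_or_gt_of_ne hne with hlt | hlt
    · exact hcon (mem_Ef_of hφ hψ hlt he)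
    · exact hcon (mem_Ef_of hφ hψ hlt he.symm)
  have hsub : k '' (Finset.range (N + 1) : Set ℕ) ⊆ {g : G | d (φ ^ N) (g * φ ^ N) ≤ 2 * c3 + 1 ∧
      d (φ ^ T) (g * φ ^ T) ≤ 2 * c3 + 1} := by
    rintro _ ⟨m, hm, rfl⟩
    simp only [Finset.coe_range, Set.mem_Iio] at hm
    exact ⟨hk m (by omega) N (by omega) (by omega), hk m (by omega) T le_rfl (by omega)⟩
  have := Set.ncard_le_ncard hsub q1
  rw [Set.InjOn.ncard_image hinj, Set.ncard_coe_finset, Finset.card_range] at this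
  omega

end Ax

end

section
variable {α : Type*} {G : Type*} [Group G]

/-! ### P4d: projections to cosets -/

/-- quasiconvex subgroup with bounded overlap of cosets -/
structure QF (d : G → G → ℝ) (δ : ℝ) (E : Subgroup G) (σ : ℝ) (B : ℝ → ℝ) : Prop
    extends HG d δ where
  σpos : 0 ≤ σ
  qcE : ∀ y1 y2 z, y1 ∈ E → y2 ∈ E → d y1 z + d z y2 = d y1 y2 → ∃ y ∈ E, d z y ≤ σ
  ol : ∀ c1, 0 ≤ c1 → ∀ p q p' q' : G, (p : G ⧸ E) = q → (p' : G ⧸ E) = q' →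
    d p p' ≤ c1 → d q q' ≤ c1 → B c1 ≤ d p q → (p : G ⧸ E) = p'

def Npt (d : G → G → ℝ) {E : Subgroup G} (Y : G ⧸ E) (x p : G) : Prop :=
  (p : G ⧸ E) = Y ∧ ∀ q : G, (q : G ⧸ E) = Y → d x p ≤ d x q

/-- the set of distances between projections -/
def Pset (d : G → G → ℝ) {E : Subgroup G} (Y X Z : G ⧸ E) : Set ℝ :=
  {r | ∃ x p z q : G, ((x : G ⧸ E) = X ∨ (x : G ⧸ E) = Z) ∧ ((z : G ⧸ E) = X ∨ (z : G ⧸ E) = Z) ∧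
    Npt d Y x p ∧ Npt d Y z q ∧ r = d p q}

/-- projection distances -/
def Pd (d : G → G → ℝ) (E : Subgroup G) (Y X Z : G ⧸ E) : ℝ := sSup (Pset d Y X Z)

namespace QF
variable {d : G → G → ℝ} {δ σ : ℝ} {B : ℝ → ℝ} {E : Subgroup G}

lemma qc (h : QF d δ E σ B) {Y : G ⧸ E} {y1 y2 z : G} (h1 : (y1 : G ⧸ E) = Y)
    (h2 : (y2 : G ⧸ E) = Y) (hz : d y1 z + d z y2 = d y1 y2) :
    ∃ y : G, (y : G ⧸ E) = Y ∧ d z y ≤ σ := by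
  subst h1
  obtain ⟨y, hy, hy'⟩ := h.qcE 1 (y1⁻¹ * y2) (y1⁻¹ * z) E.one_mem (QuotientGroup.eq.1 h2.symm) (by
    rw [← h.to_one, ← h.to_one, h.inv]; exact hz)
  refine ⟨y1 * y, ?_, ?_⟩
  · rw [eq_comm, QuotientGroup.eq]; simpa using hy
  · rw [← h.inv y1⁻¹]; simpa using hy'

lemma exists_npt (h : QF d δ E σ B) (Y : G ⧸ E) (x : G) : ∃ p, Npt d Y x p := by
  classical
  obtain ⟨y, hy⟩ := QuotientGroup.mk_surjective Y
  have hex : ∃ n : ℕ, ∃ p : G, (p : G ⧸ E) = Y ∧ d x p = n := by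
    obtain ⟨n, hn⟩ := h.nat x y
    exact ⟨n, y, hy, hn⟩
  obtain ⟨p, hp, hp'⟩ := Nat.find_spec hex
  refine ⟨p, hp, fun q hq => ?_⟩
  obtain ⟨n, hn⟩ := h.nat x q
  rw [hp', hn]
  exact_mod_cast Nat.find_min' hex ⟨q, hq, hn⟩

lemma proj_ineq (h : QF d δ E σ B) {Y : G ⧸ E} {x p y : G} (hp : Npt d Y x p)
    (hy : (y : G ⧸ E) = Y) : d x p + d p y ≤ d x y + (2 * σ + 4 * δ + 2) := by
  have p0 := h.pos
  have t1 := h.tri x p y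
  have t2 := h.tri x y p
  rw [h.symm y p] at t2
  set k := ⌊(d x p + d p y - d x y) / 2⌋₊ with hk
  have hk1 : (k : ℝ) ≤ (d x p + d p y - d x y) / 2 := Nat.floor_le (by linarith)
  have hk2 : (d x p + d p y - d x y) / 2 < k + 1 := Nat.lt_floor_add_one _
  obtain ⟨z, hz, hz'⟩ := h.geo p y k (by linarith)
  obtain ⟨y', hy', hzy⟩ := h.qc hp.1 hy (show d p z + d z y = d p y by linarith)
  have m := hp.2 y' hy'
  have t3 := h.tri x z y'
  have f := h.four p x y z
  rw [h.symm p x, h.symm y z] at f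
  rcases f with f | f <;> linarith

lemma two_proj (h : QF d δ E σ B) {Y : G ⧸ E} {x p z q : G} (hp : Npt d Y x p)
    (hq : Npt d Y z q) (hpq : 2 * σ + 4 * δ + 2 + δ < d p q) :
    d x p + d p q + d q z ≤ d x z + (2 * (2 * σ + 4 * δ + 2) + 2 * δ) := by
  have a1 := h.proj_ineq hp hq.1
  have a2 := h.proj_ineq hq hp.1
  have f := h.four x z q p
  rw [h.symm q p] at a2 f
  rw [h.symm z q] at a2 f
  rcases f with f | f <;> linarith

lemma near_geo (h : QF d δ E σ B) {x q y : G} {c : ℝ} (hq : d x q + d q y ≤ d x y + c) :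
    ∃ w, d x w + d w y = d x y ∧ d q w ≤ c + 2 * δ := by
  have p0 := h.pos
  have t := h.tri x q y
  rcases le_total (d x q) (d x y) with hle | hle
  · obtain ⟨n, hn⟩ := h.nat x q
    obtain ⟨w, hw, hw'⟩ := h.geo x y n (by linarith)
    refine ⟨w, by linarith, ?_⟩
    have f := h.four x q y w
    rw [h.symm y w] at f
    rcases f with f | f <;> linarith
  · exact ⟨y, by rw [h.self]; ring, by linarith⟩

/-- the basic constant -/
def th0 (δ σ : ℝ) (B : ℝ → ℝ) : ℝ :=
  max (max (B (2 * (2 * σ + 4 * δ + 2) + 2 * δ + 2 * δ + σ)) (2 * σ + 4 * δ + 2 + δ)) 0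

lemma bproj (h : QF d δ E σ B) {Y Z : G ⧸ E} (hne : Z ≠ Y) {z1 z2 p1 p2 : G}
    (h1 : (z1 : G ⧸ E) = Z) (h2 : (z2 : G ⧸ E) = Z) (hp1 : Npt d Y z1 p1) (hp2 : Npt d Y z2 p2) :
    d p1 p2 ≤ th0 δ σ B := by
  by_contra hcon
  push Not at hcon
  have p0 := h.pos
  have s0 := h.σpos
  have m1 : B (2 * (2 * σ + 4 * δ + 2) + 2 * δ + 2 * δ + σ) ≤ th0 δ σ B :=
    (le_max_left _ _).trans (le_max_left _ _)
  have m2 : 2 * σ + 4 * δ + 2 + δ ≤ th0 δ σ B := (le_max_right _ _).trans (le_max_left _ _)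
  have tp := h.two_proj hp1 hp2 (by linarith)
  have t1 := h.tri z1 p1 p2
  have t2 := h.tri p1 p2 z2
  obtain ⟨w1, hw1, hw1'⟩ := h.near_geo (x := z1) (q := p1) (y := z2)
    (c := 2 * (2 * σ + 4 * δ + 2) + 2 * δ) (by linarith)
  obtain ⟨w2, hw2, hw2'⟩ := h.near_geo (x := z1) (q := p2) (y := z2)
    (c := 2 * (2 * σ + 4 * δ + 2) + 2 * δ) (by linarith)
  obtain ⟨y1, hy1, hd1⟩ := h.qc h1 h2 hw1
  obtain ⟨y2, hy2, hd2⟩ := h.qc h1 h2 hw2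
  have t3 := h.tri p1 w1 y1
  have t4 := h.tri p2 w2 y2
  have := h.ol (2 * (2 * σ + 4 * δ + 2) + 2 * δ + 2 * δ + σ) (by linarith) p1 p2 y1 y2
    (hp1.1.trans hp2.1.symm) (hy1.trans hy2.symm) (by linarith) (by linarith) (by linarith)
  exact hne (by rw [← hy1, ← this, hp1.1])

lemma th0_nonneg : 0 ≤ th0 δ σ B := le_max_right _ _

lemma pset_le (h : QF d δ E σ B) {Y X Z : G ⧸ E} (hX : X ≠ Y) (hZ : Z ≠ Y) {x p z q : G}
    (hx : (x : G ⧸ E) = X) (hz : (z : G ⧸ E) = Z) (hp : Npt d Y x p) (hq : Npt d Y z q) :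
    ∀ r ∈ Pset d Y X Z, r ≤ d p q + 2 * th0 δ σ B := by
  rintro r ⟨x', p', z', q', hx', hz', hp', hq', rfl⟩
  have n0 := h.nn p q
  have t0 : 0 ≤ th0 δ σ B := th0_nonneg
  have key : ∀ (x' p' z' q' : G), (x' : G ⧸ E) = X → (z' : G ⧸ E) = Z → Npt d Y x' p' →
      Npt d Y z' q' → d p' q' ≤ d p q + 2 * th0 δ σ B := by
    intro x' p' z' q' hx' hz' hp' hq'
    have b1 := h.bproj hX hx' hx hp' hp
    have b2 := h.bproj hZ hz hz' hq hq'
    have t1 := h.tri p' p q'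
    have t2 := h.tri p q q'
    linarith
  rcases hx' with hx' | hx' <;> rcases hz' with hz' | hz'
  · have := h.bproj hX hx' hz' hp' hq'; linarith
  · exact key _ _ _ _ hx' hz' hp' hq'
  · rw [h.symm]; exact key _ _ _ _ hz' hx' hq' hp'
  · have := h.bproj hZ hx' hz' hp' hq'; linarith

lemma le_of_mem (h : QF d δ E σ B) {Y X Z : G ⧸ E} (hX : X ≠ Y) (hZ : Z ≠ Y) {r : ℝ}
    (hr : r ∈ Pset d Y X Z) : r ≤ Pd d E Y X Z := by
  obtain ⟨x, hx⟩ := QuotientGroup.mk_surjective X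
  obtain ⟨z, hz⟩ := QuotientGroup.mk_surjective Z
  obtain ⟨p, hp⟩ := h.exists_npt Y x
  obtain ⟨q, hq⟩ := h.exists_npt Y z
  exact le_csSup ⟨_, h.pset_le hX hZ hx hz hp hq⟩ hr

lemma le_pd (h : QF d δ E σ B) {Y X Z : G ⧸ E} (hX : X ≠ Y) (hZ : Z ≠ Y) {x p z q : G}
    (hx : (x : G ⧸ E) = X) (hz : (z : G ⧸ E) = Z) (hp : Npt d Y x p) (hq : Npt d Y z q) :
    d p q ≤ Pd d E Y X Z :=
  h.le_of_mem hX hZ ⟨x, p, z, q, Or.inl hx, Or.inr hz, hp, hq, rfl⟩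

lemma pd_le (h : QF d δ E σ B) {Y X Z : G ⧸ E} (hX : X ≠ Y) (hZ : Z ≠ Y) {x p z q : G}
    (hx : (x : G ⧸ E) = X) (hz : (z : G ⧸ E) = Z) (hp : Npt d Y x p) (hq : Npt d Y z q) :
    Pd d E Y X Z ≤ d p q + 2 * th0 δ σ B :=
  csSup_le ⟨_, x, p, z, q, Or.inl hx, Or.inr hz, hp, hq, rfl⟩ (h.pset_le hX hZ hx hz hp hq)

/-- the projection constant -/
def thW (δ σ : ℝ) (B : ℝ → ℝ) : ℝ :=
  2 * th0 δ σ B + (2 * (2 * σ + 4 * δ + 2) + 2 * δ) + (2 * σ + 4 * δ + 2) + δ +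
    max (B (2 * (2 * σ + 4 * δ + 2) + 2 * δ + 2 * δ)) 0

lemma weak (h : QF d δ E σ B) : WeakProj (Pd d E) (thW δ σ B) := by
  have p0 := h.pos
  have s0 := h.σpos
  have t0 : 0 ≤ th0 δ σ B := th0_nonneg
  have m1 := le_max_left (B (2 * (2 * σ + 4 * δ + 2) + 2 * δ + 2 * δ)) 0
  have m2 := le_max_right (B (2 * (2 * σ + 4 * δ + 2) + 2 * δ + 2 * δ)) 0
  have htW : thW δ σ B = 2 * th0 δ σ B + (2 * (2 * σ + 4 * δ + 2) + 2 * δ) +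
    (2 * σ + 4 * δ + 2) + δ + max (B (2 * (2 * σ + 4 * δ + 2) + 2 * δ + 2 * δ)) 0 := rfl
  refine ⟨by linarith, ?_, ?_, ?_, ?_, ?_⟩
  · intro Y X Z
    unfold Pd
    congr 1
    ext r
    constructor <;> rintro ⟨x, p, z, q, hx, hz, hp, hq, rfl⟩ <;>
      exact ⟨x, p, z, q, hx.symm, hz.symm, hp, hq, rfl⟩
  · intro Y X W Z hX hW hZ
    obtain ⟨x, hx⟩ := QuotientGroup.mk_surjective X
    obtain ⟨z, hz⟩ := QuotientGroup.mk_surjective Z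
    obtain ⟨w, hw⟩ := QuotientGroup.mk_surjective W
    obtain ⟨p, hp⟩ := h.exists_npt Y x
    obtain ⟨q, hq⟩ := h.exists_npt Y z
    obtain ⟨m, hm⟩ := h.exists_npt Y w
    have e1 := (h.nn _ _).trans (h.le_pd hX hW hx hw hp hm)
    have e2 := (h.nn _ _).trans (h.le_pd hW hZ hw hz hm hq)
    refine csSup_le ⟨_, x, p, z, q, Or.inl hx, Or.inr hz, hp, hq, rfl⟩ ?_
    rintro r ⟨x', p', z', q', hx', hz', hp', hq', rfl⟩
    rcases hx' with hx' | hx' <;> rcases hz' with hz' | hz'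
    · have := h.le_of_mem hX hW ⟨x', p', z', q', Or.inl hx', Or.inl hz', hp', hq', rfl⟩
      linarith
    · have a1 := h.le_pd hX hW hx' hw hp' hm
      have a2 := h.le_pd hW hZ hw hz' hm hq'
      have := h.tri p' m q'
      linarith
    · have a1 := h.le_pd hX hW hz' hw hq' hm
      have a2 := h.le_pd hW hZ hw hx' hm hp'
      have := h.tri p' m q'
      rw [h.symm p' m, h.symm m q'] at this
      linarith
    · have := h.le_of_mem hW hZ ⟨x', p', z', q', Or.inr hx', Or.inr hz', hp', hq', rfl⟩
      linarith
  · intro Y X hX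
    obtain ⟨x, hx⟩ := QuotientGroup.mk_surjective X
    obtain ⟨p, hp⟩ := h.exists_npt Y x
    have := h.pd_le hX hX hx hx hp hp
    rw [h.self] at this
    linarith
  · intro X Y Z hXY hYZ hXZ hlt
    obtain ⟨x, hx⟩ := QuotientGroup.mk_surjective X
    obtain ⟨p, hp⟩ := h.exists_npt Y x
    obtain ⟨z0, hz0⟩ := h.exists_npt Z x
    obtain ⟨z1, hz1⟩ := h.exists_npt Z p
    obtain ⟨q, hq⟩ := h.exists_npt Y z0
    have a1 := h.pd_le hXY hYZ.symm hx hz0.1 hp hq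
    have a2 := h.pd_le hXZ hYZ hx hp.1 hz0 hz1
    have a3 := h.two_proj hp hq (by linarith)
    have a4 := h.tri p q z0
    have a5 := hz0.2 z1 hz1.1
    have a6 := h.tri x p z1
    have a7 := h.proj_ineq hz1 hz0.1
    rw [h.symm z1 z0] at a7
    linarith
  · intro X Z
    obtain ⟨x, hx⟩ := QuotientGroup.mk_surjective X
    obtain ⟨z, hz⟩ := QuotientGroup.mk_surjective Z
    choose p hp using fun Y => h.exists_npt (B := B) Y x
    choose q hq using fun Y => h.exists_npt (B := B) Y z
    set S := {Y | Y ≠ X ∧ Y ≠ Z ∧ thW δ σ B < Pd d E Y X Z} with hS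
    have big : ∀ Y ∈ S, thW δ σ B < d (p Y) (q Y) + 2 * th0 δ σ B := by
      rintro Y ⟨h1, h2, h3⟩
      exact h3.trans_le (h.pd_le h1.symm h2.symm hx hz (hp Y) (hq Y))
    have tp : ∀ Y ∈ S, _ := fun Y hY => h.two_proj (hp Y) (hq Y) (by have := big Y hY; linarith)
    obtain ⟨M, hM⟩ := exists_nat_ge (d x z + (2 * (2 * σ + 4 * δ + 2) + 2 * δ))
    have hinj : Set.InjOn (fun Y => (d x (p Y), d x (q Y))) S := by
      intro Y hY Y' hY' he
      simp only [Prod.mk.injEq] at he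
      obtain ⟨he1, he2⟩ := he
      have b1 := tp Y hY
      have b2 := tp Y' hY'
      have g1 := big Y hY
      have c1 := h.tri (p Y) (q Y) z
      have c2 := h.tri (p Y') (q Y') z
      have c3 := h.tri x (p Y) (q Y)
      have c4 := h.tri x (p Y') (q Y')
      have d1 : d (p Y) (p Y') ≤ 2 * (2 * σ + 4 * δ + 2) + 2 * δ + 2 * δ := by
        have f := h.four x (p Y) z (p Y')
        rw [h.symm z (p Y')] at f
        rcases f with f | f <;> linarith
      have d2 : d (q Y) (q Y') ≤ 2 * (2 * σ + 4 * δ + 2) + 2 * δ + 2 * δ := by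
        have f := h.four x (q Y) z (q Y')
        rw [h.symm z (q Y')] at f
        rcases f with f | f <;> linarith
      have := h.ol _ (by linarith) (p Y) (q Y) (p Y') (q Y') ((hp Y).1.trans (hq Y).1.symm)
        ((hp Y').1.trans (hq Y').1.symm) d1 d2 (by linarith)
      rw [(hp Y).1, (hp Y').1] at this
      exact this
    refine Set.Finite.of_finite_image (f := fun Y => (d x (p Y), d x (q Y))) ?_ hinj
    have hfin : ((fun n : ℕ => (n : ℝ)) '' (Set.Iic M)).Finite := (Set.finite_Iic M).image _
    refine (hfin.prod hfin).subset ?_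
    rintro _ ⟨Y, hY, rfl⟩
    have b1 := tp Y hY
    have n1 := h.nn (p Y) (q Y)
    have n2 := h.nn (q Y) z
    have c3 := h.tri x (p Y) (q Y)
    obtain ⟨n, hn⟩ := h.nat x (p Y)
    obtain ⟨m, hm⟩ := h.nat x (q Y)
    refine ⟨⟨n, ?_, hn.symm⟩, ⟨m, ?_, hm.symm⟩⟩
    · have : (n : ℝ) ≤ M := by rw [← hn]; linarith
      exact_mod_cast this
    · have : (m : ℝ) ≤ M := by rw [← hm]; linarith
      exact_mod_cast this

end QF

end

section
variable {α : Type*} {G : Type*} [Group G]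

/-! ### P4e: invariance, finiteness of pair stabilisers, non-elementarity -/

namespace QF
variable {d : G → G → ℝ} {δ σ : ℝ} {B : ℝ → ℝ} {E : Subgroup G}

lemma npt_smul (h : QF d δ E σ B) (g : G) {Y : G ⧸ E} {x p : G} (hp : Npt d Y x p) :
    Npt d (g • Y) (g * x) (g * p) := by
  refine ⟨?_, fun q hq => ?_⟩
  · rw [← hp.1]; rfl
  · have e : ((g⁻¹ * q : G) : G ⧸ E) = Y := by
      rw [← inv_smul_smul g Y, ← hq]; rfl
    have := hp.2 _ e
    rw [h.inv]
    rw [← h.inv g x (g⁻¹ * q), mul_inv_cancel_left] at this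
    exact this

lemma pset_smul (h : QF d δ E σ B) (g : G) (Y X Z : G ⧸ E) :
    Pset d Y X Z ⊆ Pset d (g • Y) (g • X) (g • Z) := by
  rintro r ⟨x, p, z, q, hx, hz, hp, hq, rfl⟩
  refine ⟨g * x, g * p, g * z, g * q, hx.imp ?_ ?_, hz.imp ?_ ?_, h.npt_smul g hp, h.npt_smul g hq,
    (h.inv _ _ _).symm⟩ <;> (intro e; rw [← e]; rfl)

lemma pd_smul (h : QF d δ E σ B) (g : G) (Y X Z : G ⧸ E) :
    Pd d E (g • Y) (g • X) (g • Z) = Pd d E Y X Z := by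
  unfold Pd
  congr 1
  apply Set.Subset.antisymm
  · have := h.pset_smul g⁻¹ (g • Y) (g • X) (g • Z)
    simpa only [inv_smul_smul] using this
  · exact h.pset_smul g Y X Z

lemma ft (h : QF d δ E σ B) (hac : AcylDist d) :
    ∃ (K0 : ℝ) (N : ℕ), 0 < N ∧ ∀ X Z X' Z' V : G ⧸ E, V ≠ X → V ≠ Z → K0 < Pd d E V X Z →
      {g : G | g • X = X' ∧ g • Z = Z'}.Finite ∧ {g : G | g • X = X' ∧ g • Z = Z'}.ncard ≤ N := by
  have p0 := h.pos
  have s0 := h.σpos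
  have t0 : 0 ≤ th0 δ σ B := th0_nonneg
  obtain ⟨R, hR, N, hN, hac⟩ := hac (th0 δ σ B + 1) (by linarith)
  refine ⟨2 * th0 δ σ B + (2 * (2 * σ + 4 * δ + 2) + 2 * δ) + (2 * σ + 4 * δ + 2) + δ + R, N, hN, ?_⟩
  intro X Z X' Z' V hX hZ hlt
  rcases Set.eq_empty_or_nonempty {g : G | g • X = X' ∧ g • Z = Z'} with he | ⟨g0, hg1, hg2⟩
  · rw [he]; simp
  obtain ⟨x, hx⟩ := QuotientGroup.mk_surjective X
  obtain ⟨z, hz⟩ := QuotientGroup.mk_surjective Z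
  obtain ⟨p, hp⟩ := h.exists_npt X z
  obtain ⟨q, hq⟩ := h.exists_npt Z x
  obtain ⟨u, hu⟩ := h.exists_npt V p
  obtain ⟨v, hv⟩ := h.exists_npt V q
  have a1 := h.pd_le hX.symm hZ.symm hp.1 hq.1 hu hv
  have a2 := h.two_proj hu hv (by linarith)
  have n1 := h.nn p u
  have n2 := h.nn v q
  have hXZ : X ≠ Z := by
    rintro rfl
    have := h.pd_le hX.symm hX.symm hx hx (h.exists_npt V x).choose_spec (h.exists_npt V x).choose_spec
    rw [h.self] at this
    linarith
  have hXZ' : X' ≠ Z' := by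
    rw [← hg1, ← hg2]
    exact fun e => hXZ (MulAction.injective g0 e)
  obtain ⟨q1, q2⟩ := hac (g0 * p) (g0 * q) (by rw [h.inv]; linarith)
  set S := {g : G | d (g0 * p) (g * (g0 * p)) ≤ th0 δ σ B + 1 ∧
    d (g0 * q) (g * (g0 * q)) ≤ th0 δ σ B + 1} with hS
  have hsub : {g : G | g • X = X' ∧ g • Z = Z'} ⊆ (fun k => k * g0) '' S := by
    rintro g ⟨h1, h2⟩
    refine ⟨g * g0⁻¹, ⟨?_, ?_⟩, by simp⟩
    · have e : g * g0⁻¹ * (g0 * p) = g * p := by group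
      rw [e]
      have b1 := h.npt_smul g0 hp
      have b2 := h.npt_smul g hp
      rw [hg1] at b1
      rw [h1] at b2
      have := h.bproj hXZ'.symm (z1 := g0 * z) (z2 := g * z) (by rw [← hg2, ← hz]; rfl)
        (by rw [← h2, ← hz]; rfl) b1 b2
      linarith
    · have e : g * g0⁻¹ * (g0 * q) = g * q := by group
      rw [e]
      have b1 := h.npt_smul g0 hq
      have b2 := h.npt_smul g hq
      rw [hg2] at b1
      rw [h2] at b2
      have := h.bproj hXZ' (z1 := g0 * x) (z2 := g * x) (by rw [← hg1, ← hx]; rfl)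
        (by rw [← h1, ← hx]; rfl) b1 b2
      linarith
  have hfin : ((fun k => k * g0) '' S).Finite := q1.image _
  refine ⟨hfin.subset hsub, (Set.ncard_le_ncard hsub hfin).trans ?_⟩
  exact (Set.ncard_image_le q1).trans q2

end QF

namespace Ax
variable {d : G → G → ℝ} {δ κ : ℝ} {f : G}

/-- `x` follows the ray in direction `s` -/
lemma bseq_dir (h : Ax d δ f κ) (hE : ∀ g, g ∈ Ef f) (x : BSeq d) :
    ∃ s, (s = f ∨ s = f⁻¹) ∧ ∃ N, ∀ n, N ≤ n → ∃ k : ℕ, d (x.1 n) (s ^ k) ≤ κ + d 1 f + 6 * δ := by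
  obtain ⟨N, hN⟩ := x.2 1 ((4 * (κ + d 1 f + 6 * δ) + κ) / 2 + 1)
  have hap : ∀ n, ∃ (φ : G) (k : ℕ), (φ = f ∨ φ = f⁻¹) ∧ d (x.1 n) (φ ^ k) ≤ κ + d 1 f + 6 * δ := by
    intro n
    obtain ⟨J, hJ⟩ := h.E_near (hE (x.1 n))
    obtain ⟨φ, k, hφ, e⟩ := zpow_sgn f J
    exact ⟨φ, k, hφ, by rw [← e]; exact hJ⟩
  obtain ⟨φ, k, hφ, hk⟩ := hap N
  refine ⟨φ, hφ, N, fun n hn => ?_⟩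
  obtain ⟨ψ, k', hψ, hk'⟩ := hap n
  by_cases e : ψ = φ
  · exact ⟨k', by rw [← e]; exact hk'⟩
  exfalso
  have e' : ψ = φ⁻¹ := by
    rcases hφ with rfl | rfl <;> rcases hψ with rfl | rfl
    · exact absurd rfl e
    · rfl
    · rw [inv_inv]
    · exact absurd rfl e
  have g := hN N le_rfl n hn
  unfold gprod at g
  have e1 : d (φ ^ k) (ψ ^ k') = d 1 (f ^ (k + k')) := by
    rw [h.symm, h.to_one, e', inv_pow, inv_inv, ← pow_add, h.sgn_norm hφ, add_comm]
  have q := h.qg k k'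
  have s1 := h.sgn_norm hφ k
  have s2 := h.sgn_norm hψ k'
  have t1 := h.tri (x.1 N) (φ ^ k) 1
  have t2 := h.tri (x.1 n) (ψ ^ k') 1
  have t3 := h.tri (φ ^ k) (x.1 N) (ψ ^ k')
  have t4 := h.tri (x.1 N) (x.1 n) (ψ ^ k')
  rw [h.symm (φ ^ k) 1] at t1
  rw [h.symm (ψ ^ k') 1] at t2
  rw [h.symm (φ ^ k) (x.1 N)] at t3
  linarith

lemma same_dir (h : Ax d δ f κ) (x y : BSeq d) {s : G} (hs : s = f ∨ s = f⁻¹)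
    (hx : ∃ N, ∀ n, N ≤ n → ∃ k : ℕ, d (x.1 n) (s ^ k) ≤ κ + d 1 f + 6 * δ)
    (hy : ∃ N, ∀ n, N ≤ n → ∃ k : ℕ, d (y.1 n) (s ^ k) ≤ κ + d 1 f + 6 * δ) : BRel d x y := by
  intro o R
  set B0 := κ + d 1 f + 6 * δ with hB0
  obtain ⟨N1, hN1⟩ := hx
  obtain ⟨N2, hN2⟩ := hy
  obtain ⟨N3, hN3⟩ := x.2 1 (R + d 1 o + κ + 3 * B0)
  obtain ⟨N4, hN4⟩ := y.2 1 (R + d 1 o + κ + 3 * B0)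
  refine ⟨N1 + N2 + N3 + N4, fun i hi j hj => ?_⟩
  obtain ⟨k, hk⟩ := hN1 i (by omega)
  obtain ⟨k', hk'⟩ := hN2 j (by omega)
  have a1 := hN3 i (by omega) i (by omega)
  have a2 := hN4 j (by omega) j (by omega)
  have a3 := gprod_base h.toGeoMet (x.1 i) (y.1 j) 1 o
  have κp := h.κpos
  unfold gprod at *
  rw [h.self] at a1 a2
  have s1 := h.sgn_norm hs k
  have s2 := h.sgn_norm hs k'
  have t1 := h.tri (x.1 i) (s ^ k) 1
  have t2 := h.tri (y.1 j) (s ^ k') 1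
  have t1' := h.tri (s ^ k) (x.1 i) 1
  have t2' := h.tri (s ^ k') (y.1 j) 1
  have t3 := h.tri (x.1 i) (s ^ k) (y.1 j)
  have t4 := h.tri (s ^ k) (s ^ k') (y.1 j)
  rw [h.symm (s ^ k) 1] at t1 t1'
  rw [h.symm (s ^ k') 1] at t2 t2'
  rw [h.symm (s ^ k) (x.1 i)] at t1'
  rw [h.symm (s ^ k') (y.1 j)] at t2' t4
  rcases le_total k k' with hle | hle
  · obtain ⟨m, rfl⟩ := Nat.exists_eq_add_of_le hle
    have q := h.qg k m
    have e := h.pow_dist s k m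
    have e2 := h.sgn_norm hs m
    linarith
  · obtain ⟨m, rfl⟩ := Nat.exists_eq_add_of_le hle
    have q := h.qg k' m
    have e := h.pow_dist s k' m
    have e2 := h.sgn_norm hs m
    rw [h.symm] at e
    linarith

lemma exists_notMem (h : Ax d δ f κ) (h3 : ∃ a b c : Bdry d, a ≠ b ∧ a ≠ c ∧ b ≠ c) :
    ∃ g, g ∉ Ef f := by
  by_contra hcon
  push Not at hcon
  obtain ⟨a, b, c, hab, hac, hbc⟩ := h3
  obtain ⟨x, rfl⟩ := Quot.exists_rep a
  obtain ⟨y, rfl⟩ := Quot.exists_rep b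
  obtain ⟨z, rfl⟩ := Quot.exists_rep c
  obtain ⟨s, hs, hx⟩ := h.bseq_dir hcon x
  obtain ⟨s', hs', hy⟩ := h.bseq_dir hcon y
  obtain ⟨s'', hs'', hz⟩ := h.bseq_dir hcon z
  have h1 : s ≠ s' := by
    rintro rfl; exact hab (Quot.sound (h.same_dir x y hs hx hy))
  have h2 : s ≠ s'' := by
    rintro rfl; exact hac (Quot.sound (h.same_dir x z hs hx hz))
  have h3 : s' ≠ s'' := by
    rintro rfl; exact hbc (Quot.sound (h.same_dir y z hs' hy hz))
  rcases hs with rfl | rfl <;> rcases hs' with rfl | rfl <;> rcases hs'' with rfl | rfl <;>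
    simp_all

lemma qf (h : Ax d δ f κ) (hac : AcylDist d) :
    ∃ B : ℝ → ℝ, QF d δ (Ef f) (4 * (κ + d 1 f + 6 * δ) + 2 * δ) B := by
  have hol : ∀ c1 : ℝ, ∃ B : ℝ, 0 ≤ c1 → ∀ p q p' q' : G, p⁻¹ * q ∈ Ef f → p'⁻¹ * q' ∈ Ef f →
      d p p' ≤ c1 → d q q' ≤ c1 → B ≤ d p q → p⁻¹ * p' ∈ Ef f := by
    intro c1
    by_cases hc : 0 ≤ c1
    · obtain ⟨B, hB⟩ := h.overlap hac c1 hc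
      exact ⟨B, fun _ => hB⟩
    · exact ⟨0, fun h => absurd h hc⟩
  choose B hB using hol
  have p0 := h.pos
  have κp := h.κpos
  have n1 := h.nn 1 f
  refine ⟨B, ⟨h.toHG, by linarith, fun y1 y2 z h1 h2 hz => h.E_qc h1 h2 hz, ?_⟩⟩
  intro c1 hc1 p q p' q' e1 e2 d1 d2 d3
  rw [QuotientGroup.eq] at e1 e2 ⊢
  exact hB c1 hc1 p q p' q' e1 e2 d1 d2 d3

lemma pd_pow (h : Ax d δ f κ) {σ : ℝ} {B : ℝ → ℝ} (hq : QF d δ (Ef f) σ B) {Z : G ⧸ Ef f}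
    (hZ : Z ≠ ((1 : G) : G ⧸ Ef f)) (n : ℕ) :
    (n : ℝ) - 2 * (κ + d 1 f + 6 * δ) ≤ Pd d (Ef f) ((1 : G) : G ⧸ Ef f) Z (f ^ n • Z) := by
  obtain ⟨z, hz⟩ := QuotientGroup.mk_surjective Z
  obtain ⟨p, hp⟩ := hq.exists_npt ((1 : G) : G ⧸ Ef f) z
  have hfix : f ^ n • ((1 : G) : G ⧸ Ef f) = ((1 : G) : G ⧸ Ef f) := by
    change ((f ^ n * 1 : G) : G ⧸ Ef f) = _
    rw [eq_comm, QuotientGroup.eq]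
    simpa using Subgroup.pow_mem _ (f_mem_Ef f) n
  have hp2 := hq.npt_smul (f ^ n) hp
  rw [hfix] at hp2
  have hne : f ^ n • Z ≠ ((1 : G) : G ⧸ Ef f) := by
    intro e
    rw [← hfix] at e
    exact hZ (MulAction.injective _ e)
  refine le_trans ?_ (hq.le_pd hZ hne hz (by rw [← hz]; rfl) hp hp2)
  obtain ⟨i, hi⟩ := h.E_near (g := p) (by
    have := QuotientGroup.eq.1 hp.1.symm
    simpa using this)
  have t1 := h.tri (f ^ i) p (f ^ (i + (n : ℤ)))
  have t2 := h.tri p (f ^ n * p) (f ^ (i + (n : ℤ)))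
  have e1 : d (f ^ n * p) (f ^ (i + (n : ℤ))) = d p (f ^ i) := by
    rw [add_comm, zpow_add, zpow_natCast, h.inv]
  rw [h.zdist, h.symm (f ^ i) p] at t1
  have l := h.lin n
  linarith

end Ax

lemma exists_far {d : G → G → ℝ} {δ : ℝ} (h : HG d δ) (a : Bdry d) (M : ℝ) : ∃ x, M ≤ d 1 x := by
  obtain ⟨x, rfl⟩ := Quot.exists_rep a
  obtain ⟨N, hN⟩ := x.2 1 M
  refine ⟨x.1 N, ?_⟩
  have := hN N le_rfl N le_rfl
  unfold gprod at this
  rw [h.self, h.symm] at this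
  linarith

theorem main_thm {d : G → G → ℝ} (hd : GeoMet d) (hh : IsHyperbolic d)
    (h3 : ∃ a b c : Bdry d, a ≠ b ∧ a ≠ c ∧ b ≠ c) (hac : AcylDist d) :
    ∃ S : Set G, Subgroup.closure S = ⊤ ∧ IsHyperbolic (wdist S) ∧
      (∃ a b c : Bdry (wdist S), a ≠ b ∧ a ≠ c ∧ b ≠ c) ∧ AcylDist (wdist S) ∧
      TopAmenable (wdist S) := by
  obtain ⟨δ, hδ, hyp⟩ := hh
  have h : HG d δ := ⟨hd, hyp, hδ⟩
  obtain ⟨f, hf⟩ := h.exists_lox hac (exists_far h h3.choose)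
  obtain ⟨κ, hA⟩ := h.exists_ax hf
  obtain ⟨B, hQ⟩ := hA.qf hac
  obtain ⟨g, hg⟩ := hA.exists_notMem h3
  refine main_of_weak (D := Pd d (Ef f)) (y0 := ((1 : G) : G ⧸ Ef f)) hQ.weak hQ.pd_smul ?_
    (hQ.ft hac) ?_
  · intro V
    obtain ⟨v, rfl⟩ := QuotientGroup.mk_surjective V
    refine ⟨v, ?_⟩
    change ((v * 1 : G) : G ⧸ Ef f) = _
    rw [mul_one]
  · intro K
    obtain ⟨n, hn⟩ := exists_nat_gt (K + 2 * (κ + d 1 f + 6 * δ))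
    have hY : (g : G ⧸ Ef f) ≠ ((1 : G) : G ⧸ Ef f) := by
      intro e
      rw [eq_comm, QuotientGroup.eq] at e
      exact hg (by simpa using e)
    have hY' : ((g⁻¹ : G) : G ⧸ Ef f) ≠ ((1 : G) : G ⧸ Ef f) := by
      intro e
      rw [QuotientGroup.eq] at e
      exact hg (by simpa using e)
    have n0 : (0 : ℝ) ≤ n := by positivity
    refine ⟨g, f ^ n, g * f ^ n * g⁻¹, hY, ?_, ?_, ?_, ?_, ?_⟩
    · change ((f ^ n * 1 : G) : G ⧸ Ef f) = _
      rw [eq_comm, QuotientGroup.eq]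
      simpa using Subgroup.pow_mem _ (f_mem_Ef f) n
    · change ((g * f ^ n * g⁻¹ * g : G) : G ⧸ Ef f) = _
      rw [eq_comm, QuotientGroup.eq]
      simpa using Subgroup.pow_mem _ (f_mem_Ef f) n
    · have := hA.pd_pow hQ hY n; linarith
    · have := hA.pd_pow hQ hY (n + n)
      rw [← mul_smul, ← pow_add]
      push_cast at this
      linarith
    · rw [← hQ.pd_smul g⁻¹]
      have e1 : g⁻¹ • (g : G ⧸ Ef f) = ((1 : G) : G ⧸ Ef f) := by
        change ((g⁻¹ * g : G) : G ⧸ Ef f) = _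
        rw [inv_mul_cancel]
      have e2 : g⁻¹ • ((1 : G) : G ⧸ Ef f) = ((g⁻¹ : G) : G ⧸ Ef f) := by
        change ((g⁻¹ * 1 : G) : G ⧸ Ef f) = _
        rw [mul_one]
      have e3 : g⁻¹ • (g * f ^ n * g⁻¹) • ((1 : G) : G ⧸ Ef f) = f ^ n • ((g⁻¹ : G) : G ⧸ Ef f) := by
        rw [← mul_smul]
        change ((g⁻¹ * (g * f ^ n * g⁻¹) * 1 : G) : G ⧸ Ef f) = ((f ^ n * g⁻¹ : G) : G ⧸ Ef f)
        congr 1; group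
      rw [e1, e2, e3]
      have := hA.pd_pow hQ hY' n; linarith

end

/-- Corollary 1.2: every countable acylindrically hyperbolic group
admits a generating set `S` with `Γ(G,S)` hyperbolic, `|∂Γ(G,S)| > 2`, the action on
`Γ(G,S)` acylindrical, and the natural action of `G` on `∂Γ(G,S)` topologically
amenable. -/
theorem statement1 (G : Type*) [Group G] [Countable G]
    (hAH : ∃ X : Set G, Subgroup.closure X = ⊤ ∧ IsHyperbolic (wdist X) ∧
      (∃ a b c : Bdry (wdist X), a ≠ b ∧ a ≠ c ∧ b ≠ c) ∧ AcylDist (wdist X)) :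
    ∃ S : Set G, Subgroup.closure S = ⊤ ∧ IsHyperbolic (wdist S) ∧
      (∃ a b c : Bdry (wdist S), a ≠ b ∧ a ≠ c ∧ b ≠ c) ∧ AcylDist (wdist S) ∧
      TopAmenable (wdist S) := by
  obtain ⟨X, h1, h2, h3, h4⟩ := hAH
  exact main_thm (wdist_geoMet h1) h2 h3 h4

end ArXiv
end
end

section
/- Let o ∈ G, let B be an H_λ-coset for some λ∈Λ, and suppose p and q are (possibly infinite) geodesic paths in Γ(G,X⊔H) starting at o that both penetrate B. Then d̂_λ(p_in(B), q_in(B)) ≤ 3C, where p_in(B) and q_in(B) are the entrance points of p and q in B. -/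
open scoped ENNReal

noncomputable section

namespace ArXiv

/-! ### Gromov products, hyperbolicity and the Gromov boundary,
for a general distance function -/

variable {α : Type*}

/-! ### Relative Cayley graphs and hyperbolically embedded subgroups -/

variable {G : Type*} [Group G] {Λ : Type*}

/-- Labels of (positive) edges of the relative Cayley graph `Γ(G, X ⊔ H)`:
letters from `X` and letters from `H_λ \ {1}`, for each `λ`, with disjoint unions
taken as sets of labels. -/
inductive RelLab (X : Set G) (H : Λ → Subgroup G) : Type _
  | xlab (g : G) (hg : g ∈ X) : RelLab X H
  | hlab (l : Λ) (g : G) (hg : g ∈ H l) (hne : g ≠ 1) : RelLab X H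

/-- The group element underlying a label. -/
def RelLab.val {X : Set G} {H : Λ → Subgroup G} : RelLab X H → G
  | .xlab g _ => g
  | .hlab _ g _ _ => g

/-- The label is a letter of `H l`. -/
def RelLab.isH {X : Set G} {H : Λ → Subgroup G} (l : Λ) : RelLab X H → Prop
  | .xlab _ _ => False
  | .hlab l' _ _ _ => l' = l

/-- The value of a directed edge: an edge together with an orientation
(the Cayley graph being undirected, an edge may be traversed both ways). -/
def edgeVal {X : Set G} {H : Λ → Subgroup G} (e : RelLab X H × Bool) : G :=
  if e.2 then e.1.val else e.1.val⁻¹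

/-- The `i`-th vertex of the edge path starting at `f` and reading the directed
edges of `L`. -/
def chainVert {X : Set G} {H : Λ → Subgroup G} (f : G) (L : List (RelLab X H × Bool))
    (i : ℕ) : G :=
  f * ((L.take i).map edgeVal).prod

/-- The graph metric `d_{X∪H}` of the relative Cayley graph `Γ(G, X ⊔ H)`. -/
def rdist (X : Set G) (H : Λ → Subgroup G) (f g : G) : ℝ :=
  sInf {r : ℝ | ∃ L : List (RelLab X H × Bool),
    f * (L.map edgeVal).prod = g ∧ r = (L.length : ℝ)}

/-- Distance from a point to a set in `Γ(G, X ⊔ H)`. -/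
def rdistPtSet (X : Set G) (H : Λ → Subgroup G) (f : G) (B : Set G) : ℝ :=
  sInf {r : ℝ | ∃ b ∈ B, r = rdist X H f b}

/-- Distance between two sets in `Γ(G, X ⊔ H)`. -/
def rdistSets (X : Set G) (H : Λ → Subgroup G) (A B : Set G) : ℝ :=
  sInf {r : ℝ | ∃ a ∈ A, ∃ b ∈ B, r = rdist X H a b}

/-- The relative metric `d̂_λ`: the infimum of the lengths of paths in `Γ(G, X ⊔ H)`
from `f` to `g` containing no edge of the subgraph `Γ(H_λ, H_λ∖{1})`
(`∞` if there is no such path). -/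
def hatd (X : Set G) (H : Λ → Subgroup G) (l : Λ) (f g : G) : ℝ≥0∞ :=
  sInf {r : ℝ≥0∞ | ∃ L : List (RelLab X H × Bool),
    f * (L.map edgeVal).prod = g ∧
    (∀ i : ℕ, ∀ e ∈ L[i]?, ¬(chainVert f L i ∈ H l ∧ (Prod.fst e).isH l)) ∧
    r = (L.length : ℝ≥0∞)}

/-- `{H_λ}_{λ∈Λ}` is hyperbolically embedded in `(G, X)`:
`X ∪ ⋃ H_λ` generates `G`, the relative Cayley graph is hyperbolic, and each
relative metric `d̂_λ` is locally finite. -/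
def HypEmb (X : Set G) (H : Λ → Subgroup G) : Prop :=
  Subgroup.closure (X ∪ ⋃ l : Λ, (H l : Set G)) = ⊤ ∧
  IsHyperbolic (rdist X H) ∧
  ∀ (l : Λ) (n : ℕ), {h : G | h ∈ H l ∧ hatd X H l 1 h ≤ (n : ℝ≥0∞)}.Finite

/-- Paths (finite, when `len = n`, or infinite rays, when `len = ⊤`) in the relative
Cayley graph `Γ(G, X ⊔ H)`. -/
structure RPath (X : Set G) (H : Λ → Subgroup G) where
  len : ℕ∞
  vert : ℕ → G
  lab : ℕ → RelLab X H × Bool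
  step : ∀ i : ℕ, (i : ℕ∞) < len → vert (i + 1) = vert i * edgeVal (lab i)

namespace RPath

variable {X : Set G} {H : Λ → Subgroup G}

/-- A path is geodesic. -/
def IsGeodesic (p : RPath X H) : Prop :=
  ∀ i j : ℕ, i ≤ j → (j : ℕ∞) ≤ p.len →
    rdist X H (p.vert i) (p.vert j) = ((j - i : ℕ) : ℝ)

/-- A (necessarily finite) path goes from `f` to `g`. -/
def FromTo (p : RPath X H) (f g : G) : Prop :=
  p.vert 0 = f ∧ ∃ n : ℕ, p.len = (n : ℕ∞) ∧ p.vert n = g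

/-- An infinite path. -/
def IsRay (p : RPath X H) : Prop := p.len = ⊤

/-- `q` is a subpath of `p`. -/
def IsSubpath (q p : RPath X H) : Prop :=
  ∃ a : ℕ, ((a : ℕ∞) + q.len ≤ p.len) ∧
    (∀ k : ℕ, (k : ℕ∞) ≤ q.len → q.vert k = p.vert (a + k)) ∧
    (∀ k : ℕ, (k : ℕ∞) < q.len → q.lab k = p.lab (a + k))

/-- `p` penetrates the coset `B` of `H l` with entrance point `p.vert i` and exit point
`p.vert j`: the edges `i,…,j-1` form an `H l`-component of `p` starting in `B`. -/
def PenetratesAt (p : RPath X H) (l : Λ) (B : Set G) (i j : ℕ) : Prop :=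
  i < j ∧ (j : ℕ∞) ≤ p.len ∧ p.vert i ∈ B ∧
  (∀ k : ℕ, i ≤ k → k < j → (p.lab k).1.isH l) ∧
  (i = 0 ∨ ¬ (p.lab (i - 1)).1.isH l) ∧
  ((j : ℕ∞) = p.len ∨ ¬ (p.lab j).1.isH l)

/-- `p` penetrates the coset `B` of `H l`. -/
def Penetrates (p : RPath X H) (l : Λ) (B : Set G) : Prop :=
  ∃ i j : ℕ, p.PenetratesAt l B i j

/-- `p` essentially penetrates the coset `B` of `H l` (with parameter `D`). -/
def EssPenetrates (p : RPath X H) (l : Λ) (B : Set G) (Dc : ℝ) : Prop :=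
  ∃ i j : ℕ, p.PenetratesAt l B i j ∧ ENNReal.ofReal Dc < hatd X H l (p.vert i) (p.vert j)

end RPath

/-- `B` is a (left) coset of `H l`. -/
def Coset (H : Λ → Subgroup G) (l : Λ) (B : Set G) : Prop :=
  ∃ x : G, B = {g : G | x⁻¹ * g ∈ H l}

/-- The set `S(f,g;D)` of `(f,g;D)`-separating cosets: cosets (recorded together with
the index of their subgroup) essentially penetrated by some geodesic of `Γ(G,X⊔H)`
from `f` to `g`. -/
def Sep (X : Set G) (H : Λ → Subgroup G) (Dc : ℝ) (f g : G) : Set (Λ × Set G) :=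
  {lB | Coset H lB.1 lB.2 ∧
    ∃ p : RPath X H, p.IsGeodesic ∧ p.FromTo f g ∧ p.EssPenetrates lB.1 lB.2 Dc}

/-- The set `S(γ;D)` of separating cosets of a geodesic ray. -/
def SepRay (X : Set G) (H : Λ → Subgroup G) (Dc : ℝ) (p : RPath X H) : Set (Λ × Set G) :=
  ⋃ n : ℕ, Sep X H Dc (p.vert 0) (p.vert n)

/-- The set `Y = {y ∈ G | S(1,y;D) = ∅}`. -/
def Yset (X : Set G) (H : Λ → Subgroup G) (Dc : ℝ) : Set G := {y : G | Sep X H Dc 1 y = ∅}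

/-- Geodesic polygons in the relative Cayley graph: a closed path of `n` edges,
subdivided into `m` geodesic sides. -/
structure RPolygon (X : Set G) (H : Λ → Subgroup G) where
  n : ℕ
  m : ℕ
  vert : ℕ → G
  lab : ℕ → RelLab X H × Bool
  step : ∀ i : ℕ, i < n → vert (i + 1) = vert i * edgeVal (lab i)
  closed : vert n = vert 0
  corner : ℕ → ℕ
  corner_zero : corner 0 = 0
  corner_last : corner m = n
  corner_mono : ∀ t : ℕ, t < m → corner t ≤ corner (t + 1)
  sides_geodesic : ∀ t : ℕ, t < m → ∀ i j : ℕ, corner t ≤ i → i ≤ j → j ≤ corner (t + 1) →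
    rdist X H (vert i) (vert j) = ((j - i : ℕ) : ℝ)

namespace RPolygon

variable {X : Set G} {H : Λ → Subgroup G}

/-- An `H l`-component of the polygon, considered cyclically: the cyclic edges
`i,…,j-1` are all labelled in `H l`, maximally so. -/
def CompAt (p : RPolygon X H) (l : Λ) (i j : ℕ) : Prop :=
  i < j ∧ i < p.n ∧ j ≤ i + p.n ∧
  (∀ k : ℕ, i ≤ k → k < j → (p.lab (k % p.n)).1.isH l) ∧
  (j = i + p.n ∨
    (¬ (p.lab ((i + p.n - 1) % p.n)).1.isH l ∧ ¬ (p.lab (j % p.n)).1.isH l))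

/-- An isolated `H l`-component of the polygon: one not connected to (i.e. lying in the
same `H l`-coset as) any other `H l`-component of the polygon. -/
def IsolatedAt (p : RPolygon X H) (l : Λ) (i j : ℕ) : Prop :=
  p.CompAt l i j ∧ ∀ i' j' : ℕ, p.CompAt l i' j' → i' % p.n ≠ i % p.n →
    (p.vert (i % p.n))⁻¹ * p.vert (i' % p.n) ∉ H l

end RPolygon

/-- The property of the constant `C`: for every geodesic `m`-gon in `Γ(G,X⊔H)` and every
isolated `H_λ`-component `a` of it, `d̂_λ(a_-,a_+) ≤ mC`. -/
def CBound (X : Set G) (H : Λ → Subgroup G) (Cc : ℝ) : Prop :=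
  ∀ (p : RPolygon X H) (l : Λ) (i j : ℕ), p.IsolatedAt l i j →
    hatd X H l (p.vert (i % p.n)) (p.vert (j % p.n)) ≤ ENNReal.ofReal ((p.m : ℝ) * Cc)

/-- The vertex sequence of the path `γ` converges to infinity with respect to `d` and
its limit point in the boundary `Bdry d` is `ξ`. -/
def RLim {X : Set G} {H : Λ → Subgroup G} (d : G → G → ℝ) (γ : RPath X H)
    (ξ : Bdry d) : Prop :=
  ∃ h : ConvInf d γ.vert, Quot.mk (BRel d) ⟨γ.vert, h⟩ = ξ

end ArXiv

namespace ArXiv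

section Helpers

variable {G : Type*} [Group G] {Λ : Type*} {X : Set G} {H : Λ → Subgroup G}

/-- The reverse of a directed edge. -/
def flipE (e : RelLab X H × Bool) : RelLab X H × Bool := (e.1, !e.2)

lemma edgeVal_flipE (e : RelLab X H × Bool) : edgeVal (flipE e) = (edgeVal e)⁻¹ := by
  rcases e with ⟨e, b⟩
  cases b <;> simp [flipE, edgeVal]

lemma rev_prod (L : List (RelLab X H × Bool)) :
    (((L.map flipE).reverse).map edgeVal).prod = ((L.map edgeVal).prod)⁻¹ := by
  induction L with
  | nil => simp
  | cons a L ih => simpa [edgeVal_flipE] using ih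

lemma rdist_le_len {f g : G} (L : List (RelLab X H × Bool))
    (hL : f * (L.map edgeVal).prod = g) : rdist X H f g ≤ (L.length : ℝ) := by
  refine csInf_le ⟨0, ?_⟩ ⟨L, hL, rfl⟩
  rintro r ⟨L, -, rfl⟩
  positivity

lemma rdist_symm (f g : G) : rdist X H f g = rdist X H g f := by
  have key : ∀ f g : G, {r : ℝ | ∃ L : List (RelLab X H × Bool),
      f * (L.map edgeVal).prod = g ∧ r = (L.length : ℝ)} ⊆
      {r : ℝ | ∃ L : List (RelLab X H × Bool),
      g * (L.map edgeVal).prod = f ∧ r = (L.length : ℝ)} := by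
    rintro f g r ⟨L, hL, rfl⟩
    refine ⟨(L.map flipE).reverse, ?_, by simp⟩
    rw [rev_prod, ← hL]
    group
  unfold rdist
  rw [Set.Subset.antisymm (key f g) (key g f)]

lemma rdist_self (f : G) : rdist X H f f = 0 := by
  apply le_antisymm
  · simpa using rdist_le_len (X := X) (H := H) (f := f) (g := f) [] (by simp)
  · refine Real.sInf_nonneg ?_
    rintro r ⟨L, -, rfl⟩
    positivity

lemma rdist_edge {f g : G} (l : Λ) (h : f⁻¹ * g ∈ H l) (hne : f ≠ g) :
    rdist X H f g = 1 := by
  have hne' : f⁻¹ * g ≠ 1 := by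
    intro h'
    exact hne (inv_mul_eq_one.mp h')
  have hw : f * (([((RelLab.hlab l (f⁻¹ * g) h hne' : RelLab X H), true)]).map edgeVal).prod
      = g := by
    simp [edgeVal, RelLab.val]
  apply le_antisymm
  · simpa using rdist_le_len _ hw
  · refine le_csInf ⟨_, _, hw, rfl⟩ ?_
    rintro r ⟨L, hL, rfl⟩
    cases L with
    | nil => exact absurd (by simpa using hL) hne
    | cons a L => simp

lemma rdist_le_one {f g : G} (l : Λ) (h : f⁻¹ * g ∈ H l) : rdist X H f g ≤ 1 := by
  by_cases hne : f = g
  · subst hne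
    rw [rdist_self]
    norm_num
  · exact (rdist_edge l h hne).le

lemma isH_val_mem {l : Λ} (e : RelLab X H × Bool) (h : e.1.isH l) : edgeVal e ∈ H l := by
  rcases e with ⟨e, b⟩
  cases e with
  | xlab g hg => exact absurd h (by simp [RelLab.isH])
  | hlab l' g hg hne =>
    have h' : l' = l := h
    subst h'
    cases b <;> simp [edgeVal, RelLab.val, hg]

/-- A vertex before the entrance point is not in the coset. -/
lemma before_entry {l : Λ} {B : Set G} (hB : Coset H l B) {p : RPath X H}
    (hp : p.IsGeodesic) {i j : ℕ} (h : p.PenetratesAt l B i j) {a : ℕ} (ha : a < i) :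
    (p.vert i)⁻¹ * p.vert a ∉ H l := by
  intro hm
  obtain ⟨hij, hj, hiB, hl, -, -⟩ := h
  have hi1 : ((i + 1 : ℕ) : ℕ∞) ≤ p.len := le_trans (by exact_mod_cast hij) hj
  have hs := p.step i (lt_of_lt_of_le (by exact_mod_cast Nat.lt_succ_self i) hi1)
  have hg := hp a (i + 1) (by omega) hi1
  have hle : rdist X H (p.vert a) (p.vert (i + 1)) ≤ 1 := by
    apply rdist_le_one l
    rw [hs]
    have := (H l).mul_mem ((H l).inv_mem hm) (isH_val_mem _ (hl i le_rfl hij))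
    simpa [mul_assoc] using this
  rw [hg] at hle
  have : i + 1 - a ≤ 1 := by exact_mod_cast hle
  omega

end Helpers

/-- Lemma 3.2: two geodesics from the same point penetrating the same
coset have entrance points at relative distance at most `3C`. -/
theorem statement6 {G Λ : Type*} [Group G] (X : Set G) (H : Λ → Subgroup G)
    (hemb : HypEmb X H) (Cc : ℝ) (hC : 0 < Cc) (hCB : CBound X H Cc)
    (o : G) (l : Λ) (B : Set G) (hB : Coset H l B)
    (p q : RPath X H) (hp : p.IsGeodesic) (hq : q.IsGeodesic)
    (hpo : p.vert 0 = o) (hqo : q.vert 0 = o)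
    (i j i' j' : ℕ) (hpB : p.PenetratesAt l B i j) (hqB : q.PenetratesAt l B i' j') :
    hatd X H l (p.vert i) (q.vert i') ≤ ENNReal.ofReal (3 * Cc) := by
  classical
  by_cases hne : p.vert i = q.vert i'
  · rw [hne]
    refine le_trans (sInf_le ⟨[], by simp, by simp, rfl⟩) (by simp)
  have hmem : (p.vert i)⁻¹ * q.vert i' ∈ H l := by
    obtain ⟨x, rfl⟩ := hB
    have h1 : x⁻¹ * p.vert i ∈ H l := hpB.2.2.1
    have h2 : x⁻¹ * q.vert i' ∈ H l := hqB.2.2.1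
    have := (H l).mul_mem ((H l).inv_mem h1) h2
    simpa [mul_assoc] using this
  have hmem' : (q.vert i')⁻¹ * p.vert i ∈ H l := by
    simpa using (H l).inv_mem hmem
  have hpb := fun a (ha : a < i) => before_entry hB hp hpB ha
  have hqb : ∀ a, a < i' → (p.vert i)⁻¹ * q.vert a ∉ H l := by
    intro a ha hm
    apply before_entry hB hq hqB ha
    have := (H l).mul_mem hmem' hm
    simpa [mul_assoc] using this
  have hi : 0 < i := by
    rcases Nat.eq_zero_or_pos i with h0 | h0
    · exfalso
      subst h0
      rcases Nat.eq_zero_or_pos i' with h1 | h1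
      · subst h1
        exact hne (hpo.trans hqo.symm)
      · apply hqb 0 h1
        rw [hpo, hqo]
        simp
    · exact h0
  have hi' : 0 < i' := by
    rcases Nat.eq_zero_or_pos i' with h1 | h1
    · exfalso
      apply hpb 0 hi
      subst h1
      rw [hpo, ← hqo]
      exact hmem
    · exact h1
  have hplab : ¬ (p.lab (i - 1)).1.isH l := hpB.2.2.2.2.1.resolve_left (by omega)
  have hqlab : ¬ (q.lab (i' - 1)).1.isH l := hqB.2.2.2.2.1.resolve_left (by omega)
  have hplen : (i : ℕ∞) ≤ p.len := le_trans (by exact_mod_cast hpB.1.le) hpB.2.1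
  have hqlen : (i' : ℕ∞) ≤ q.len := le_trans (by exact_mod_cast hqB.1.le) hqB.2.1
  have hne' : (p.vert i)⁻¹ * q.vert i' ≠ 1 := fun h' => hne (inv_mul_eq_one.mp h')
  let V : ℕ → G := fun t => if t ≤ i then p.vert t else q.vert (i' + i + 1 - t)
  let E : ℕ → RelLab X H × Bool := fun t =>
    if t < i then p.lab t else if t = i then
      (RelLab.hlab l ((p.vert i)⁻¹ * q.vert i') hmem hne', true)
    else flipE (q.lab (i' + i - t))
  have hVp : ∀ t, t ≤ i → V t = p.vert t := fun t ht => if_pos ht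
  have hVq : ∀ t, i < t → V t = q.vert (i' + i + 1 - t) := fun t ht => if_neg (by omega)
  have hEp : ∀ t, t < i → E t = p.lab t := fun t ht => if_pos ht
  have hEi : E i = (RelLab.hlab l ((p.vert i)⁻¹ * q.vert i') hmem hne', true) := by
    simp [E]
  have hEq : ∀ t, i < t → E t = flipE (q.lab (i' + i - t)) := fun t ht => by
    simp only [E]
    rw [if_neg (by omega), if_neg (by omega)]
  let P : RPolygon X H :=
    { n := i' + i + 1
      m := 3
      vert := V
      lab := E
      step := by
        intro t ht
        rcases lt_trichotomy t i with h | h | h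
        · rw [hVp t h.le, hVp (t + 1) h, hEp t h]
          exact p.step t (lt_of_lt_of_le (by exact_mod_cast h) hplen)
        · subst h
          rw [hVp t le_rfl, hVq (t + 1) (Nat.lt_succ_self t), hEi]
          have : i' + t + 1 - (t + 1) = i' := by omega
          rw [this]
          simp [edgeVal, RelLab.val]
        · rw [hVq t h, hVq (t + 1) (by omega), hEq t h, edgeVal_flipE]
          have h1 : i' + i + 1 - (t + 1) = i' + i - t := by omega
          have h2 : i' + i + 1 - t = i' + i - t + 1 := by omega
          have h3 : i' + i - t < i' := by omega
          rw [h1, h2, q.step (i' + i - t) (lt_of_lt_of_le (by exact_mod_cast h3) hqlen)]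
          simp
      closed := by
        rw [hVp 0 (by omega), hVq _ (by omega), Nat.sub_self, hpo, hqo]
      corner := fun t => if t = 0 then 0 else if t = 1 then i else if t = 2 then i + 1
        else i' + i + 1
      corner_zero := by simp
      corner_last := by simp
      corner_mono := by
        intro t ht
        interval_cases t <;> simp
      sides_geodesic := by
        intro t ht a b hta hab hbt
        interval_cases t
        · simp at hta hbt
          rw [hVp a (by omega), hVp b hbt]
          exact hp a b hab (le_trans (by exact_mod_cast hbt) hplen)
        · simp at hta hbt
          by_cases hE : a = b
          · subst hE
            simp [rdist_self]
          · obtain rfl : a = i := by omega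
            obtain rfl : b = a + 1 := by omega
            rw [hVp a le_rfl, hVq (a + 1) (by omega)]
            have : i' + a + 1 - (a + 1) = i' := by omega
            rw [this, rdist_edge l hmem hne]
            simp
        · simp at hta hbt
          rw [hVq a (by omega), hVq b (by omega), rdist_symm]
          rw [hq _ _ (by omega) (le_trans (by exact_mod_cast (by omega)) hqlen)]
          congr 1
          omega }
  have hPn : P.n = i' + i + 1 := rfl
  have hPl : P.lab = E := rfl
  have hPv : P.vert = V := rfl
  have hiso : P.IsolatedAt l i (i + 1) := by
    refine ⟨⟨by omega, by omega, by omega, ?_, Or.inr ⟨?_, ?_⟩⟩, ?_⟩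
    · intro k hk hk'
      obtain rfl : k = i := by omega
      rw [hPn, hPl, Nat.mod_eq_of_lt (by omega), hEi]
      exact rfl
    · have : (i + P.n - 1) % P.n = i - 1 := by
        have h : i + P.n - 1 = (i - 1) + P.n := by omega
        rw [h, Nat.add_mod_right, Nat.mod_eq_of_lt (by omega)]
      rw [this, hPl, hEp _ (by omega)]
      exact hplab
    · rw [hPn, hPl, Nat.mod_eq_of_lt (by omega), hEq _ (by omega)]
      have : i' + i - (i + 1) = i' - 1 := by omega
      rw [this]
      exact hqlab
    · intro a b hab hai
      obtain ⟨h1, h2, -, h4, -⟩ := hab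
      have h5 := h4 a le_rfl h1
      rw [Nat.mod_eq_of_lt h2] at h5 hai ⊢
      rw [Nat.mod_eq_of_lt (by omega)] at hai ⊢
      rw [hPv, hVp i le_rfl]
      rw [hPl] at h5
      rcases lt_or_gt_of_ne hai with h | h
      · rw [hVp a h.le]
        exact hpb a h
      · rw [hVq a h]
        by_cases h6 : a = i + 1
        · exfalso
          subst h6
          rw [hEq _ h] at h5
          have : i' + i - (i + 1) = i' - 1 := by omega
          rw [this] at h5
          exact hqlab h5
        · exact hqb _ (by omega)
  have hfin := hCB P l i (i + 1) hiso
  rw [hPn, hPv, Nat.mod_eq_of_lt (by omega), Nat.mod_eq_of_lt (by omega), hVp i le_rfl,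
    hVq (i + 1) (by omega)] at hfin
  have h7 : i' + i + 1 - (i + 1) = i' := by omega
  rw [h7] at hfin
  have h8 : (P.m : ℝ) = 3 := by
    change ((3 : ℕ) : ℝ) = 3
    norm_num
  rwa [h8] at hfin

end ArXiv
end
end
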